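/- Let L̄ be the poset of conjugacy classes of subgroups of G = PSU(3,q), q = 2^(2^n), and λ its Möbius function relative to the class of G. Then: λ([{1}]) = 0 for the trivial subgroup; λ([⟨σ⟩]) = -1 for every element σ of order 2; λ([H]) = 1 for every subgroup H of order 3; and λ([K]) = 1 for every subgroup K isomorphic to Sym(3). -/

import Mathlib

/-! The center of `SU(3, q)` is trivial, so `PSU(3, q)` is the special unitary group `SU K` of the
Hermitian space `V K = K³`, with `|K| = q²`. Its Möbius function is read off from an
inclusion-exclusion identity between containment conditions.

**Exhaustion.** By `exhaust`, every proper subgroup `H` fixes an isotropic line (`IsoP`), fixes an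
anisotropic line (`AniP`), permutes the lines of an orthonormal frame (`MonP`), or normalizes the
centralizer of an element without eigenvectors (`I4`); these centralizers are the Singer cycles.
The involutions are the transvections `tv c a`, and the cases are distinguished by them.

* If `H` has no involution, its order is odd. In a group of odd order, Burnside's transfer theorem
  provides a normal `p`-subgroup without appeal to the odd order theorem (`exists_normal_p`), since
  elements normalizing a `p`-subgroup centralize it as long as no obstruction at the prime three
  occurs. The normalizers of `p`-groups are determined by the lines these groups fix (`norm_type`).
* If each line is the centre of at most one involution of `H`, then the Sylow `2`-subgroups of `H`
  are cyclic (`rho1_cyclic`) and Burnside's theorem gives a normal `2`-complement; either this is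
  trivial and `H` fixes the centre, or the previous case applies to it (`rho1_case`).
* Otherwise, if `H` fixes no isotropic line, a double count of involutions (`count_core`, `dil_core`)
  produces elements of `H` acting as dilations on hyperbolic planes. They show that the transvection
  parameters of `H` form a subfield `F` of `Fx K`, the field with `q` elements (`exists_bigF`), and
  that `F` contains norms and traces built from the Hermitian form (`BigF.norm`, `BigF.trace`). As
  `q = 2 ^ 2 ^ n`, the degree of `Fx K` over a proper subfield is even, so that such a subfield
  cannot contain both the norm and a nonzero trace of one element (`subfield_eq`). If `H` fixes no
  anisotropic line either, it follows that `F = Fx K`, then that `H` contains all transvections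
  (`InX.all`), and these generate `SU K` (`gen_tv`).

**Inclusion-exclusion.** The intersections of the four conditions are again simple: `IsoP` and
`AniP` together mean fixing a flag (`flag_iff`); `MonP` together with `IsoP` or `AniP` means fixing
a vertex of the frame or lying in a dihedral group of order six (`mon_red_iff`), and the latter two
conditions together mean order at most two (`c2_iff`); `I4` together with another condition means
lying in a subgroup of order three (`I4_iff_C3`). Hence the alternating count `alt_count`
`1 - [IsoP] - [AniP] - [MonP] - [I4] + [FlagP] + [MonVP] + [S3P] - [C2P] + [C3P] = [H = G]`.

**Conclusion.** Each condition says that `H` lies in a conjugate of one fixed subgroup (the lemmas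
`rep_iso` to `rep_s3`), because `SU K` is transitive on the frames in question and on the
involutions, subgroups of order three and dihedral subgroups of order six. By `mobius_values`, the
coefficients in the alternating count are then the values of the Möbius function at the classes of
these subgroups, and all other values vanish. All but the last three of these subgroups have an
element whose order does not divide six, so they are not conjugate to the subgroups of the theorem;
the last three have orders six, two and three and coefficients `1`, `-1` and `1` (`values`).
-/

open scoped Classical Pointwise

namespace PSUPaper

/-- `q = 2^(2^n)`. -/
abbrev qval (n : ℕ) : ℕ := 2 ^ 2 ^ n

/-- The field with `q² = 2^(2^(n+1))` elements. -/
abbrev Fq2 (n : ℕ) : Type := GaloisField 2 (2 ^ (n + 1))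

/-- The involutory automorphism `x ↦ x^q` of `F_{q²}`, as a star-ring structure. -/
noncomputable instance starRingFq2 (n : ℕ) : StarRing (Fq2 n) where
  star x := x ^ qval n
  star_involutive x := by
    letI : Fintype (Fq2 n) := Fintype.ofFinite _
    show (x ^ qval n) ^ qval n = x
    rw [← pow_mul]
    have h : qval n * qval n = 2 ^ 2 ^ (n + 1) := by
      rw [← pow_add, ← two_mul, pow_succ, mul_comm]
    have hcard : Fintype.card (Fq2 n) = 2 ^ 2 ^ (n + 1) := by
      rw [← Nat.card_eq_fintype_card, GaloisField.card 2 (2 ^ (n + 1)) (by positivity)]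
    rw [h, ← hcard]
    exact FiniteField.pow_card x
  star_mul x y := by
    show (x * y) ^ qval n = y ^ qval n * x ^ qval n
    rw [mul_pow, mul_comm]
  star_add x y := by
    show (x + y) ^ qval n = x ^ qval n + y ^ qval n
    exact add_pow_char_pow x y 2 (2 ^ n)

/-- `SU(3,q)`: the subgroup of the unitary group `{M | M * (M^σ)ᵀ = 1}` (with respect to the
star structure `σ : x ↦ x^q` on `F_{q²}`) consisting of the matrices of determinant 1. -/
noncomputable def SU3 (n : ℕ) : Subgroup (Matrix.unitaryGroup (Fin 3) (Fq2 n)) where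
  carrier := {M | (M : Matrix (Fin 3) (Fin 3) (Fq2 n)).det = 1}
  one_mem' := by simp
  mul_mem' := by
    intro a b ha hb
    simp only [Set.mem_setOf_eq, Matrix.UnitaryGroup.mul_val, Matrix.det_mul] at *
    rw [ha, hb, mul_one]
  inv_mem' := by
    intro a ha
    simp only [Set.mem_setOf_eq, Matrix.UnitaryGroup.inv_val] at *
    rw [Matrix.star_eq_conjTranspose, Matrix.det_conjTranspose, ha, star_one]

/-- `PSU(3,q)`: the quotient of `SU(3,q)` by its center. -/
noncomputable abbrev PSU3 (n : ℕ) : Type := SU3 n ⧸ Subgroup.center (SU3 n)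

/-- `mu` is the Möbius function `H ↦ μ(H, G)` of the subgroup lattice of `G`:
`μ(G,G) = 1` and `∑_{J : H ≤ J ≤ G} μ(J,G) = 0` for `H < G`. -/
def IsSubgroupMobius {G : Type*} [Group G] (mu : Subgroup G → ℤ) : Prop :=
  ∀ H : Subgroup G, (∑ᶠ K ∈ {K : Subgroup G | H ≤ K}, mu K) = if H = ⊤ then 1 else 0

/-- `H` and `K` are conjugate subgroups. -/
def IsConjSub {G : Type*} [Group G] (H K : Subgroup G) : Prop :=
  ∃ g : G, Subgroup.map (MulAut.conj g).toMonoidHom H = K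

/-- The conjugacy classes of subgroups of `G`. -/
abbrev SubClasses (G : Type*) [Group G] : Type _ :=
  Quotient (MulAction.orbitRel (ConjAct G) (Subgroup G))

/-- The conjugacy class of a subgroup. -/
def clsOf {G : Type*} [Group G] (H : Subgroup G) : SubClasses G :=
  Quotient.mk (MulAction.orbitRel (ConjAct G) (Subgroup G)) H

/-- The order on conjugacy classes of subgroups: `[H] ≤ [K]` iff `H` is contained in some
conjugate of `K`. -/
def clsLe {G : Type*} [Group G] (x y : SubClasses G) : Prop :=
  ∃ H K : Subgroup G, clsOf H = x ∧ clsOf K = y ∧ ∃ g : ConjAct G, H ≤ g • K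

/-- `lam` is the Möbius function `[H] ↦ μ([H], [G])` of the poset of conjugacy classes of
subgroups of `G`: `μ([G],[G]) = 1` and `∑_{[J] : [H] ≤ [J] ≤ [G]} μ([J],[G]) = 0` for
`[H] < [G]`. -/
def IsClassMobius {G : Type*} [Group G] (lam : SubClasses G → ℤ) : Prop :=
  ∀ x : SubClasses G, (∑ᶠ y ∈ {y : SubClasses G | clsLe x y}, lam y) =
    if x = clsOf (⊤ : Subgroup G) then 1 else 0

/-- `m` is the Möbius function `H ↦ μ_{L_p}({1}, H)` of the poset `L_p` of `p`-subgroups of `G`: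
`μ_{L_p}({1},{1}) = 1` and `∑_{J ∈ L_p : J ≤ K} μ_{L_p}({1},J) = 0` for `{1} < K ∈ L_p`. -/
def IsPMobiusBot {G : Type*} [Group G] (p : ℕ) (m : Subgroup G → ℤ) : Prop :=
  m ⊥ = 1 ∧ ∀ K : Subgroup G, IsPGroup p K → ⊥ < K →
    (∑ᶠ J ∈ {J : Subgroup G | IsPGroup p J ∧ J ≤ K}, m J) = 0

set_option linter.unusedSectionVars false
set_option linter.unusedSimpArgs false

/-! ### The field with `q²` elements -/

/-- The fields under consideration: `|K| = q²` with `q = 2 ^ 2 ^ n`, `n ≥ 1`, and `star` is the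
involution `x ↦ x ^ q`. -/
class UField (K : Type*) [Field K] [StarRing K] : Prop where
  fin : Finite K
  char2 : CharP K 2
  ex : ∃ n : ℕ, 1 ≤ n ∧ Nat.card K = 2 ^ 2 ^ (n + 1) ∧ ∀ x : K, star x = x ^ 2 ^ 2 ^ n

instance (K : Type*) [Field K] [StarRing K] [UField K] : Finite K := UField.fin

instance (K : Type*) [Field K] [StarRing K] [UField K] : CharP K 2 := UField.char2

/-- The number `q`, recovered from `|K| = q²`. -/
noncomputable def qq (K : Type*) : ℕ := Nat.sqrt (Nat.card K)

section field
variable {K : Type*} [Field K] [StarRing K] [UField K]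

variable (K) in
lemma qq_spec : ∃ n : ℕ, 1 ≤ n ∧ qq K = 2 ^ 2 ^ n ∧ Nat.card K = qq K ^ 2 ∧
    ∀ x : K, star x = x ^ qq K := by
  obtain ⟨n, hn, hc, hs⟩ := UField.ex (K := K)
  have h2 : Nat.card K = (2 ^ 2 ^ n) ^ 2 := by rw [hc, ← pow_mul, pow_succ]
  have hq : qq K = 2 ^ 2 ^ n := by rw [qq, h2, Nat.sqrt_eq']
  exact ⟨n, hn, hq, by rw [hq, h2], by rw [hq]; exact hs⟩

lemma star_eq (x : K) : star x = x ^ qq K := (qq_spec K).choose_spec.2.2.2 x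

variable (K) in
lemma card_K : Nat.card K = qq K ^ 2 := (qq_spec K).choose_spec.2.2.1

variable (K) in
lemma qq_ge : 4 ≤ qq K := by
  obtain ⟨n, hn, hq, -⟩ := qq_spec K
  rw [hq]
  calc 4 = 2 ^ 2 ^ 1 := by norm_num
    _ ≤ _ := Nat.pow_le_pow_right (by norm_num) (Nat.pow_le_pow_right (by norm_num) hn)

variable (K) in
lemma qq_mod : qq K % 3 = 1 := by
  obtain ⟨n, hn, hq, -⟩ := qq_spec K
  obtain ⟨m, rfl⟩ : ∃ m, n = m + 1 := ⟨n - 1, by omega⟩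
  rw [hq, pow_succ, mul_comm, pow_mul, Nat.pow_mod]; norm_num

variable (K) in
lemma qq_even : qq K % 2 = 0 := by
  obtain ⟨n, hn, hq, -⟩ := qq_spec K
  rw [hq, Nat.pow_mod]; simp

lemma c2 (x : K) : x + x = 0 := CharTwo.add_self_eq_zero x

lemma add_eq_zero' {x y : K} : x + y = 0 ↔ x = y := by
  rw [← CharTwo.sub_eq_add, sub_eq_zero]

lemma two0 : (2 : K) = 0 := CharTwo.two_eq_zero

/-- The fixed field of `star`, the field with `q` elements. -/
def Fx (K : Type*) [Field K] [StarRing K] : Subfield K where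
  carrier := {a | star a = a}
  mul_mem' := by intro a b ha hb; simp_all [mul_comm]
  one_mem' := by simp
  add_mem' := by intro a b ha hb; simp_all
  zero_mem' := by simp
  neg_mem' := by intro a ha; simp_all
  inv_mem' := by intro a ha; simp_all

lemma mem_Fx {a : K} : a ∈ Fx K ↔ star a = a := Iff.rfl

lemma mem_Fx_pow {a : K} : a ∈ Fx K ↔ a ^ qq K = a := by rw [mem_Fx, star_eq]

lemma tr_mem (a : K) : a + star a ∈ Fx K := by rw [mem_Fx]; simp [add_comm]
lemma nm_mem (a : K) : a * star a ∈ Fx K := by rw [mem_Fx]; simp [mul_comm]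

/-- The trace `x ↦ x + star x`. -/
def trK (K : Type*) [Field K] [StarRing K] : K →+ K where
  toFun x := x + star x
  map_zero' := by simp
  map_add' := by intro a b; simp; ring

lemma card_pow_le (K : Type*) [Field K] [Finite K] (m : ℕ) (hm : 2 ≤ m) :
    Nat.card {x : K // x ^ m = x} ≤ m := by
  have hp : (Polynomial.X ^ m - Polynomial.X : Polynomial K) ≠ 0 :=
    FiniteField.X_pow_card_sub_X_ne_zero K (by omega)
  have hd : (Polynomial.X ^ m - Polynomial.X : Polynomial K).natDegree = m :=
    FiniteField.X_pow_card_sub_X_natDegree_eq K (by omega)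
  have hsub : {x : K | x ^ m = x} ⊆ ((Polynomial.X ^ m - Polynomial.X : Polynomial K).roots.toFinset : Set K) := by
    intro x hx
    simp only [Finset.mem_coe, Multiset.mem_toFinset, Polynomial.mem_roots hp, Polynomial.IsRoot.def]
    have : x ^ m = x := hx
    simp [this]
  calc Nat.card {x : K // x ^ m = x} = ({x : K | x ^ m = x}).ncard := rfl
    _ ≤ _ := Set.ncard_le_ncard hsub (Finset.finite_toSet _)
    _ = _ := Set.ncard_coe_finset _
    _ ≤ _ := Multiset.toFinset_card_le _
    _ ≤ _ := Polynomial.card_roots' _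
    _ = m := hd

lemma card_Fx_le : Nat.card (Fx K) ≤ qq K := by
  have h := card_pow_le K (qq K) (by have := qq_ge K; omega)
  refine le_trans (le_of_eq ?_) h
  exact Nat.card_congr (Equiv.subtypeEquivRight (fun a => by rw [mem_Fx_pow]))

lemma trK_ker : (trK K).ker = (Fx K).toSubring.toAddSubgroup := by
  ext a
  change a + star a = 0 ↔ star a = a
  rw [add_eq_zero', eq_comm]

lemma card_trK : Nat.card (trK K).range = qq K ∧ Nat.card (Fx K) = qq K := by
  have h1 : Nat.card (trK K).ker * Nat.card (trK K).range = qq K ^ 2 := by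
    rw [← card_K K, AddSubgroup.card_eq_card_quotient_mul_card_addSubgroup (trK K).ker, mul_comm]
    congr 1
    exact (Nat.card_congr (QuotientAddGroup.quotientKerEquivRange (trK K)).toEquiv).symm
  have h2 : Nat.card (trK K).ker = Nat.card (Fx K) := by rw [trK_ker]; rfl
  have h3 : Nat.card (trK K).range ≤ Nat.card (Fx K) := by
    refine Nat.card_mono (s := ((trK K).range : Set K)) (t := (Fx K : Set K)) (Set.toFinite _) ?_
    rintro _ ⟨x, rfl⟩
    exact tr_mem x
  have h4 := card_Fx_le (K := K)
  rw [h2] at h1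
  have : 0 < qq K := by have := qq_ge K; omega
  constructor <;> nlinarith

variable (K) in
lemma card_Fx : Nat.card (Fx K) = qq K := card_trK.2

lemma tr_surj {a : K} (ha : a ∈ Fx K) : ∃ x : K, x + star x = a := by
  have h : ((trK K).range : Set K) = (Fx K : Set K) := by
    apply Set.eq_of_subset_of_ncard_le
    · rintro _ ⟨x, rfl⟩
      exact tr_mem x
    · change Nat.card (Fx K) ≤ Nat.card (trK K).range
      rw [card_trK.1, card_trK.2]
    · exact Set.toFinite _
  have : a ∈ ((trK K).range : Set K) := by rw [h]; exact ha
  exact this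

lemma card_units_K : Nat.card Kˣ = (qq K - 1) * (qq K + 1) := by
  rw [Nat.card_units, card_K]
  have := qq_ge K
  obtain ⟨m, hm⟩ : ∃ m, qq K = m + 1 := ⟨qq K - 1, by omega⟩
  rw [hm]; simp; ring_nf; omega

/-- A finite field contains an element of every order dividing `|K| - 1`. -/
lemma exists_order {d : ℕ} (hd : d ∣ (qq K - 1) * (qq K + 1)) : ∃ x : K, x ≠ 0 ∧ orderOf x = d := by
  obtain ⟨g, hg⟩ := IsCyclic.exists_ofOrder_eq_natCard (α := Kˣ)
  rw [card_units_K] at hg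
  obtain ⟨e, he⟩ := hd
  refine ⟨((g ^ e : Kˣ) : K), Units.ne_zero _, ?_⟩
  have hpos : 0 < (qq K - 1) * (qq K + 1) := by
    have := qq_ge K; apply Nat.mul_pos <;> omega
  have he0 : e ≠ 0 := by rintro rfl; simp [he] at hpos
  rw [orderOf_units, orderOf_pow_of_dvd he0 (by rw [hg, he]; exact dvd_mul_left _ _), hg, he]
  exact Nat.mul_div_cancel _ (Nat.pos_of_ne_zero he0)

lemma nm_eq (x : K) : x * star x = x ^ (qq K + 1) := by rw [star_eq, pow_succ']

lemma nm_surj {a : K} (ha : a ∈ Fx K) : ∃ x : K, x * star x = a := by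
  by_cases h0 : a = 0
  · exact ⟨0, by simp [h0]⟩
  have hq := qq_ge K
  have h1 : a ^ (qq K - 1) = 1 := by
    have := mem_Fx_pow.1 ha
    apply mul_left_cancel₀ h0
    rw [← pow_succ', mul_one, Nat.sub_add_cancel (by omega), this]
  obtain ⟨g, hg⟩ := IsCyclic.exists_generator (α := Kˣ)
  obtain ⟨k, hk⟩ := Subgroup.mem_zpowers_iff.1 (hg (Units.mk0 a h0))
  have hog : orderOf g = (qq K - 1) * (qq K + 1) := by
    rw [← card_units_K]; exact orderOf_eq_card_of_forall_mem_zpowers hg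
  have h2 : g ^ (k * (qq K - 1 : ℕ)) = 1 := by
    rw [zpow_mul, hk]
    ext; simp [h1]
  have h3 := orderOf_dvd_iff_zpow_eq_one.2 h2
  rw [hog] at h3
  have h4 : ((qq K + 1 : ℕ) : ℤ) ∣ k := by
    have h0 : ((qq K - 1 : ℕ) : ℤ) ≠ 0 := by
      have : qq K - 1 ≠ 0 := by omega
      exact_mod_cast this
    rw [Nat.cast_mul, mul_comm] at h3
    exact Int.dvd_of_mul_dvd_mul_right h0 h3
  obtain ⟨l, rfl⟩ := h4
  refine ⟨((g ^ l : Kˣ) : K), ?_⟩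
  rw [nm_eq, ← Units.val_pow_eq_pow_val, ← zpow_natCast, ← zpow_mul, mul_comm l, hk]; rfl

lemma nm_zero {x : K} : x * star x = 0 ↔ x = 0 := by simp

lemma ne_zero_of_nm {x : K} (h : x * star x = 1) : x ≠ 0 := by rintro rfl; simp at h

lemma cube_root {x : K} (h3 : x ^ 3 = 1) (h : x * star x = 1) : x = 1 := by
  rw [nm_eq] at h
  obtain ⟨m, hm⟩ : ∃ m, qq K + 1 = 3 * m + 2 := ⟨(qq K - 1) / 3, by have := qq_mod K; omega⟩
  rw [hm, pow_add, pow_mul, h3, one_pow, one_mul] at h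
  calc x = x ^ 3 := by rw [pow_succ, h, one_mul]
    _ = 1 := h3

/-- Primitive cube roots of unity lie in the fixed field. -/
lemma exists_omega : ∃ w : K, w ∈ Fx K ∧ w ≠ 1 ∧ w ^ 3 = 1 ∧ w ^ 2 + w + 1 = 0 := by
  have hd : 3 ∣ (qq K - 1) * (qq K + 1) := by
    apply Dvd.dvd.mul_right; have := qq_mod K; omega
  obtain ⟨w, h0, hw⟩ := exists_order hd
  have h3 : w ^ 3 = 1 := by rw [← hw]; exact pow_orderOf_eq_one w
  have h1 : w ≠ 1 := by rintro rfl; simp at hw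
  refine ⟨w, ?_, h1, h3, ?_⟩
  · rw [mem_Fx_pow]
    obtain ⟨m, hm⟩ : ∃ m, qq K = 3 * m + 1 := ⟨(qq K - 1) / 3, by have := qq_mod K; omega⟩
    rw [hm, pow_add, pow_mul, h3]; simp
  · apply mul_left_cancel₀ (sub_ne_zero.2 h1)
    linear_combination h3

lemma cube_one {w x : K} (hw : w ^ 2 + w + 1 = 0) (hx : x ^ 3 = 1) :
    x = 1 ∨ x = w ∨ x = w ^ 2 := by
  have : (x - 1) * ((x - w) * (x - w ^ 2)) = 0 := by
    have hw3 : w ^ 3 = 1 := by linear_combination (w - 1) * hw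
    linear_combination hx - (x ^ 2 - x)* hw + (x - 1) * hw3
  rcases mul_eq_zero.1 this with h | h
  · exact Or.inl (sub_eq_zero.1 h)
  rcases mul_eq_zero.1 h with h | h
  · exact Or.inr (Or.inl (sub_eq_zero.1 h))
  · exact Or.inr (Or.inr (sub_eq_zero.1 h))

lemma exists_theta : ∃ t : K, t * star t = 1 ∧ t ^ 6 ≠ 1 := by
  obtain ⟨x, h0, hx⟩ := exists_order (K := K) (d := qq K + 1) (dvd_mul_left _ _)
  refine ⟨x, by rw [nm_eq, ← hx, pow_orderOf_eq_one], fun h => ?_⟩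
  have h1 := orderOf_dvd_of_pow_eq_one h
  rw [hx] at h1
  have := Nat.le_of_dvd (by norm_num) h1
  have h2 := qq_ge K
  have h3 := qq_mod K
  have h4 := qq_even K
  have : qq K + 1 = 5 := by omega
  rw [this] at h1; omega

lemma star_inv_of_nm {x : K} (h : x * star x = 1) : star x = x⁻¹ :=
  (eq_inv_of_mul_eq_one_right h)

lemma nm_one_sub (x y : K) (hx : x * star x = 1) (hy : y * star y = 1) :
    (x * y) * star (x * y) = 1 := by
  rw [star_mul']; linear_combination (y * star y) * hx + hy

lemma sq_inj {x y : K} (h : x ^ 2 = y ^ 2) : x = y := by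
  have : (x - y) ^ 2 = 0 := by
    linear_combination h + (y ^ 2 - x * y) * two0 (K := K)
  exact sub_eq_zero.1 (pow_eq_zero_iff (two_ne_zero) |>.1 this)

lemma sq_surj (x : K) : ∃ y, y ^ 2 = x :=
  (Finite.injective_iff_surjective.1 (fun (a b : K) (h : a ^ 2 = b ^ 2) => sq_inj h)) x

lemma sqrt_Fx {x y : K} (h : y ^ 2 = x) (hx : x ∈ Fx K) : y ∈ Fx K := by
  rw [mem_Fx] at *
  apply sq_inj
  rw [← star_pow, h, hx]

end field

/-! ### The Hermitian space `K³` and its special unitary group -/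

/-- The natural module. -/
abbrev V (K : Type*) : Type _ := Fin 3 → K

section herm
variable {K : Type*} [Field K] [StarRing K]

/-- The Hermitian form `∑ xᵢ ȳᵢ` on `K³`. -/
def hf (x y : V K) : K := x ⬝ᵥ star y

@[simp] lemma hf_add_left (x y z : V K) : hf (x + y) z = hf x z + hf y z := by simp [hf]
@[simp] lemma hf_add_right (x y z : V K) : hf x (y + z) = hf x y + hf x z := by simp [hf]
@[simp] lemma hf_sub_left (x y z : V K) : hf (x - y) z = hf x z - hf y z := by simp [hf]
@[simp] lemma hf_sub_right (x y z : V K) : hf x (y - z) = hf x y - hf x z := by simp [hf]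
@[simp] lemma hf_neg_left (x y : V K) : hf (-x) y = -hf x y := by simp [hf]
@[simp] lemma hf_neg_right (x y : V K) : hf x (-y) = -hf x y := by simp [hf]
@[simp] lemma hf_smul_left (a : K) (x y : V K) : hf (a • x) y = a * hf x y := by simp [hf]
@[simp] lemma hf_smul_right (a : K) (x y : V K) : hf x (a • y) = star a * hf x y := by
  simp [hf]
@[simp] lemma hf_zero_left (x : V K) : hf 0 x = 0 := by simp [hf]
@[simp] lemma hf_zero_right (x : V K) : hf x 0 = 0 := by simp [hf]
@[simp] lemma hf_star (x y : V K) : star (hf x y) = hf y x := by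
  simp only [hf, dotProduct, star_sum, star_mul', Pi.star_apply, star_star]
  exact Finset.sum_congr rfl fun i _ => mul_comm _ _

lemma hf_comm_zero {x y : V K} (h : hf x y = 0) : hf y x = 0 := by
  rw [← hf_star, h, star_zero]

lemma hf_comm_of {x y : V K} {a : K} (h : hf x y = a) : hf y x = star a := by
  rw [← hf_star, h]

lemma hf_nondeg {x : V K} (h : ∀ y, hf x y = 0) : x = 0 := by
  ext i
  have := h (Pi.single i 1)
  simpa [hf] using this

lemma hf_self_mem (x : V K) : hf x x ∈ Fx K := hf_star x x

/-- The linear form `x ↦ hf x y`. -/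
def hfl (y : V K) : Module.Dual K (V K) where
  toFun x := hf x y
  map_add' := by simp
  map_smul' := by simp

@[simp] lemma hfl_apply (x y : V K) : hfl y x = hf x y := rfl

/-- The special unitary group over `K`. -/
def SU (K : Type*) [Field K] [StarRing K] : Subgroup (Matrix.unitaryGroup (Fin 3) K) where
  carrier := {M | (M : Matrix (Fin 3) (Fin 3) K).det = 1}
  one_mem' := by simp
  mul_mem' := by
    intro a b ha hb
    change (a.1 * b.1).det = 1
    rw [Matrix.det_mul]
    have h1 : a.1.det = 1 := ha
    have h2 : b.1.det = 1 := hb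
    rw [h1, h2, mul_one]
  inv_mem' := by
    intro a ha
    change (star a.1).det = 1
    have h1 : a.1.det = 1 := ha
    rw [Matrix.star_eq_conjTranspose, Matrix.det_conjTranspose, h1, star_one]

/-- The natural action of the special unitary group on `K³`. -/
def ac : SU K →* Module.End K (V K) where
  toFun g := Matrix.toLin' g.1.1
  map_one' := by
    change Matrix.toLin' (1 : Matrix (Fin 3) (Fin 3) K) = _
    rw [Matrix.toLin'_one]; rfl
  map_mul' a b := by
    change Matrix.toLin' (a.1.1 * b.1.1) = _
    rw [Matrix.toLin'_mul]; rfl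

lemma ac_def (g : SU K) : ac g = Matrix.toLin' g.1.1 := rfl

@[simp] lemma ac_mul (a b : SU K) (x : V K) : ac (a * b) x = ac a (ac b x) := by
  rw [map_mul]; rfl
@[simp] lemma ac_one (x : V K) : ac (1 : SU K) x = x := by rw [map_one]; rfl
@[simp] lemma ac_inv_ac (a : SU K) (x : V K) : ac a⁻¹ (ac a x) = x := by
  rw [← ac_mul]; simp
@[simp] lemma ac_ac_inv (a : SU K) (x : V K) : ac a (ac a⁻¹ x) = x := by
  rw [← ac_mul]; simp

@[simp] lemma hf_ac (g : SU K) (x y : V K) : hf (ac g x) (ac g y) = hf x y := by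
  have h : star g.1.1 * g.1.1 = 1 := Matrix.UnitaryGroup.star_mul_self g.1
  simp only [hf, ac_def, Matrix.toLin'_apply, Matrix.star_mulVec]
  rw [dotProduct_comm, Matrix.dotProduct_mulVec, Matrix.vecMul_vecMul,
    ← Matrix.star_eq_conjTranspose, h, Matrix.vecMul_one, dotProduct_comm]

lemma hf_ac_left (g : SU K) (x y : V K) : hf (ac g x) y = hf x (ac g⁻¹ y) := by
  rw [← hf_ac g x (ac g⁻¹ y), ac_ac_inv]

lemma ac_inj {g g' : SU K} (h : ∀ x, ac g x = ac g' x) : g = g' := by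
  have : ac g = ac g' := LinearMap.ext h
  rw [ac_def, ac_def] at this
  exact Subtype.ext (Subtype.ext (Matrix.toLin'.injective this))

lemma ac_injective (g : SU K) : Function.Injective (ac g) := fun x y h => by
  rw [← ac_inv_ac g x, h, ac_inv_ac]

@[simp] lemma ac_eq_zero {g : SU K} {x : V K} : ac g x = 0 ↔ x = 0 :=
  map_eq_zero_iff _ (ac_injective g)

lemma ac_eq_iff {g : SU K} {x y : V K} : ac g x = y ↔ x = ac g⁻¹ y :=
  ⟨fun h => by rw [← h, ac_inv_ac], fun h => by rw [h, ac_ac_inv]⟩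

lemma ac_det (g : SU K) : LinearMap.det (ac g) = 1 := by
  rw [ac_def, LinearMap.det_toLin']; exact g.2

lemma det_isom {f : V K →ₗ[K] V K} (h : ∀ x y, hf (f x) (f y) = hf x y) :
    LinearMap.toMatrix' f ∈ Matrix.unitaryGroup (Fin 3) K := by
  rw [Matrix.mem_unitaryGroup_iff']
  ext i j
  have := h (Pi.single j 1) (Pi.single i 1)
  simp only [hf, dotProduct, Pi.star_apply] at this
  rw [Matrix.mul_apply]
  simp only [Matrix.star_apply, LinearMap.toMatrix'_apply]
  rw [Finset.sum_congr rfl fun k _ => mul_comm _ _]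
  convert this using 1
  rw [Finset.sum_eq_single i]
  · simp [Matrix.one_apply, Pi.single_apply]
  · intro b _ hb; simp [Pi.single_apply, hb]
  · simp

lemma exists_ac {f : V K →ₗ[K] V K} (h : ∀ x y, hf (f x) (f y) = hf x y)
    (hd : LinearMap.det f = 1) : ∃ g : SU K, ∀ x, ac g x = f x := by
  refine ⟨⟨⟨LinearMap.toMatrix' f, det_isom h⟩, ?_⟩, fun x => ?_⟩
  · change (LinearMap.toMatrix' f).det = 1
    rw [LinearMap.det_toMatrix', hd]
  · rw [ac_def, Matrix.toLin'_toMatrix']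

lemma det_norm {f : V K →ₗ[K] V K} (h : ∀ x y, hf (f x) (f y) = hf x y) :
    LinearMap.det f * star (LinearMap.det f) = 1 := by
  have := det_isom h
  rw [Matrix.mem_unitaryGroup_iff] at this
  have h2 := congrArg Matrix.det this
  rwa [Matrix.det_mul, Matrix.star_eq_conjTranspose, Matrix.det_conjTranspose, Matrix.det_one,
    LinearMap.det_toMatrix'] at h2

/-- An isometry can be corrected into `SU` by rescaling the image of a unit vector. -/
lemma exists_ac_scaled {f : V K →ₗ[K] V K} (h : ∀ x y, hf (f x) (f y) = hf x y) (w : V K)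
    (hw : hf w w = 1) : ∃ g : SU K, ∃ z : K, z * star z = 1 ∧
      ∀ x, ac g x = f x + ((z - 1) * hf (f x) w) • w := by
  set d := LinearMap.det f
  have hd : d * star d = 1 := det_norm h
  have hd0 : d ≠ 0 := by rintro h; simp [h] at hd
  have hz : star d * d = 1 := by rw [mul_comm]; exact hd
  obtain ⟨g, hg⟩ := exists_ac (K := K)
    (f := (LinearMap.transvection (hfl w) ((star d - 1) • w)) ∘ₗ f) (by
      intro x y
      simp only [LinearMap.comp_apply, LinearMap.transvection.apply, hfl_apply, hf_add_left,
        hf_add_right, hf_smul_left, hf_smul_right, star_sub, star_star, star_one, hw, h, hf_star,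
        star_mul']
      linear_combination (hf (f x) w * hf w (f y)) * hd) (by
      rw [LinearMap.det_comp, LinearMap.transvection.det, hfl_apply, hf_smul_left, hw]
      linear_combination hd)
  refine ⟨g, star d, by rw [star_star, hz], fun x => ?_⟩
  rw [hg]
  simp [LinearMap.transvection.apply, smul_smul, mul_comm]

/-! ### Hyperbolic and orthonormal frames -/

/-- `u, v` is a hyperbolic pair and `w` a unit vector orthogonal to both. -/
structure Hyp (u v w : V K) : Prop where
  uu : hf u u = 0
  vv : hf v v = 0
  uv : hf u v = 1
  uw : hf u w = 0
  vw : hf v w = 0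
  ww : hf w w = 1

lemma Hyp.vu {u v w : V K} (H : Hyp u v w) : hf v u = 1 := by rw [← hf_star, H.uv, star_one]
lemma Hyp.wu {u v w : V K} (H : Hyp u v w) : hf w u = 0 := hf_comm_zero H.uw
lemma Hyp.wv {u v w : V K} (H : Hyp u v w) : hf w v = 0 := hf_comm_zero H.vw

lemma Hyp.symm {u v w : V K} (H : Hyp u v w) : Hyp v u w :=
  ⟨H.vv, H.uu, H.vu, H.vw, H.uw, H.ww⟩

lemma eq_zero_of_perp {b : Fin 3 → V K} (hb : LinearIndependent K b) {x : V K}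
    (h : ∀ i, hf x (b i) = 0) : x = 0 := by
  have hs := hb.span_eq_top_of_card_eq_finrank (by simp)
  refine hf_nondeg fun y => ?_
  have hy : y ∈ Submodule.span K (Set.range b) := by rw [hs]; trivial
  induction hy using Submodule.span_induction with
  | mem y hy => obtain ⟨i, rfl⟩ := hy; exact h i
  | zero => simp
  | add y z _ _ h1 h2 => simp [h1, h2]
  | smul a y _ h1 => simp [h1]

lemma Hyp.expand {u v w : V K} (H : Hyp u v w) (x : V K) :
    x = hf x v • u + hf x u • v + hf x w • w := by
  have hli : LinearIndependent K ![u, v, w] := by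
    rw [Fintype.linearIndependent_iff]
    intro g hg
    simp only [Fin.sum_univ_three, Matrix.cons_val_zero, Matrix.cons_val_one,
      Matrix.cons_val_two, Matrix.head_cons, Matrix.tail_cons, Matrix.cons_val] at hg
    have h1 := congrArg (fun y => hf y v) hg
    have h2 := congrArg (fun y => hf y u) hg
    have h3 := congrArg (fun y => hf y w) hg
    simp [H.uv, H.vv, H.wv, H.uu, H.vu, H.wu, H.uw, H.vw, H.ww] at h1 h2 h3
    intro i; fin_cases i <;> simpa
  rw [← sub_eq_zero]
  refine eq_zero_of_perp hli fun i => ?_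
  fin_cases i <;> simp [H.uv, H.vv, H.wv, H.uu, H.vu, H.wu, H.uw, H.vw, H.ww]

lemma Hyp.ext {u v w : V K} (H : Hyp u v w) {x y : V K} (h1 : hf x u = hf y u)
    (h2 : hf x v = hf y v) (h3 : hf x w = hf y w) : x = y := by
  rw [H.expand x, H.expand y, h1, h2, h3]

lemma Hyp.hf_eq {u v w : V K} (H : Hyp u v w) (x y : V K) :
    hf x y = hf x v * hf u y + hf x u * hf v y + hf x w * hf w y := by
  conv_lhs => rw [H.expand x]
  simp

lemma Hyp.ac_ext {u v w : V K} (H : Hyp u v w) {g g' : SU K} (h1 : ac g u = ac g' u)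
    (h2 : ac g v = ac g' v) (h3 : ac g w = ac g' w) : g = g' := by
  refine ac_inj fun x => ?_
  rw [H.expand x]; simp [h1, h2, h3]

lemma Hyp.map {u v w : V K} (H : Hyp u v w) (g : SU K) : Hyp (ac g u) (ac g v) (ac g w) := by
  constructor <;> simp [H.uv, H.vv, H.uu, H.uw, H.vw, H.ww]

/-- Up to a scalar on the unit vector, `SU` is transitive on hyperbolic frames. -/
lemma hyp_trans {u v w u' v' w' : V K} (H : Hyp u v w) (H' : Hyp u' v' w') :
    ∃ g : SU K, ∃ z : K, z * star z = 1 ∧ ac g u = u' ∧ ac g v = v' ∧ ac g w = z • w' := by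
  let f : V K →ₗ[K] V K := (hfl v).smulRight u' + (hfl u).smulRight v' + (hfl w).smulRight w'
  have hfx : ∀ x, f x = hf x v • u' + hf x u • v' + hf x w • w' := fun x => rfl
  obtain ⟨g, z, hz, hg⟩ := exists_ac_scaled (f := f) (fun x y => by
    rw [H.hf_eq x y, hfx, hfx]
    simp [H'.uv, H'.vv, H'.wv, H'.uu, H'.vu, H'.wu, H'.uw, H'.vw, H'.ww]; ring) w' H'.ww
  refine ⟨g, z, hz, ?_, ?_, ?_⟩ <;> rw [hg, hfx] <;>
    simp [H'.uw, H'.vw, H'.ww, H.uv, H.vv, H.wv, H.uu, H.vu, H.wu, H.uw, H.vw, H.ww]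
  rw [sub_smul, one_smul]; abel

/-- An orthonormal basis. -/
def Onb (e : Fin 3 → V K) : Prop := ∀ i j, hf (e i) (e j) = if i = j then 1 else 0

lemma Onb.expand {e : Fin 3 → V K} (H : Onb e) (x : V K) :
    x = hf x (e 0) • e 0 + hf x (e 1) • e 1 + hf x (e 2) • e 2 := by
  have hli : LinearIndependent K e := by
    rw [Fintype.linearIndependent_iff]
    intro g hg i
    have h1 := congrArg (fun y => hf y (e i)) hg
    simp only [Fin.sum_univ_three, hf_add_left, hf_smul_left, H _ _] at h1
    fin_cases i <;> simpa using h1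
  rw [← sub_eq_zero]
  refine eq_zero_of_perp hli fun i => ?_
  fin_cases i <;> simp [H _ _]

lemma Onb.ext {e : Fin 3 → V K} (H : Onb e) {x y : V K} (h : ∀ i, hf x (e i) = hf y (e i)) :
    x = y := by
  rw [H.expand x, H.expand y, h, h, h]

lemma Onb.hf_eq {e : Fin 3 → V K} (H : Onb e) (x y : V K) :
    hf x y = hf x (e 0) * hf (e 0) y + hf x (e 1) * hf (e 1) y + hf x (e 2) * hf (e 2) y := by
  conv_lhs => rw [H.expand x]
  simp

lemma Onb.ac_ext {e : Fin 3 → V K} (H : Onb e) {g g' : SU K} (h : ∀ i, ac g (e i) = ac g' (e i)) :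
    g = g' := by
  refine ac_inj fun x => ?_
  rw [H.expand x]; simp [h]

lemma Onb.ne_zero {e : Fin 3 → V K} (H : Onb e) (i : Fin 3) : e i ≠ 0 := by
  intro h; have := H i i; simp [h] at this

lemma Onb.map {e : Fin 3 → V K} (H : Onb e) (g : SU K) : Onb fun i => ac g (e i) := by
  intro i j; simp [H i j]

lemma onb_trans {e e' : Fin 3 → V K} (H : Onb e) (H' : Onb e') (k : Fin 3) :
    ∃ g : SU K, ∃ z : K, z * star z = 1 ∧ (∀ i, i ≠ k → ac g (e i) = e' i) ∧
      ac g (e k) = z • e' k := by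
  let f : V K →ₗ[K] V K := (hfl (e 0)).smulRight (e' 0) + (hfl (e 1)).smulRight (e' 1) +
    (hfl (e 2)).smulRight (e' 2)
  have hfx : ∀ x, f x = hf x (e 0) • e' 0 + hf x (e 1) • e' 1 + hf x (e 2) • e' 2 := fun x => rfl
  have hfe : ∀ i, f (e i) = e' i := by
    intro i; rw [hfx]; fin_cases i <;> simp [H _ _]
  obtain ⟨g, z, hz, hg⟩ := exists_ac_scaled (f := f) (fun x y => by
    rw [H.hf_eq x y, hfx, hfx]
    simp [H' _ _]; ring) (e' k) (by simp [H' _ _])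
  refine ⟨g, z, hz, ?_, ?_⟩
  · intro i hi; rw [hg, hfe, H' i k, if_neg hi]; simp
  · rw [hg, hfe, H' k k, if_pos rfl, mul_one, sub_smul, one_smul]; abel

/-- Diagonal elements in an orthonormal basis. -/
lemma exists_diag {e : Fin 3 → V K} (H : Onb e) {a : Fin 3 → K} (ha : ∀ i, a i * star (a i) = 1)
    (hp : a 0 * a 1 * a 2 = 1) : ∃ g : SU K, ∀ i, ac g (e i) = a i • e i := by
  let t : Fin 3 → V K →ₗ[K] V K := fun i => LinearMap.transvection (hfl (e i)) ((a i - 1) • e i)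
  have ht : ∀ i x, t i x = x + ((a i - 1) * hf x (e i)) • e i := by
    intro i x; simp [t, LinearMap.transvection.apply, smul_smul, mul_comm]
  have hti : ∀ i x y, hf (t i x) (t i y) = hf x y := by
    intro i x y
    rw [ht, ht]; simp [H i i]
    linear_combination (hf x (e i) * hf (e i) y) * ha i
  have htd : ∀ i, LinearMap.det (t i) = a i := by
    intro i; rw [LinearMap.transvection.det]; simp [H i i]
  obtain ⟨g, hg⟩ := exists_ac (K := K) (f := t 0 ∘ₗ t 1 ∘ₗ t 2)
    (by intro x y; simp [hti]) (by rw [LinearMap.det_comp, LinearMap.det_comp]; simp [htd, ← hp, mul_assoc])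
  refine ⟨g, fun i => ?_⟩
  rw [hg]
  have : ∀ b : K, ∀ x : V K, x + (b - 1) • x = b • x := by intros; module
  fin_cases i <;> simp [ht, H _ _, this]

/-- The determinant of a diagonal element. -/
lemma Onb.prod_eq {e : Fin 3 → V K} (H : Onb e) {g : SU K} {a : Fin 3 → K}
    (hg : ∀ i, ac g (e i) = a i • e i) : a 0 * a 1 * a 2 = 1 := by
  have hli : LinearIndependent K e := by
    rw [Fintype.linearIndependent_iff]
    intro c hc i
    have h1 := congrArg (fun y => hf y (e i)) hc
    simp only [Fin.sum_univ_three, hf_add_left, hf_smul_left, H _ _] at h1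
    fin_cases i <;> simpa using h1
  let b := basisOfLinearIndependentOfCardEqFinrank hli (by simp)
  have hb : ∀ i, b i = e i := fun i => by simp [b]
  have hd := ac_det g
  rw [← LinearMap.det_toMatrix b] at hd
  have : LinearMap.toMatrix b b (ac g) = Matrix.diagonal a := by
    ext i j
    rw [LinearMap.toMatrix_apply, hb, hg, ← hb, map_smul]
    by_cases hij : i = j
    · subst hij; simp
    · simp [Matrix.diagonal_apply_ne _ hij, hij]
  rw [this, Matrix.det_diagonal, Fin.prod_univ_three] at hd
  exact hd

lemma Onb.norm_eq {e : Fin 3 → V K} (H : Onb e) {g : SU K} {a : K} {i j : Fin 3}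
    (hg : ac g (e i) = a • e j) : a * star a = 1 := by
  have := hf_ac g (e i) (e i)
  rw [hg] at this
  simpa [H _ _, mul_comm] using this

/-- The determinant of an element diagonal on a hyperbolic frame. -/
lemma Hyp.prod_eq {u v w : V K} (H : Hyp u v w) {g : SU K} {a b c : K}
    (hu : ac g u = a • u) (hv : ac g v = b • v) (hw : ac g w = c • w) : a * b * c = 1 := by
  have hli : LinearIndependent K ![u, v, w] := by
    rw [Fintype.linearIndependent_iff]
    intro g hg
    simp only [Fin.sum_univ_three, Matrix.cons_val_zero, Matrix.cons_val_one,
      Matrix.cons_val_two, Matrix.head_cons, Matrix.tail_cons, Matrix.cons_val] at hg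
    have h1 := congrArg (fun y => hf y v) hg
    have h2 := congrArg (fun y => hf y u) hg
    have h3 := congrArg (fun y => hf y w) hg
    simp [H.uv, H.vv, H.wv, H.uu, H.vu, H.wu, H.uw, H.vw, H.ww] at h1 h2 h3
    intro i; fin_cases i <;> simpa
  let B := basisOfLinearIndependentOfCardEqFinrank hli (by simp)
  have hB : ∀ i, B i = ![u, v, w] i := fun i => by simp [B]
  have hd := ac_det g
  rw [← LinearMap.det_toMatrix B] at hd
  have hg : ∀ i, ac g (B i) = ![a, b, c] i • B i := by
    intro i; rw [hB]; fin_cases i <;> simp [hu, hv, hw]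
  have : LinearMap.toMatrix B B (ac g) = Matrix.diagonal ![a, b, c] := by
    ext i j
    rw [LinearMap.toMatrix_apply, hg, map_smul]
    by_cases hij : i = j
    · subst hij; simp
    · simp [Matrix.diagonal_apply_ne _ hij, hij]
  rw [this, Matrix.det_diagonal, Fin.prod_univ_three] at hd
  simpa using hd

end herm

/-! ### Isotropic and unit vectors -/

section geom
variable {K : Type*} [Field K] [StarRing K] [UField K]

lemma vc2 (x : V K) : x + x = 0 := by ext i; exact c2 _

lemma vneg (x : V K) : -x = x := by rw [neg_eq_iff_add_eq_zero, vc2]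

lemma exists_perp (a b : V K) : ∃ w : V K, w ≠ 0 ∧ hf w a = 0 ∧ hf w b = 0 := by
  let f : V K →ₗ[K] K × K := (hfl a).prod (hfl b)
  have h := LinearMap.ker_ne_bot_of_finrank_lt (f := f) (by simp)
  obtain ⟨w, hw, h0⟩ := (Submodule.ne_bot_iff _).1 h
  have : f w = 0 := hw
  exact ⟨w, h0, congrArg Prod.fst this, congrArg Prod.snd this⟩

lemma normalize {w : V K} (hw : hf w w ≠ 0) : ∃ k : K, k ≠ 0 ∧ hf (k • w) (k • w) = 1 := by
  obtain ⟨k, hk⟩ := nm_surj (a := (hf w w)⁻¹) ((Fx K).inv_mem (hf_self_mem w))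
  refine ⟨k, ?_, ?_⟩
  · rintro rfl; simp at hk; exact hw hk.symm
  · rw [hf_smul_left, hf_smul_right, ← mul_assoc, hk, inv_mul_cancel₀ hw]

lemma exists_dual {c : V K} (hc : c ≠ 0) : ∃ y, hf c y = 1 := by
  by_contra! h
  refine hc (hf_nondeg fun y => ?_)
  by_contra hy
  refine h ((star (hf c y)⁻¹) • y) ?_
  rw [hf_smul_right, star_star, inv_mul_cancel₀ hy]

lemma exists_hyp_perp {c w : V K} (hc : c ≠ 0) (hcc : hf c c = 0) (hw : hf w w = 1)
    (hcw : hf c w = 0) : ∃ v, Hyp c v w := by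
  obtain ⟨y, hy⟩ := exists_dual hc
  have hwc : hf w c = 0 := hf_comm_zero hcw
  let y' := y - hf y w • w
  have h1 : hf c y' = 1 := by simp [y', hcw, hy]
  have h2 : hf y' w = 0 := by simp [y', hw]
  have h1' : hf y' c = 1 := by rw [← hf_star, h1, star_one]
  obtain ⟨k, hk⟩ := tr_surj (hf_self_mem y')
  refine ⟨y' + k • c, hcc, ?_, ?_, hcw, ?_, hw⟩
  · simp [hcc, h1, h1']
    rw [← hk]; linear_combination (k + star k) * two0 (K := K)
  · simp [hcc, h1]
  · simp [h2, hcw]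

lemma perp_aniso {x w y : V K} (hx : hf x x = 1) (hw : hf w w = 1) (hxw : hf x w = 0) (hy : y ≠ 0)
    (hyx : hf y x = 0) (hyw : hf y w = 0) : hf y y ≠ 0 := by
  intro hyy
  have hwx : hf w x = 0 := hf_comm_zero hxw
  have hli : LinearIndependent K ![x, w, y] := by
    rw [Fintype.linearIndependent_iff]
    intro g hg
    simp only [Fin.sum_univ_three, Matrix.cons_val_zero, Matrix.cons_val_one,
      Matrix.cons_val_two, Matrix.head_cons, Matrix.tail_cons, Matrix.cons_val] at hg
    have h1 := congrArg (fun y => hf y x) hg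
    have h2 := congrArg (fun y => hf y w) hg
    simp [hx, hw, hxw, hwx, hyx, hyw] at h1 h2
    rw [h1, h2] at hg
    have h3 : g 2 = 0 := by simpa [hy] using hg
    intro i; fin_cases i <;> simpa
  refine hy (eq_zero_of_perp hli fun i => ?_)
  fin_cases i <;> simp [hyx, hyw, hyy]

lemma exists_onb_of_two {x w : V K} (hx : hf x x = 1) (hw : hf w w = 1) (hxw : hf x w = 0) :
    ∃ y, Onb ![x, y, w] := by
  obtain ⟨y, hy, hyx, hyw⟩ := exists_perp x w
  obtain ⟨k, hk, hk1⟩ := normalize (perp_aniso hx hw hxw hy hyx hyw)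
  have hwx : hf w x = 0 := hf_comm_zero hxw
  have hxy : hf x y = 0 := hf_comm_zero hyx
  have hwy : hf w y = 0 := hf_comm_zero hyw
  refine ⟨k • y, fun i j => ?_⟩
  fin_cases i <;> fin_cases j <;>
    simp [hx, hw, hxw, hwx, hyx, hyw, hxy, hwy]
  simpa using hk1

lemma exists_hyp_of_unit {w : V K} (hw : hf w w = 1) : ∃ u v, Hyp u v w := by
  obtain ⟨x, hx, hxw, -⟩ := exists_perp w 0
  by_cases hxx : hf x x = 0
  · obtain ⟨v, hv⟩ := exists_hyp_perp hx hxx hw hxw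
    exact ⟨x, v, hv⟩
  · obtain ⟨k, hk, hk1⟩ := normalize hxx
    obtain ⟨y, hy⟩ := exists_onb_of_two hk1 hw (by rw [hf_smul_left, hxw, mul_zero])
    set e : Fin 3 → V K := ![k • x, y, w] with he
    have h01 : e 0 + e 1 ≠ 0 := by
      intro h
      have := congrArg (fun z => hf z (e 0)) h
      simp [hy _ _] at this
    obtain ⟨v, hv⟩ := exists_hyp_perp (w := w) h01 (by simp [hy _ _, c2]) hw (by
      have h0 := hy 0 2
      have h1 := hy 1 2
      have h2 : e 2 = w := rfl
      rw [h2] at h0 h1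
      simp at h0 h1
      rw [hf_add_left, h0, h1, add_zero])
    exact ⟨_, v, hv⟩

lemma Hyp.onb {u v w : V K} (H : Hyp u v w) : ∃ k : K, k + star k = 1 ∧
    Onb ![u + k • v, u + star k • v, w] := by
  obtain ⟨k, hk⟩ := tr_surj (Fx K).one_mem
  have hk' : star k + k = 1 := by rw [add_comm]; exact hk
  refine ⟨k, hk, fun i j => ?_⟩
  fin_cases i <;> fin_cases j <;>
    simp [H.uv, H.vv, H.wv, H.uu, H.vu, H.wu, H.uw, H.vw, H.ww, hk, hk', c2]

lemma exists_onb_of_unit {w : V K} (hw : hf w w = 1) : ∃ x y, Onb ![x, y, w] := by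
  obtain ⟨u, v, H⟩ := exists_hyp_of_unit hw
  obtain ⟨k, -, h⟩ := H.onb
  exact ⟨_, _, h⟩

lemma hyp_complete {c v : V K} (hcc : hf c c = 0) (hvv : hf v v = 0) (hcv : hf c v = 1) :
    ∃ w, Hyp c v w := by
  have hvc : hf v c = 1 := by rw [← hf_star, hcv, star_one]
  obtain ⟨l, hl⟩ := tr_surj (Fx K).one_mem
  have hl' : star l + l = 1 := by rw [add_comm]; exact hl
  obtain ⟨w, hw, hw1, hw2⟩ := exists_perp c v
  have hcw : hf c w = 0 := hf_comm_zero hw1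
  have hvw : hf v w = 0 := hf_comm_zero hw2
  have han : hf w w ≠ 0 := by
    refine perp_aniso (x := c + l • v) (w := c + star l • v) ?_ ?_ ?_ hw ?_ ?_ <;>
      simp [hcc, hvv, hcv, hvc, hl, hl', hw1, hw2, c2]
  obtain ⟨m, hm, hm1⟩ := normalize han
  exact ⟨m • w, hcc, hvv, hcv, by simp [hcw], by simp [hvw], hm1⟩

lemma exists_hyp_of_iso {c : V K} (hc : c ≠ 0) (hcc : hf c c = 0) : ∃ v w, Hyp c v w := by
  obtain ⟨y, hy⟩ := exists_dual hc
  obtain ⟨k, hk⟩ := tr_surj (hf_self_mem y)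
  have hy' : hf y c = 1 := by rw [← hf_star, hy, star_one]
  have hcv : hf c (y + k • c) = 1 := by simp [hcc, hy]
  have hvv : hf (y + k • c) (y + k • c) = 0 := by
    simp [hcc, hy, hy']
    rw [← hk]; linear_combination (k + star k) * two0 (K := K)
  exact ⟨_, hyp_complete hcc hvv hcv⟩

/-- There are no totally isotropic planes. -/
lemma iso_perp {c d : V K} (hc : c ≠ 0) (hcc : hf c c = 0) (hdd : hf d d = 0)
    (hcd : hf d c = 0) : ∃ k : K, d = k • c := by
  obtain ⟨v, w, H⟩ := exists_hyp_of_iso hc hcc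
  have h := H.hf_eq d d
  rw [hdd, hcd, hf_comm_zero hcd] at h
  have h1 : hf d w = 0 := by
    have : hf d w * star (hf d w) = 0 := by rw [hf_star]; simpa using h.symm
    exact nm_zero.1 this
  refine ⟨hf d v, ?_⟩
  conv_lhs => rw [H.expand d]
  simp [hcd, h1]

variable (K) in
lemma exists_hyp : ∃ u v w : V K, Hyp u v w := by
  have h : hf (Pi.single 0 1 : V K) (Pi.single 0 1) = 1 := by simp [hf]
  obtain ⟨u, v, H⟩ := exists_hyp_of_unit h
  exact ⟨u, v, _, H⟩

lemma Hyp.u_ne {u v w : V K} (H : Hyp u v w) : u ≠ 0 := by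
  rintro rfl; have := H.uv; simp at this
lemma Hyp.v_ne {u v w : V K} (H : Hyp u v w) : v ≠ 0 := H.symm.u_ne
lemma Hyp.w_ne {u v w : V K} (H : Hyp u v w) : w ≠ 0 := by
  rintro rfl; have := H.ww; simp at this

/-! ### Transvections and involutions -/

lemma exists_tv {c : V K} {a : K} (hc : hf c c = 0) (ha : a ∈ Fx K) :
    ∃ g : SU K, ∀ x, ac g x = x + (a * hf x c) • c := by
  obtain ⟨g, hg⟩ := exists_ac (K := K) (f := LinearMap.transvection (hfl c) (a • c)) (by
    intro x y
    simp [LinearMap.transvection.apply, hc]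
    rw [mem_Fx.1 ha]
    linear_combination (hf x c * a * hf c y) * two0 (K := K)) (by
    rw [LinearMap.transvection.det]; simp [hc])
  exact ⟨g, fun x => by rw [hg]; simp [LinearMap.transvection.apply, smul_smul, mul_comm]⟩

/-- The unitary transvection `x ↦ x + a h(x,c) c` with isotropic center `c` and `a` in the fixed
field (and `1` for other arguments). -/
noncomputable def tv (c : V K) (a : K) : SU K :=
  if h : hf c c = 0 ∧ a ∈ Fx K then (exists_tv h.1 h.2).choose else 1

lemma tv_apply {c : V K} {a : K} (hc : hf c c = 0) (ha : a ∈ Fx K) (x : V K) :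
    ac (tv c a) x = x + (a * hf x c) • c := by
  rw [tv, dif_pos ⟨hc, ha⟩]
  exact (exists_tv hc ha).choose_spec x

lemma tv_mul {c : V K} {a b : K} (hc : hf c c = 0) (ha : a ∈ Fx K) (hb : b ∈ Fx K) :
    tv c a * tv c b = tv c (a + b) := by
  refine ac_inj fun x => ?_
  rw [ac_mul, tv_apply hc ha, tv_apply hc hb, tv_apply hc ((Fx K).add_mem ha hb)]
  simp [hc]; module

lemma tv_zero {c : V K} (hc : hf c c = 0) : tv c 0 = 1 := by
  refine ac_inj fun x => ?_
  rw [tv_apply hc (Fx K).zero_mem]; simp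

lemma tv_sq {c : V K} {a : K} (hc : hf c c = 0) (ha : a ∈ Fx K) : tv c a * tv c a = 1 := by
  rw [tv_mul hc ha ha, c2, tv_zero hc]

lemma tv_smul {c : V K} {a k : K} (hc : hf c c = 0) (ha : a ∈ Fx K) :
    tv (k • c) a = tv c (a * (k * star k)) := by
  refine ac_inj fun x => ?_
  rw [tv_apply (by simp [hc]) ha, tv_apply hc ((Fx K).mul_mem ha (nm_mem k))]
  rw [hf_smul_right, smul_smul]; congr 2; ring

lemma tv_conj {c : V K} {a : K} (hc : hf c c = 0) (ha : a ∈ Fx K) (g : SU K) :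
    g * tv c a * g⁻¹ = tv (ac g c) a := by
  refine ac_inj fun x => ?_
  rw [ac_mul, ac_mul, tv_apply hc ha, tv_apply (by simpa) ha, map_add, map_smul, ac_ac_inv]
  rw [hf_ac_left g⁻¹, inv_inv]

lemma tv_inj {c : V K} {a b : K} (hc0 : c ≠ 0) (hc : hf c c = 0) (ha : a ∈ Fx K) (hb : b ∈ Fx K)
    (h : tv c a = tv c b) : a = b := by
  obtain ⟨v, w, H⟩ := exists_hyp_of_iso hc0 hc
  have := congrArg (fun g => hf (ac g v) v) h
  simp only [tv_apply hc ha, tv_apply hc hb] at this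
  simpa [H.vu, H.uv, H.vv] using this

lemma tv_ne_one {c : V K} {a : K} (hc0 : c ≠ 0) (hc : hf c c = 0) (ha : a ∈ Fx K) (h0 : a ≠ 0) :
    tv c a ≠ 1 := by
  intro h; rw [← tv_zero hc] at h
  exact h0 (tv_inj hc0 hc ha (Fx K).zero_mem h)

/-- Every involution is a transvection. -/
lemma exists_center {g : SU K} (h2 : g * g = 1) (h1 : g ≠ 1) :
    ∃ c : V K, c ≠ 0 ∧ hf c c = 0 ∧ g = tv c 1 := by
  have hinv : g⁻¹ = g := inv_eq_of_mul_eq_one_left h2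
  have hgg : ∀ x, ac g (ac g x) = x := fun x => by rw [← ac_mul, h2, ac_one]
  obtain ⟨x, hx⟩ : ∃ x, ac g x - x ≠ 0 := by
    by_contra! h
    exact h1 (ac_inj fun x => by rw [ac_one]; exact sub_eq_zero.1 (h x))
  have hsa : ∀ x y, hf (ac g x - x) y = hf x (ac g y - y) := by
    intro x y; rw [hf_sub_left, hf_sub_right, hf_ac_left, hinv]
  have hiso : ∀ x y, hf (ac g x - x) (ac g y - y) = 0 := by
    intro x y
    rw [hsa, map_sub, hgg, ← neg_sub (ac g y) y, vneg, sub_self, hf_zero_right]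
  set c := ac g x - x with hc
  choose f hf' using fun y => iso_perp hx (hiso x x) (hiso y y) (hiso y x)
  have hfy : ∀ y, hf c y = star (f y) * hf x c := by
    intro y; rw [hc, hsa, hf', hf_smul_right]
  obtain ⟨y, hy⟩ := exists_dual hx
  have hxc : hf x c ≠ 0 := by
    intro h; rw [hfy, h, mul_zero] at hy; exact one_ne_zero hy.symm
  have hfx : f x = 1 := by
    have := hf' x
    rw [← hc] at this
    have h3 : (f x - 1) • c = 0 := by rw [sub_smul, one_smul, ← this, sub_self]
    simpa [hx, sub_eq_zero] using h3
  have hxc' : star (hf x c) = hf x c := by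
    have := hfy x
    rw [hfx] at this
    simpa using this
  have ha : (hf x c)⁻¹ ∈ Fx K := (Fx K).inv_mem hxc'
  have hg : g = tv c (hf x c)⁻¹ := by
    refine ac_inj fun z => ?_
    rw [tv_apply (hiso x x) ha, ← sub_eq_iff_eq_add', hf']
    congr 1
    have e : hf z c = f z * hf x c := by rw [← hf_star, hfy, star_mul', star_star, hxc']
    rw [e]; field_simp
  obtain ⟨k, hk⟩ := nm_surj ha
  refine ⟨k • c, ?_, by rw [hf_smul_left, hf_smul_right, hiso x x]; simp, ?_⟩
  · rw [smul_ne_zero_iff]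
    refine ⟨?_, hx⟩
    rintro rfl
    simp at hk
    exact hxc hk.symm
  · rw [tv_smul (hiso x x) (Fx K).one_mem, hk, one_mul]; exact hg

lemma tv_one_conj {c d : V K} (hc0 : c ≠ 0) (hc : hf c c = 0) (hd0 : d ≠ 0) (hd : hf d d = 0) :
    ∃ g : SU K, ac g c = d := by
  obtain ⟨v, w, H⟩ := exists_hyp_of_iso hc0 hc
  obtain ⟨v', w', H'⟩ := exists_hyp_of_iso hd0 hd
  obtain ⟨g, -, -, h, -⟩ := hyp_trans H H'
  exact ⟨g, h⟩

/-- The involutions of `SU` form one conjugacy class. -/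
lemma inv_conj {s t : SU K} (hs : s * s = 1) (hs1 : s ≠ 1) (ht : t * t = 1) (ht1 : t ≠ 1) :
    ∃ g : SU K, g * s * g⁻¹ = t := by
  obtain ⟨c, hc0, hc, rfl⟩ := exists_center hs hs1
  obtain ⟨d, hd0, hd, rfl⟩ := exists_center ht ht1
  obtain ⟨g, hg⟩ := tv_one_conj hc0 hc hd0 hd
  exact ⟨g, by rw [tv_conj hc (Fx K).one_mem, hg]⟩

/-- An element fixing a unit vector acts on its complement through a matrix of determinant `1`
with entries in the fixed field. -/
lemma su2 {u v w : V K} (H : Hyp u v w) {g : SU K} (hg : ac g w = w) :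
    ∃ a b c d : K, a ∈ Fx K ∧ b ∈ Fx K ∧ c ∈ Fx K ∧ d ∈ Fx K ∧ a * d + b * c = 1 ∧
      ac g u = a • u + b • v ∧ ac g v = c • u + d • v := by
  have Hg := H.map g
  rw [hg] at Hg
  set a := hf (ac g u) v
  set b := hf (ac g u) u
  set c := hf (ac g v) v
  set d := hf (ac g v) u
  have hu : ac g u = a • u + b • v := by
    conv_lhs => rw [H.expand (ac g u)]
    simp [Hg.uw, a, b]
  have hv : ac g v = c • u + d • v := by
    conv_lhs => rw [H.expand (ac g v)]
    simp [Hg.vw, c, d]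
  -- the determinant on the complement of `w`
  have hdet : a * d + b * c = 1 := by
    have hli : LinearIndependent K ![u, v, w] := by
      rw [Fintype.linearIndependent_iff]
      intro g hg
      simp only [Fin.sum_univ_three, Matrix.cons_val_zero, Matrix.cons_val_one,
        Matrix.cons_val_two, Matrix.head_cons, Matrix.tail_cons, Matrix.cons_val] at hg
      have h1 := congrArg (fun y => hf y v) hg
      have h2 := congrArg (fun y => hf y u) hg
      have h3 := congrArg (fun y => hf y w) hg
      simp [H.uv, H.vv, H.wv, H.uu, H.vu, H.wu, H.uw, H.vw, H.ww] at h1 h2 h3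
      intro i; fin_cases i <;> simpa
    let B := basisOfLinearIndependentOfCardEqFinrank hli (by simp)
    have hB : ∀ i, B i = ![u, v, w] i := fun i => by simp [B]
    have hd := ac_det g
    rw [← LinearMap.det_toMatrix B] at hd
    have h0 : ac g (B 0) = a • B 0 + b • B 1 := by rw [hB, hB]; exact hu
    have h1 : ac g (B 1) = c • B 0 + d • B 1 := by rw [hB, hB]; exact hv
    have h2 : ac g (B 2) = B 2 := by rw [hB]; exact hg
    have : LinearMap.toMatrix B B (ac g) = !![a, c, 0; b, d, 0; 0, 0, 1] := by
      ext i j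
      rw [LinearMap.toMatrix_apply]
      fin_cases j
      · simp only [Fin.zero_eta, h0, map_add, map_smul, Module.Basis.repr_self]
        fin_cases i <;> simp
      · simp only [Fin.mk_one, h1, map_add, map_smul, Module.Basis.repr_self]
        fin_cases i <;> simp
      · simp only [Fin.reduceFinMk, h2, map_add, map_smul, Module.Basis.repr_self]
        fin_cases i <;> simp
    rw [this, Matrix.det_fin_three] at hd
    simp at hd
    linear_combination hd + (b * c) * two0 (K := K)
  have e1 := Hg.uu
  have e2 := Hg.vv
  have e3 := Hg.uv
  rw [hu] at e1 e3
  rw [hv] at e2 e3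
  simp [H.uv, H.vv, H.uu, H.vu] at e1 e2 e3
  have t0 := two0 (K := K)
  have e4 : d * star a + c * star b = 1 := by
    have := congrArg star e3
    simp only [star_add, star_mul', star_star, star_one] at this
    linear_combination this
  have ha : star a = a := by
    linear_combination c * e1 + a * e4 - star a * hdet - (a * c * star b) * t0
  have hb : star b = b := by
    linear_combination d * e1 + b * e4 - star b * hdet - (b * d * star a) * t0
  have hc : star c = c := by
    linear_combination a * e2 + c * e3 - star c * hdet - (a * c * star d) * t0
  have hd : star d = d := by
    linear_combination b * e2 + d * e3 - star d * hdet - (b * d * star c) * t0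
  exact ⟨a, b, c, d, ha, hb, hc, hd, hdet, hu, hv⟩

end geom

/-! ### Generation by transvections -/

section gen
variable {K : Type*} [Field K] [StarRing K] [UField K]

lemma tv_mem_of {H : Subgroup (SU K)} {c : V K} (hc : hf c c = 0) (hc0 : c ≠ 0)
    (hH : ∀ c : V K, c ≠ 0 → hf c c = 0 → tv c 1 ∈ H) {a : K} (ha : a ∈ Fx K) : tv c a ∈ H := by
  obtain ⟨k, hk⟩ := nm_surj ha
  by_cases hk0 : k = 0
  · subst hk0; simp at hk; subst hk; rw [tv_zero hc]; exact H.one_mem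
  · rw [← hk, ← one_mul (k * star k), ← tv_smul hc (Fx K).one_mem]
    exact hH _ (smul_ne_zero hk0 hc0) (by simp [hc])

lemma tv_move {u v : V K} (hu : hf u u = 1) (hv : hf v v = 1) (ht : hf u v ∈ Fx K)
    (h1 : hf u v ≠ 1) : u + v ≠ 0 ∧ hf (u + v) (u + v) = 0 ∧ ∃ a ∈ Fx K, ac (tv (u + v) a) u = v := by
  have hvu : hf v u = hf u v := by rw [← hf_star, ht]
  have hiso : hf (u + v) (u + v) = 0 := by
    simp [hu, hv, hvu]; linear_combination (1 + hf u v) * two0 (K := K)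
  have hmem : (1 + hf u v)⁻¹ ∈ Fx K := (Fx K).inv_mem ((Fx K).add_mem (Fx K).one_mem ht)
  refine ⟨?_, hiso, (1 + hf u v)⁻¹, hmem, ?_⟩
  · intro h
    have : v = u := by rw [← vneg u]; exact (neg_eq_of_add_eq_zero_right h).symm
    rw [this, hu] at h1; exact h1 rfl
  · have h0 : 1 + hf u v ≠ 0 := fun h => h1 (add_eq_zero'.1 h).symm
    rw [tv_apply hiso hmem, hf_add_right, hu, inv_mul_cancel₀ h0, one_smul, ← add_assoc, vc2,
      zero_add]

lemma gen_fix {H : Subgroup (SU K)} (hH : ∀ c : V K, c ≠ 0 → hf c c = 0 → tv c 1 ∈ H)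
    {w : V K} (hw : hf w w = 1) {g : SU K} (hg : ac g w = w) : g ∈ H := by
  obtain ⟨x, y, X⟩ := exists_hyp_of_unit hw
  have tx : ∀ {s : K}, s ∈ Fx K → tv x s ∈ H := fun hs => tv_mem_of X.uu X.u_ne hH hs
  have ty : ∀ {s : K}, s ∈ Fx K → tv y s ∈ H := fun hs => tv_mem_of X.vv X.v_ne hH hs
  have txw : ∀ {s : K}, s ∈ Fx K → ac (tv x s) w = w := fun hs => by
    rw [tv_apply X.uu hs, X.wu]; simp
  have tyw : ∀ {s : K}, s ∈ Fx K → ac (tv y s) w = w := fun hs => by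
    rw [tv_apply X.vv hs, X.wv]; simp
  -- elements fixing `x` and `w` are transvections
  have key1 : ∀ g : SU K, ac g w = w → ac g x = x → g ∈ H := by
    intro g hg hgx
    obtain ⟨a, b, c, d, ha, hb, hc, hd, hdet, hu, hv⟩ := su2 X hg
    rw [hgx] at hu
    have ea := congrArg (fun z => hf z y) hu
    have eb := congrArg (fun z => hf z x) hu
    simp [X.uv, X.vv, X.uu, X.vu] at ea eb
    rw [← ea, ← eb] at hdet
    have hd1 : d = 1 := by simpa using hdet
    have : g = tv x c := by
      refine X.ac_ext ?_ ?_ ?_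
      · rw [hgx, tv_apply X.uu hc, X.uu]; simp
      · rw [hv, hd1, tv_apply X.uu hc, X.vu]; simp [add_comm]
      · rw [hg, txw hc]
    rw [this]; exact tx hc
  have key2 : ∀ g : SU K, ∀ a b : K, a ∈ Fx K → b ∈ Fx K → b ≠ 0 → ac g w = w →
      ac g x = a • x + b • y → g ∈ H := by
    intro g a b ha hb hb0 hg hgx
    have hs : (1 + a) * b⁻¹ ∈ Fx K :=
      (Fx K).mul_mem ((Fx K).add_mem (Fx K).one_mem ha) ((Fx K).inv_mem hb)
    have h1 := key1 (tv y b * (tv x ((1 + a) * b⁻¹) * g)) (by rw [ac_mul, ac_mul, hg, txw hs, tyw hb])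
      (by
        rw [ac_mul, ac_mul, hgx, tv_apply X.uu hs, tv_apply X.vv hb]
        simp [X.uv, X.vv, X.uu, X.vu]
        have e1 : (1 + a) * b⁻¹ * b = 1 + a := by field_simp
        rw [e1]
        have e2 : a + (1 + a) = 1 := by linear_combination a * two0 (K := K)
        rw [e2, mul_one]
        have : a • x + b • y + (1 + a) • x + b • y = (a + (1 + a)) • x + (b • y + b • y) := by module
        rw [this, vc2, e2]; simp)
    exact (H.mul_mem_cancel_left (tx hs)).1 ((H.mul_mem_cancel_left (ty hb)).1 h1)
  obtain ⟨a, b, c, d, ha, hb, hc, hd, hdet, hu, hv⟩ := su2 X hg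
  by_cases hb0 : b = 0
  · have ha0 : a ≠ 0 := by rintro rfl; rw [hb0] at hdet; simp at hdet
    refine (H.mul_mem_cancel_left (ty (Fx K).one_mem)).1
      (key2 (tv y 1 * g) a a ha ha ha0 (by rw [ac_mul, hg, tyw (Fx K).one_mem]) ?_)
    rw [ac_mul, hu, hb0, tv_apply X.vv (Fx K).one_mem]
    simp [X.uv]
  · exact key2 g a b ha hb hb0 hg hu

/-- `SU(3,q)` is generated by its transvections. -/
lemma gen_tv {H : Subgroup (SU K)} (hH : ∀ c : V K, c ≠ 0 → hf c c = 0 → tv c 1 ∈ H) : H = ⊤ := by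
  have stepA : ∀ u v : V K, hf u u = 1 → hf v v = 1 → hf u v ∈ Fx K → hf u v ≠ 1 →
      ∃ h ∈ H, ac h u = v := by
    intro u v hu hv ht h1
    obtain ⟨h0, hiso, a, ha, h⟩ := tv_move hu hv ht h1
    exact ⟨_, tv_mem_of hiso h0 hH ha, h⟩
  have stepC : ∀ u v : V K, hf u u = 1 → hf v v = 1 → ∃ h ∈ H, ac h u = v := by
    intro u v hu hv
    obtain ⟨w, hw, huw, hwv, hwv1⟩ : ∃ w : V K, hf w w = 1 ∧ hf u w = 0 ∧ hf w v ∈ Fx K ∧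
        hf w v ≠ 1 := by
      set v0 := v - hf v u • u with hv0
      have hv0u : hf v0 u = 0 := by simp [hv0, hu]
      have huv0 : hf u v0 = 0 := hf_comm_zero hv0u
      have hvv : v = v0 + hf v u • u := by simp [hv0]
      suffices h : ∃ w : V K, hf w w = 1 ∧ hf u w = 0 ∧ hf w v0 ∈ Fx K ∧ hf w v0 ≠ 1 by
        obtain ⟨w, h1, h2, h3, h4⟩ := h
        refine ⟨w, h1, h2, ?_⟩
        rw [hvv, hf_add_right, hf_smul_right, hf_comm_zero h2, mul_zero, add_zero]
        exact ⟨h3, h4⟩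
      by_cases h0 : v0 = 0
      · obtain ⟨x, y, X⟩ := exists_hyp_of_unit hu
        obtain ⟨k, -, h⟩ := X.onb
        refine ⟨x + k • y, h 0 0, h 2 0, ?_, ?_⟩ <;> rw [h0, hf_zero_right]
        · exact (Fx K).zero_mem
        · exact zero_ne_one
      by_cases h1 : hf v0 v0 = 0
      · obtain ⟨y, X⟩ := exists_hyp_perp h0 h1 hu hv0u
        obtain ⟨k, hk, hk1, hk3, hk2⟩ := exists_omega (K := K)
        have hk0 : k ≠ 0 := by rintro rfl; simp at hk3
        obtain ⟨m, hm⟩ := tr_surj ((Fx K).inv_mem hk)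
        refine ⟨k • y + m • v0, ?_, ?_, ?_, ?_⟩
        · simp [X.uv, X.vv, X.uu, X.vu, mem_Fx.1 hk]
          have : k * (m + star m) = 1 := by rw [hm, mul_inv_cancel₀ hk0]
          linear_combination this
        · simp [X.wu, X.wv]
        · simp [X.vu, X.uu, hk]
        · simp [X.vu, X.uu, hk1]
      · obtain ⟨k, hk, hk1⟩ := normalize h1
        obtain ⟨w, hw, hw1, hw2⟩ := exists_perp u v0
        obtain ⟨l, hl, hl1⟩ := normalize (perp_aniso hu hk1 (by simp [huv0]) hw hw1 (by simp [hw2]))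
        refine ⟨l • w, hl1, ?_, ?_, ?_⟩
        · rw [hf_smul_right, hf_comm_zero hw1, mul_zero]
        · rw [hf_smul_left, hw2, mul_zero]; exact (Fx K).zero_mem
        · rw [hf_smul_left, hw2, mul_zero]; exact zero_ne_one
    obtain ⟨h1, hh1, e1⟩ := stepA u w hu hw (by rw [huw]; exact (Fx K).zero_mem)
      (by rw [huw]; exact zero_ne_one)
    obtain ⟨h2, hh2, e2⟩ := stepA w v hw hv hwv hwv1
    exact ⟨h2 * h1, H.mul_mem hh2 hh1, by rw [ac_mul, e1, e2]⟩
  obtain ⟨x, y, w, X⟩ := exists_hyp K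
  rw [eq_top_iff]
  intro g _
  obtain ⟨h, hh, e⟩ := stepC w (ac g w) X.ww (by simp [X.ww])
  have : h⁻¹ * g ∈ H := gen_fix hH X.ww (by rw [ac_mul, ← e, ac_inv_ac])
  exact (H.mul_mem_cancel_left (H.inv_mem hh)).1 this

/-- The center of `SU(3,q)` is trivial. -/
lemma center_trivial (z : SU K) (hz : ∀ g : SU K, z * g = g * z) : z = 1 := by
  have hiso : ∀ c : V K, c ≠ 0 → hf c c = 0 → ∃ k : K, ac z c = k • c := by
    intro c h0 hc
    obtain ⟨v, w, H⟩ := exists_hyp_of_iso h0 hc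
    have h1 : z * tv c 1 * z⁻¹ = tv c 1 := by rw [hz]; group
    rw [tv_conj hc (Fx K).one_mem] at h1
    have h2 := congrArg (fun g => ac g v) h1
    rw [tv_apply (by simp [hc]) (Fx K).one_mem, tv_apply hc (Fx K).one_mem, H.vu] at h2
    have h3 := add_left_cancel h2
    simp only [one_mul, one_smul] at h3
    have hne : hf v (ac z c) ≠ 0 := by
      intro h; rw [h, zero_smul] at h3; exact h0 h3.symm
    refine ⟨(hf v (ac z c))⁻¹, ?_⟩
    rw [eq_inv_smul_iff₀ hne, h3]
  obtain ⟨u, v, w, H⟩ := exists_hyp K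
  obtain ⟨k, hk, hO⟩ := H.onb
  obtain ⟨a, ha⟩ := hiso u H.u_ne H.uu
  obtain ⟨b, hb⟩ := hiso v H.v_ne H.vv
  -- two further isotropic vectors, one in the hyperbolic line and one outside
  have hab : a = b := by
    have h0 : u + v ≠ 0 := by
      intro h; have := congrArg (fun z => hf z v) h; simp [H.uv, H.vv] at this
    obtain ⟨m, hm⟩ := hiso (u + v) h0 (by simp [H.uu, H.vv, H.uv, H.vu, c2])
    rw [map_add, ha, hb] at hm
    have e1 := congrArg (fun z => hf z v) hm
    have e2 := congrArg (fun z => hf z u) hm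
    simp [H.uu, H.vv, H.uv, H.vu] at e1 e2
    rw [e1, e2]
  subst hab
  have hw : ac z w = a • w := by
    have h0 : u + k • v + w ≠ 0 := by
      intro h; have := congrArg (fun z => hf z v) h; simp [H.uv, H.vv, H.wv] at this
    obtain ⟨m, hm⟩ := hiso (u + k • v + w) h0 (by
      simp [H.uu, H.vv, H.uv, H.vu, H.uw, H.wu, H.vw, H.wv, H.ww]
      rw [hk, c2])
    rw [map_add, map_add, map_smul, ha, hb] at hm
    have hw1 : ac z w = m • (u + k • v + w) - a • u - k • a • v := by rw [← hm]; module
    have hwu : hf (ac z w) (ac z v) = 0 := by rw [hf_ac, H.wv]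
    have ha0 : a ≠ 0 := by
      rintro rfl; rw [zero_smul] at ha; exact H.u_ne (ac_eq_zero.1 ha)
    rw [hb, hw1] at hwu
    simp [H.uu, H.vv, H.uv, H.vu, H.uw, H.wu, H.vw, H.wv, H.ww, ha0] at hwu
    have hma : m = a := sub_eq_zero.1 hwu
    rw [hw1, hma]; module
  have h3 : a ^ 3 = 1 := by rw [← H.prod_eq ha hb hw]; ring
  have hn : a * star a = 1 := by
    have := hf_ac z w w
    rw [hw] at this
    simpa [H.ww, mul_comm] using this
  have h1 := cube_root h3 hn
  refine H.ac_ext ?_ ?_ ?_ <;> simp [ha, hb, hw, h1]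

end gen

/-! ### Elements of order three and dihedral subgroups of order six -/

section ord3
variable {K : Type*} [Field K] [StarRing K] [UField K]

lemma order3_aux {w : K} (hw : w ∈ Fx K) (hw1 : w ≠ 1) (hw2 : w ^ 2 + w + 1 = 0) {g : SU K}
    (hg3 : g ^ 3 = 1) {x : V K} (hx : x + w ^ 2 • ac g x + w • ac g (ac g x) ≠ 0) :
    ∃ u v e : V K, Hyp u v e ∧ ac g u = w • u ∧ ac g v = w ^ 2 • v ∧ ac g e = e := by
  have hw3 : w ^ 3 = 1 := by linear_combination (w - 1) * hw2
  have hw4 : w ^ 2 * w ^ 2 = w := by linear_combination w * hw3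
  have hw0 : w ≠ 0 := by rintro rfl; simp at hw3
  have hsw : star w = w := hw
  have hggg : ∀ y, ac g (ac g (ac g y)) = y := by
    intro y; rw [← ac_mul, ← ac_mul, ← pow_three', hg3, ac_one]
  set u := x + w ^ 2 • ac g x + w • ac g (ac g x) with hu
  have hgu : ac g u = w • u := by
    simp only [hu, map_add, map_smul, hggg, smul_add, smul_smul]
    rw [← pow_succ', hw3, one_smul, ← pow_two]; abel
  have huu : hf u u = 0 := by
    have h := hf_ac g u u
    rw [hgu] at h
    simp [hsw] at h
    by_contra h0
    have : w ^ 2 = 1 := by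
      apply mul_right_cancel₀ h0; linear_combination h
    apply hw1; linear_combination hw3 - w * this
  obtain ⟨y, hy⟩ := exists_dual hx
  set v := y + w • ac g y + w ^ 2 • ac g (ac g y) with hv
  have hgv : ac g v = w ^ 2 • v := by
    simp only [hv, map_add, map_smul, hggg, smul_add, smul_smul]
    rw [hw4, ← pow_succ, hw3, one_smul]; abel
  have hvv : hf v v = 0 := by
    have h := hf_ac g v v
    rw [hgv] at h
    simp [hsw] at h
    by_contra h0
    have : w = 1 := by
      apply mul_right_cancel₀ h0; linear_combination h - w * (hf v v) * hw3
    exact hw1 this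
  have huv : hf u v = 1 := by
    have e1 : ∀ z, hf u (ac g z) = w ^ 2 * hf u z := by
      intro z
      have := hf_ac g u z
      rw [hgu, hf_smul_left] at this
      linear_combination w ^ 2 * this - hf u (ac g z) * hw3
    rw [hv]
    simp [e1, hsw, hy]
    linear_combination (3 + (w ^ 3 - 1)) * hw3 + two0 (K := K)
  obtain ⟨e, H⟩ := hyp_complete huu hvv huv
  have h1 : hf (ac g e) u = 0 := by
    have := hf_ac g e u
    rw [hgu, hf_smul_right, hsw, H.wu] at this
    exact (mul_eq_zero.1 this).resolve_left hw0
  have h2 : hf (ac g e) v = 0 := by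
    have := hf_ac g e v
    rw [hgv, hf_smul_right, star_pow, hsw, H.wv] at this
    exact (mul_eq_zero.1 this).resolve_left (pow_ne_zero _ hw0)
  have h3 : ac g e = hf (ac g e) e • e := by
    conv_lhs => rw [H.expand (ac g e)]
    simp [h1, h2]
  have h4 := H.prod_eq hgu hgv h3
  refine ⟨u, v, e, H, hgu, hgv, ?_⟩
  rw [h3]
  have : hf (ac g e) e = 1 := by linear_combination h4 - hf (ac g e) e * hw3
  rw [this, one_smul]

/-- An element of order three has eigenvalues `w, w², 1` on a hyperbolic frame. -/
lemma order3 {w : K} (hw : w ∈ Fx K) (hw1 : w ≠ 1) (hw2 : w ^ 2 + w + 1 = 0) {g : SU K}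
    (hg3 : g ^ 3 = 1) (hg1 : g ≠ 1) :
    ∃ u v e : V K, Hyp u v e ∧ ac g u = w • u ∧ ac g v = w ^ 2 • v ∧ ac g e = e := by
  have hw3 : w ^ 3 = 1 := by linear_combination (w - 1) * hw2
  have hw4 : (w ^ 2) ^ 2 = w := by linear_combination w * hw3
  obtain ⟨x, hx⟩ : ∃ x, ac g x ≠ x := by
    by_contra! h
    exact hg1 (ac_inj fun x => by rw [ac_one, h])
  by_cases h1 : x + w ^ 2 • ac g x + w • ac g (ac g x) = 0
  · by_cases h2 : x + w • ac g x + w ^ 2 • ac g (ac g x) = 0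
    · exfalso
      apply hx
      -- both projections vanish, so `x` is fixed
      have h3 : (w ^ 2 - w) • (ac g x - ac g (ac g x)) = 0 := by
        calc _ = (x + w ^ 2 • ac g x + w • ac g (ac g x)) -
            (x + w • ac g x + w ^ 2 • ac g (ac g x)) := by module
          _ = 0 := by rw [h1, h2, sub_zero]
      have h4 : w ^ 2 - w ≠ 0 := by
        intro h
        have hw0 : w ≠ 0 := by rintro rfl; simp at hw3
        apply hw1; apply mul_left_cancel₀ hw0; linear_combination h
      have h5 := (smul_eq_zero.1 h3).resolve_left h4
      rw [← map_sub, ac_eq_zero, sub_eq_zero] at h5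
      exact h5.symm
    · obtain ⟨u, v, e, H, h3, h4, h5⟩ := order3_aux (w := w ^ 2) ((Fx K).pow_mem hw 2) (by
        intro h; apply hw1; linear_combination hw3 - w * h) (by linear_combination hw2 + w * hw3)
        hg3 (x := x) (by rw [hw4]; exact h2)
      exact ⟨v, u, e, H.symm, by rw [h4, hw4], h3, h5⟩
  · exact order3_aux hw hw1 hw2 hg3 h1

lemma order3_conj {g g' : SU K} (h3 : g ^ 3 = 1) (h1 : g ≠ 1) (h3' : g' ^ 3 = 1) (h1' : g' ≠ 1) :
    ∃ k : SU K, k * g * k⁻¹ = g' := by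
  obtain ⟨w, hw, hw1, -, hw2⟩ := exists_omega (K := K)
  obtain ⟨u, v, e, H, a1, a2, a3⟩ := order3 hw hw1 hw2 h3 h1
  obtain ⟨u', v', e', H', b1, b2, b3⟩ := order3 hw hw1 hw2 h3' h1'
  obtain ⟨k, z, hz, c1, c2, c3⟩ := hyp_trans H H'
  refine ⟨k, ?_⟩
  rw [mul_inv_eq_iff_eq_mul]
  refine H.ac_ext ?_ ?_ ?_ <;> simp [a1, a2, a3, b1, b2, b3, c1, c2, c3]

/-- Normal form of a pair generating a dihedral group of order six. -/
lemma s3_form {w : K} (hw : w ∈ Fx K) (hw1 : w ≠ 1) (hw2 : w ^ 2 + w + 1 = 0) {g s : SU K}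
    (h3 : g ^ 3 = 1) (h1 : g ≠ 1) (hs : s * s = 1) (hsg : g * s = s * g⁻¹) :
    ∃ u v e : V K, Hyp u v e ∧ (ac g u = w • u ∧ ac g v = w ^ 2 • v ∧ ac g e = e) ∧
      ac s u = v ∧ ac s v = u ∧ ac s e = e := by
  have hw3 : w ^ 3 = 1 := by linear_combination (w - 1) * hw2
  have hw0 : w ≠ 0 := by rintro rfl; simp at hw3
  have hsw : star w = w := hw
  have hw21 : w ^ 2 ≠ 1 := by intro h; apply hw1; linear_combination hw3 - w * h
  have hwi : w⁻¹ = w ^ 2 := by field_simp; rw [hw3]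
  obtain ⟨u, v, e, H, a1, a2, a3⟩ := order3 hw hw1 hw2 h3 h1
  have i1 : ac g⁻¹ u = w ^ 2 • u := by
    rw [eq_comm, ← ac_eq_iff, map_smul, a1, smul_smul, ← pow_succ, hw3, one_smul]
  have i2 : ac g⁻¹ v = w • v := by
    rw [eq_comm, ← ac_eq_iff, map_smul, a2, smul_smul, ← pow_succ', hw3, one_smul]
  have i3 : ac g⁻¹ e = e := by rw [eq_comm, ← ac_eq_iff, a3]
  have hgs : ∀ x, ac g (ac s x) = ac s (ac g⁻¹ x) := fun x => by rw [← ac_mul, hsg, ac_mul]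
  have b1 : ac g (ac s u) = w ^ 2 • ac s u := by rw [hgs, i1, map_smul]
  have b2 : ac g (ac s v) = w • ac s v := by rw [hgs, i2, map_smul]
  have b3 : ac g (ac s e) = ac s e := by rw [hgs, i3]
  have perp : ∀ {x y : V K} {a b : K}, ac g x = a • x → ac g y = b • y → a * star b ≠ 1 →
      hf x y = 0 := by
    intro x y a b hx hy hab
    have h := hf_ac g x y
    rw [hx, hy, hf_smul_left, hf_smul_right] at h
    by_contra h0
    exact hab (mul_right_cancel₀ h0 (by linear_combination h))
  have b3' : ac g (ac s e) = (1 : K) • ac s e := by rw [b3, one_smul]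
  have a3' : ac g e = (1 : K) • e := by rw [a3, one_smul]
  have s1 : ac s u = hf (ac s u) u • v := by
    conv_lhs => rw [H.expand (ac s u)]
    rw [perp b1 a2 (by rw [star_pow, hsw]; intro h; apply hw1; linear_combination h - w * hw3),
      perp b1 a3' (by simpa using hw21)]
    simp
  have s2 : ac s v = hf (ac s v) v • u := by
    conv_lhs => rw [H.expand (ac s v)]
    rw [perp b2 a1 (by rw [hsw]; intro h; apply hw21; linear_combination h),
      perp b2 a3' (by simpa using hw1)]
    simp
  have s3 : ac s e = hf (ac s e) e • e := by
    conv_lhs => rw [H.expand (ac s e)]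
    rw [perp b3' a1 (by simpa [hsw] using hw1),
      perp b3' a2 (by simpa [hsw] using hw21)]
    simp
  set b := hf (ac s u) u
  set c := hf (ac s v) v
  set d := hf (ac s e) e
  have hss : ∀ x, ac s (ac s x) = x := fun x => by rw [← ac_mul, hs, ac_one]
  have hd1 : d = 1 := by
    have h := congrArg (fun y => hf y e) (hss e)
    rw [s3, map_smul, s3] at h
    simp [H.ww] at h
    apply sq_inj; linear_combination h
  have hbc : b * c = 1 := by
    have h := congrArg (fun y => hf y v) (hss u)
    rw [s1, map_smul, s2] at h
    simpa [H.uv] using h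
  have hbc' : star b * c = 1 := by
    have h := hf_ac s v u
    rw [s1, s2] at h
    simp [H.uv, H.vu] at h
    linear_combination h
  have hb0 : b ≠ 0 := left_ne_zero_of_mul_eq_one hbc
  have hc0 : c ≠ 0 := right_ne_zero_of_mul_eq_one hbc
  have hb : b ∈ Fx K := mul_right_cancel₀ hc0 (hbc'.trans hbc.symm)
  obtain ⟨k, hk⟩ := nm_surj ((Fx K).inv_mem hb)
  have hk0 : k ≠ 0 := by rintro rfl; simp at hk; exact hb0 hk.symm
  have hkb : k * star k * b = 1 := by rw [hk, inv_mul_cancel₀ hb0]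
  have hkc : k * star k = c := by
    apply mul_right_cancel₀ hb0; rw [hkb, mul_comm, hbc]
  refine ⟨k • u, (k * b) • v, e, ⟨by simp [H.uu], by simp [H.vv], ?_, by simp [H.uw], by simp [H.vw],
    H.ww⟩, ⟨?_, ?_, a3⟩, ?_, ?_, ?_⟩
  · simp [H.uv, mem_Fx.1 hb]; linear_combination hkb
  · rw [map_smul, a1, smul_comm]
  · rw [map_smul, a2, smul_comm]
  · rw [map_smul, s1, smul_smul]
  · rw [map_smul, s2, smul_smul]; congr 1; linear_combination k * hbc
  · rw [s3, hd1, one_smul]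

/-- Pairs generating a dihedral group of order six are simultaneously conjugate. -/
lemma s3_conj {g s g' s' : SU K} (h3 : g ^ 3 = 1) (h1 : g ≠ 1) (hs : s * s = 1)
    (hsg : g * s = s * g⁻¹) (h3' : g' ^ 3 = 1) (h1' : g' ≠ 1) (hs' : s' * s' = 1)
    (hsg' : g' * s' = s' * g'⁻¹) : ∃ k : SU K, k * g * k⁻¹ = g' ∧ k * s * k⁻¹ = s' := by
  obtain ⟨w, hw, hw1, -, hw2⟩ := exists_omega (K := K)
  obtain ⟨u, v, e, H, ⟨a1, a2, a3⟩, a4, a5, a6⟩ := s3_form hw hw1 hw2 h3 h1 hs hsg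
  obtain ⟨u', v', e', H', ⟨b1, b2, b3⟩, b4, b5, b6⟩ := s3_form hw hw1 hw2 h3' h1' hs' hsg'
  obtain ⟨k, z, hz, c1, c2, c3⟩ := hyp_trans H H'
  refine ⟨k, ?_, ?_⟩ <;> rw [mul_inv_eq_iff_eq_mul] <;>
    refine H.ac_ext ?_ ?_ ?_ <;>
    simp [a1, a2, a3, b1, b2, b3, c1, c2, c3, a4, a5, a6, b4, b5, b6]

end ord3

/-! ### Reducible and monomial subgroups -/

section preds
variable {K : Type*} [Field K] [StarRing K] [UField K]

/-- The stabiliser in `SU K` of the line through `c`. -/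
def StL (c : V K) : Subgroup (SU K) where
  carrier := {g | ∃ k : K, k ≠ 0 ∧ ac g c = k • c}
  one_mem' := ⟨1, one_ne_zero, by simp⟩
  mul_mem' := by
    rintro a b ⟨k, hk, h⟩ ⟨l, hl, h'⟩
    exact ⟨l * k, mul_ne_zero hl hk, by rw [ac_mul, h', map_smul, h, smul_smul]⟩
  inv_mem' := by
    rintro a ⟨k, hk, h⟩
    refine ⟨k⁻¹, inv_ne_zero hk, ?_⟩
    rw [eq_comm, ← ac_eq_iff, map_smul, h, smul_smul, inv_mul_cancel₀ hk, one_smul]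

lemma mem_StL {c : V K} {g : SU K} : g ∈ StL c ↔ ∃ k : K, k ≠ 0 ∧ ac g c = k • c := Iff.rfl

lemma mem_StL_of {c : V K} (hc : c ≠ 0) {g : SU K} {k : K} (h : ac g c = k • c) : g ∈ StL c := by
  refine ⟨k, ?_, h⟩
  rintro rfl
  rw [zero_smul, ac_eq_zero] at h
  exact hc h

lemma StL_smul {c : V K} {k : K} (hk : k ≠ 0) : StL (k • c) = StL c := by
  ext g
  simp only [mem_StL, map_smul]
  refine exists_congr fun l => and_congr_right fun _ => ?_
  rw [smul_comm l k]
  exact ⟨fun h => smul_right_injective _ hk h, fun h => by rw [h]⟩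

lemma conj_StL {c : V K} {g h : SU K} : g * h * g⁻¹ ∈ StL (ac g c) ↔ h ∈ StL c := by
  simp only [mem_StL, ac_mul, ac_inv_ac]
  refine exists_congr fun l => and_congr_right fun _ => ?_
  rw [← map_smul]
  exact (ac_injective g).eq_iff

/-- The element `g` permutes the lines of the frame `e` according to `σ`. -/
def Mono (e : Fin 3 → V K) (g : SU K) (σ : Equiv.Perm (Fin 3)) : Prop :=
  ∃ k : Fin 3 → K, (∀ i, k i ≠ 0) ∧ ∀ i, ac g (e i) = k i • e (σ i)

lemma Mono.one (e : Fin 3 → V K) : Mono e 1 1 := ⟨fun _ => 1, by simp, by simp⟩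

lemma Mono.mul {e : Fin 3 → V K} {g h : SU K} {σ τ : Equiv.Perm (Fin 3)} (hg : Mono e g σ)
    (hh : Mono e h τ) : Mono e (g * h) (σ * τ) := by
  obtain ⟨k, hk, h1⟩ := hg
  obtain ⟨l, hl, h2⟩ := hh
  exact ⟨fun i => l i * k (τ i), fun i => mul_ne_zero (hl i) (hk _), fun i => by
    rw [ac_mul, h2, map_smul, h1, smul_smul]; rfl⟩

lemma Mono.inv {e : Fin 3 → V K} {g : SU K} {σ : Equiv.Perm (Fin 3)} (hg : Mono e g σ) :
    Mono e g⁻¹ σ⁻¹ := by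
  obtain ⟨k, hk, h1⟩ := hg
  refine ⟨fun i => (k (σ⁻¹ i))⁻¹, fun i => inv_ne_zero (hk _), fun i => ?_⟩
  rw [eq_comm, ← ac_eq_iff, map_smul, h1, smul_smul, inv_mul_cancel₀ (hk _), one_smul]
  simp

lemma Mono.pow {e : Fin 3 → V K} {g : SU K} {σ : Equiv.Perm (Fin 3)} (hg : Mono e g σ) (n : ℕ) :
    Mono e (g ^ n) (σ ^ n) := by
  induction n with
  | zero => simpa using Mono.one e
  | succ n ih => rw [pow_succ, pow_succ]; exact ih.mul hg

lemma Mono.map {e : Fin 3 → V K} {g h : SU K} {σ : Equiv.Perm (Fin 3)} :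
    Mono (fun i => ac g (e i)) (g * h * g⁻¹) σ ↔ Mono e h σ := by
  simp only [Mono, ac_mul, ac_inv_ac]
  refine exists_congr fun l => and_congr_right fun _ => forall_congr' fun i => ?_
  rw [← map_smul]
  exact (ac_injective g).eq_iff

lemma Mono.eq {e : Fin 3 → V K} (H : Onb e) {g : SU K} {σ τ : Equiv.Perm (Fin 3)}
    (h : Mono e g σ) (h' : Mono e g τ) : σ = τ := by
  obtain ⟨k, hk, h1⟩ := h
  obtain ⟨l, hl, h2⟩ := h'
  ext1 i
  by_contra hne
  have := congrArg (fun y => hf y (e (σ i))) ((h1 i).symm.trans (h2 i))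
  simp [H _ _, Ne.symm hne, hk i] at this

/-- The stabiliser of the frame `e` (as a set of three lines). -/
def StF (e : Fin 3 → V K) : Subgroup (SU K) where
  carrier := {g | ∃ σ, Mono e g σ}
  one_mem' := ⟨1, Mono.one e⟩
  mul_mem' := by rintro a b ⟨σ, h⟩ ⟨τ, h'⟩; exact ⟨_, h.mul h'⟩
  inv_mem' := by rintro a ⟨σ, h⟩; exact ⟨_, h.inv⟩

lemma mem_StF {e : Fin 3 → V K} {g : SU K} : g ∈ StF e ↔ ∃ σ, Mono e g σ := Iff.rfl

lemma conj_StF {e : Fin 3 → V K} {g h : SU K} :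
    g * h * g⁻¹ ∈ StF (fun i => ac g (e i)) ↔ h ∈ StF e :=
  exists_congr fun _ => Mono.map

lemma Mono.smul {e : Fin 3 → V K} {a : Fin 3 → K} (ha : ∀ i, a i ≠ 0) {g : SU K}
    {σ : Equiv.Perm (Fin 3)} (h : Mono e g σ) : Mono (fun i => a i • e i) g σ := by
  obtain ⟨k, hk, h1⟩ := h
  refine ⟨fun i => a i * k i * (a (σ i))⁻¹, fun i => mul_ne_zero (mul_ne_zero (ha i) (hk i))
    (inv_ne_zero (ha _)), fun i => ?_⟩
  rw [map_smul, h1, smul_smul, smul_smul, mul_assoc, mul_assoc, inv_mul_cancel₀ (ha _), mul_one]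

lemma StF_smul {e : Fin 3 → V K} {a : Fin 3 → K} (ha : ∀ i, a i ≠ 0) :
    StF (fun i => a i • e i) = StF e := by
  ext g
  refine ⟨fun ⟨σ, h⟩ => ⟨σ, ?_⟩, fun ⟨σ, h⟩ => ⟨σ, h.smul ha⟩⟩
  have := h.smul (a := fun i => (a i)⁻¹) fun i => inv_ne_zero (ha i)
  simpa [smul_smul, inv_mul_cancel₀ (ha _)] using this

lemma StF_comp {e : Fin 3 → V K} (τ : Equiv.Perm (Fin 3)) : StF (e ∘ τ) = StF e := by
  have key : ∀ (e : Fin 3 → V K) (τ : Equiv.Perm (Fin 3)), StF e ≤ StF (e ∘ τ) := by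
    rintro e τ g ⟨σ, k, hk, h⟩
    exact ⟨τ⁻¹ * σ * τ, k ∘ τ, fun i => hk _, fun i => by simp [h]⟩
  apply le_antisymm _ (key e τ)
  have := key (e ∘ τ) τ⁻¹
  rwa [show (e ∘ τ) ∘ ⇑τ⁻¹ = e from funext fun i => by simp] at this

lemma Onb.comp {e : Fin 3 → V K} (H : Onb e) (τ : Equiv.Perm (Fin 3)) : Onb (e ∘ τ) := by
  intro i j; simp [H _ _]

/-- `H` fixes an isotropic line. -/
def IsoP (H : Subgroup (SU K)) : Prop := ∃ c : V K, c ≠ 0 ∧ hf c c = 0 ∧ H ≤ StL c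
/-- `H` fixes an anisotropic line. -/
def AniP (H : Subgroup (SU K)) : Prop := ∃ w : V K, hf w w = 1 ∧ H ≤ StL w
/-- `H` fixes an isotropic line and an anisotropic line orthogonal to it. -/
def FlagP (H : Subgroup (SU K)) : Prop :=
  ∃ c w : V K, c ≠ 0 ∧ hf c c = 0 ∧ hf w w = 1 ∧ hf c w = 0 ∧ H ≤ StL c ∧ H ≤ StL w
/-- `H` permutes the lines of an orthonormal frame. -/
def MonP (H : Subgroup (SU K)) : Prop := ∃ e, Onb e ∧ H ≤ StF e
/-- `H` permutes the lines of an orthonormal frame and fixes one of them. -/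
def MonVP (H : Subgroup (SU K)) : Prop := ∃ e, Onb e ∧ H ≤ StF e ∧ ∃ i, H ≤ StL (e i)
/-- `H` is contained in a dihedral subgroup of order six. -/
def S3P (H : Subgroup (SU K)) : Prop := ∃ g s : SU K, g ^ 3 = 1 ∧ g ≠ 1 ∧ s * s = 1 ∧
  g * s = s * g⁻¹ ∧ H ≤ Subgroup.closure {g, s}
/-- `H` is contained in a subgroup of order two. -/
def C2P (H : Subgroup (SU K)) : Prop :=
  ∃ s : SU K, s * s = 1 ∧ s ≠ 1 ∧ H ≤ Subgroup.zpowers s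
/-- `H` is contained in a subgroup of order three. -/
def C3P (H : Subgroup (SU K)) : Prop :=
  ∃ g : SU K, g ^ 3 = 1 ∧ g ≠ 1 ∧ H ≤ Subgroup.zpowers g

lemma ani_of {H : Subgroup (SU K)} {w : V K} (hw : hf w w ≠ 0) (h : H ≤ StL w) : AniP H := by
  obtain ⟨k, hk, h1⟩ := normalize hw
  exact ⟨k • w, h1, by rwa [StL_smul hk]⟩

/-- A subgroup fixing a line is reducible in one of the two senses. -/
lemma red_of {H : Subgroup (SU K)} {c : V K} (hc : c ≠ 0) (h : H ≤ StL c) : IsoP H ∨ AniP H := by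
  by_cases hcc : hf c c = 0
  · exact Or.inl ⟨c, hc, hcc, h⟩
  · exact Or.inr (ani_of hcc h)

lemma flag_iff {H : Subgroup (SU K)} : FlagP H ↔ IsoP H ∧ AniP H := by
  constructor
  · rintro ⟨c, w, hc0, hc, hw, hcw, h1, h2⟩
    exact ⟨⟨c, hc0, hc, h1⟩, ⟨w, hw, h2⟩⟩
  rintro ⟨⟨c, hc0, hc, h1⟩, ⟨P, hP, h2⟩⟩
  by_cases hcP : hf c P = 0
  · exact ⟨c, P, hc0, hc, hP, hcP, h1, h2⟩
  obtain ⟨w, hw0, hwc, hwP⟩ := exists_perp c P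
  have hww : hf w w ≠ 0 := by
    intro hww
    obtain ⟨k, rfl⟩ := iso_perp hc0 hc hww hwc
    rw [hf_smul_left] at hwP
    rcases mul_eq_zero.1 hwP with h | h
    · exact hw0 (by rw [h, zero_smul])
    · exact hcP h
  obtain ⟨k, hk, hk1⟩ := normalize hww
  refine ⟨c, k • w, hc0, hc, hk1, by simp [hf_comm_zero hwc], h1, ?_⟩
  rw [StL_smul hk]
  intro g hg
  obtain ⟨a, ha, hga⟩ := h1 hg
  obtain ⟨b, hb, hgb⟩ := h2 hg
  obtain ⟨v, X⟩ := exists_hyp_perp hc0 hc hk1 (by simp [hf_comm_zero hwc])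
  have e1 : hf (ac g w) c = 0 := by
    have := hf_ac g w c
    rw [hga, hf_smul_right, hwc] at this
    exact (mul_eq_zero.1 this).resolve_left (by simpa using ha)
  have e2 : hf (ac g w) P = 0 := by
    have := hf_ac g w P
    rw [hgb, hf_smul_right, hwP] at this
    exact (mul_eq_zero.1 this).resolve_left (by simpa using hb)
  have e3 := X.expand (ac g w)
  rw [e1, zero_smul, add_zero] at e3
  have e4 : hf (ac g w) v = 0 := by
    rw [e3] at e2
    simp [hwP] at e2
    exact e2.resolve_right hcP
  rw [e4, zero_smul, zero_add, smul_smul] at e3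
  exact mem_StL_of hw0 e3

lemma exists_swapEl {e : Fin 3 → V K} (H : Onb e) {i j : Fin 3} (hij : i ≠ j) :
    ∃ g : SU K, ∀ k, ac g (e k) = e (Equiv.swap i j k) := by
  have hc : hf (e i + e j) (e i + e j) = 0 := by simp [H _ _, hij, hij.symm, c2]
  refine ⟨tv (e i + e j) 1, fun k => ?_⟩
  rw [tv_apply hc (Fx K).one_mem]
  rcases eq_or_ne k i with rfl | hki
  · simp [H _ _, hij, ← add_assoc, vc2]
  rcases eq_or_ne k j with rfl | hkj
  · simp only [hf_add_right, H _ _, if_neg hki, Equiv.swap_apply_right]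
    rw [add_comm (e i)]
    simp [← add_assoc, vc2]
  · rw [Equiv.swap_apply_of_ne_of_ne hki hkj]
    simp [H _ _, hki, hkj]

/-- Permutations of an orthonormal basis lie in `SU K`, as `-1 = 1`. -/
lemma exists_permEl {e : Fin 3 → V K} (H : Onb e) (σ : Equiv.Perm (Fin 3)) :
    ∃ g : SU K, ∀ i, ac g (e i) = e (σ i) := by
  induction σ using Equiv.Perm.swap_induction_on with
  | one => exact ⟨1, by simp⟩
  | swap_mul f x y hxy ih =>
    obtain ⟨g, hg⟩ := ih
    obtain ⟨s, hs⟩ := exists_swapEl H hxy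
    exact ⟨s * g, fun i => by rw [ac_mul, hg, hs]; rfl⟩

lemma exists_onb : ∃ e : Fin 3 → V K, Onb e := by
  obtain ⟨u, v, w, H⟩ := exists_hyp (K := K)
  obtain ⟨k, -, h⟩ := H.onb
  exact ⟨_, h⟩

lemma mono_of_perm {e : Fin 3 → V K} {g : SU K} {σ : Equiv.Perm (Fin 3)}
    (h : ∀ i, ac g (e i) = e (σ i)) : Mono e g σ := ⟨fun _ => 1, by simp, by simpa using h⟩

lemma onb_ext_perm {e : Fin 3 → V K} (H : Onb e) {g h : SU K} {σ : Equiv.Perm (Fin 3)}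
    (hg : ∀ i, ac g (e i) = e (σ i)) (hh : ∀ i, ac h (e i) = e (σ i)) : g = h :=
  H.ac_ext fun i => by rw [hg, hh]

/-- A standard dihedral pair of permutations of an orthonormal basis. -/
lemma exists_s3 {e : Fin 3 → V K} (H : Onb e) : ∃ g s : SU K, g ^ 3 = 1 ∧ g ≠ 1 ∧ s * s = 1 ∧
    s ≠ 1 ∧ g * s = s * g⁻¹ ∧ (∀ i, ac g (e i) = e (finRotate 3 i)) ∧
      ∀ i, ac s (e i) = e (Equiv.swap 0 1 i) := by
  obtain ⟨g, hg⟩ := exists_permEl H (finRotate 3)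
  obtain ⟨s, hs⟩ := exists_permEl H (Equiv.swap 0 1)
  have ne : ∀ {g : SU K} {σ : Equiv.Perm (Fin 3)}, (∀ i, ac g (e i) = e (σ i)) → σ ≠ 1 → g ≠ 1 := by
    rintro g σ h h1 rfl
    exact h1 ((mono_of_perm h).eq H (Mono.one e))
  have hgi : ∀ i, ac g⁻¹ (e i) = e ((finRotate 3)⁻¹ i) := fun i => by
    rw [eq_comm, ← ac_eq_iff, hg]; simp
  have r3 : ∀ i : Fin 3, finRotate 3 (finRotate 3 (finRotate 3 i)) = i := by decide
  have r2 : ∀ i : Fin 3, finRotate 3 (Equiv.swap 0 1 i) = Equiv.swap 0 1 ((finRotate 3)⁻¹ i) := by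
    decide
  refine ⟨g, s, ?_, ne hg (by decide), ?_, ne hs (by decide), ?_, hg, hs⟩
  · refine H.ac_ext fun i => ?_
    rw [pow_succ, pow_two]; simp only [ac_mul, hg, ac_one, r3]
  · refine H.ac_ext fun i => ?_
    simp [ac_mul, hs]
  · refine H.ac_ext fun i => ?_
    rw [ac_mul, ac_mul, hs, hg, hgi, hs, r2]

/-- Every dihedral subgroup of order six permutes an orthonormal basis. -/
lemma s3_onb {g s : SU K} (h3 : g ^ 3 = 1) (h1 : g ≠ 1) (hs : s * s = 1) (hsg : g * s = s * g⁻¹) :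
    ∃ e, Onb e ∧ (∀ i, ac g (e i) = e (finRotate 3 i)) ∧
      ∀ i, ac s (e i) = e (Equiv.swap 0 1 i) := by
  obtain ⟨e, H⟩ := exists_onb (K := K)
  obtain ⟨g', s', a1, a2, a3, -, a4, a5, a6⟩ := exists_s3 H
  obtain ⟨k, rfl, rfl⟩ := s3_conj a1 a2 a3 a4 h3 h1 hs hsg
  refine ⟨fun i => ac k (e i), H.map k, fun i => ?_, fun i => ?_⟩
  · simp only [ac_mul, ac_inv_ac, a5]
  · simp only [ac_mul, ac_inv_ac, a6]

lemma s3P_imp {H : Subgroup (SU K)} (h : S3P H) : MonP H ∧ AniP H := by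
  obtain ⟨g, s, h3, h1, hs, hsg, hH⟩ := h
  obtain ⟨e, E, hg, hse⟩ := s3_onb h3 h1 hs hsg
  constructor
  · refine ⟨e, E, hH.trans ?_⟩
    rw [Subgroup.closure_le]
    rintro x (rfl | rfl)
    · exact ⟨_, mono_of_perm hg⟩
    · exact ⟨_, mono_of_perm hse⟩
  · refine ani_of (w := e 0 + e 1 + e 2) ?_ (hH.trans ?_)
    · simp [E _ _, c2]
    · rw [Subgroup.closure_le]
      have r0 : finRotate 3 0 = 1 := by decide
      have r1 : finRotate 3 1 = 2 := by decide
      have r2 : finRotate 3 2 = 0 := by decide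
      have s2 : Equiv.swap (0 : Fin 3) 1 2 = 2 := by decide
      rintro x (rfl | rfl)
      · refine ⟨1, one_ne_zero, ?_⟩
        simp only [map_add, hg, r0, r1, r2, one_smul]; abel
      · refine ⟨1, one_ne_zero, ?_⟩
        simp only [map_add, hse, s2, one_smul, Equiv.swap_apply_left, Equiv.swap_apply_right]; abel

/-- An element of order dividing `3` with the frame vectors as eigenvectors is trivial. -/
lemma diag_cube {e : Fin 3 → V K} (E : Onb e) {g : SU K} {a : Fin 3 → K}
    (hg : ∀ i, ac g (e i) = a i • e i) (h3 : g ^ 3 = 1) : g = 1 := by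
  refine E.ac_ext fun i => ?_
  have h : (a i) ^ 3 = 1 := by
    have h1 : ac (g ^ 3) (e i) = (a i) ^ 3 • e i := by
      rw [pow_succ, pow_two]; simp only [ac_mul, hg, map_smul, smul_smul]; congr 1; ring
    rw [h3, ac_one] at h1
    have := congrArg (fun y => hf y (e i)) h1
    simpa [E _ _] using this.symm
  rw [hg, cube_root h (E.norm_eq (hg i)), one_smul, ac_one]

lemma Mono.diag {e : Fin 3 → V K} {g : SU K} (h : Mono e g 1) :
    ∃ a : Fin 3 → K, ∀ i, ac g (e i) = a i • e i := by
  obtain ⟨k, -, hk⟩ := h; exact ⟨k, hk⟩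

lemma StL_apply {e : Fin 3 → V K} (E : Onb e) {g : SU K} {σ : Equiv.Perm (Fin 3)}
    (h : Mono e g σ) {i : Fin 3} (hi : g ∈ StL (e i)) : σ i = i := by
  obtain ⟨k, hk, h1⟩ := h
  obtain ⟨l, hl, h2⟩ := hi
  by_contra hne
  have := congrArg (fun y => hf y (e (σ i))) ((h1 i).symm.trans h2)
  simp [E _ _, Ne.symm hne, hk i] at this

lemma monV_no3 {H : Subgroup (SU K)} (h : MonVP H) {g : SU K} (hg : g ∈ H) (h3 : g ^ 3 = 1) :
    g = 1 := by
  obtain ⟨e, E, h1, i, h2⟩ := h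
  obtain ⟨σ, hσ⟩ := h1 hg
  have hi := StL_apply E hσ (h2 hg)
  have hσ2 : ∀ (σ : Equiv.Perm (Fin 3)) (i : Fin 3), σ i = i → σ ^ 4 = 1 := by decide
  have := hσ.pow 4
  rw [hσ2 σ i hi, pow_succ, h3, one_mul] at this
  obtain ⟨a, ha⟩ := this.diag
  exact diag_cube E ha h3

lemma monV_imp {H : Subgroup (SU K)} (h : MonVP H) : MonP H ∧ AniP H := by
  obtain ⟨e, E, h1, i, h2⟩ := h
  exact ⟨⟨e, E, h1⟩, e i, by simp [E _ _], h2⟩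

lemma dihedral_form {G : Type*} [Group G] {g s : G} (hs : s * s = 1) (hsg : g * s = s * g⁻¹)
    {x : G} (hx : x ∈ Subgroup.closure {g, s}) : ∃ i : ℤ, x = g ^ i ∨ x = s * g ^ i := by
  have hc : ∀ i : ℤ, g ^ i * s = s * g ^ (-i) := by
    intro i
    have h1 : SemiconjBy s g⁻¹ g := hsg.symm
    have := (h1.zpow_right i).eq
    rw [← this, inv_zpow, zpow_neg]
  have hsi : s⁻¹ = s := inv_eq_of_mul_eq_one_left hs
  induction hx using Subgroup.closure_induction with
  | mem x hx =>
    rcases hx with rfl | rfl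
    · exact ⟨1, Or.inl (by simp)⟩
    · exact ⟨0, Or.inr (by simp)⟩
  | one => exact ⟨0, Or.inl (by simp)⟩
  | mul x y _ _ hx hy =>
    obtain ⟨i, rfl | rfl⟩ := hx <;> obtain ⟨j, rfl | rfl⟩ := hy
    · exact ⟨i + j, Or.inl (by rw [zpow_add])⟩
    · exact ⟨-i + j, Or.inr (by rw [← mul_assoc, hc, zpow_add, mul_assoc])⟩
    · exact ⟨i + j, Or.inr (by rw [zpow_add, mul_assoc])⟩
    · refine ⟨-i + j, Or.inl ?_⟩
      rw [mul_assoc, ← mul_assoc (g ^ i), hc, ← mul_assoc, ← mul_assoc, hs, one_mul, zpow_add]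
  | inv x _ hx =>
    obtain ⟨i, rfl | rfl⟩ := hx
    · exact ⟨-i, Or.inl (by rw [zpow_neg])⟩
    · exact ⟨i, Or.inr (by rw [mul_inv_rev, hsi, ← zpow_neg, hc, neg_neg])⟩

lemma exists_inv_el : ∃ s : SU K, s * s = 1 ∧ s ≠ 1 := by
  obtain ⟨e, E⟩ := exists_onb (K := K)
  obtain ⟨g, s, -, -, h1, h2, -⟩ := exists_s3 E
  exact ⟨s, h1, h2⟩

/-- Subgroups of order at most two are exactly those that fix a vertex of a frame
and lie in a dihedral group of order six. -/
lemma c2_iff {H : Subgroup (SU K)} : C2P H ↔ MonVP H ∧ S3P H := by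
  constructor
  · rintro ⟨s, h2, h1, hH⟩
    obtain ⟨e', E'⟩ := exists_onb (K := K)
    obtain ⟨g', s', a1, a2, a3, a4, a5, a6, a7⟩ := exists_s3 E'
    obtain ⟨k, rfl⟩ := inv_conj a3 a4 h2 h1
    have e1 : ∀ i, ac (k * s' * k⁻¹) (ac k (e' i)) = ac k (e' (Equiv.swap 0 1 i)) := fun i => by
      simp only [ac_mul, ac_inv_ac, a7]
    refine ⟨⟨fun i => ac k (e' i), E'.map k, hH.trans ?_, 2, hH.trans ?_⟩, k * g' * k⁻¹,
      k * s' * k⁻¹, ?_, ?_, h2, ?_, hH.trans ?_⟩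
    · rw [Subgroup.zpowers_le]; exact ⟨_, mono_of_perm e1⟩
    · rw [Subgroup.zpowers_le]
      refine ⟨1, one_ne_zero, ?_⟩
      rw [e1, one_smul]
      rfl
    · rw [conj_pow, a1]; group
    · intro h; apply a2; rwa [conj_eq_one_iff] at h
    · have : k * (g' * s') * k⁻¹ = k * (s' * g'⁻¹) * k⁻¹ := by rw [a5]
      simpa [mul_assoc] using this
    · rw [Subgroup.zpowers_le]; exact Subgroup.subset_closure (by simp)
  · rintro ⟨hV, g, s, h3, h1, hs, hsg, hH⟩
    have key : ∀ i : ℤ, g ^ i ∈ H → g ^ i = 1 := fun i hi => monV_no3 hV hi (by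
      rw [← zpow_natCast, ← zpow_mul, mul_comm, zpow_mul, zpow_natCast, h3, one_zpow])
    have hsi : ∀ i : ℤ, g ^ i * s = s * (g ^ i)⁻¹ := by
      intro i
      have h1 : SemiconjBy s g⁻¹ g := hsg.symm
      have := (h1.zpow_right i).eq
      rw [← this, inv_zpow]
    by_cases hb : H = ⊥
    · obtain ⟨t, ht, ht1⟩ := exists_inv_el (K := K)
      exact ⟨t, ht, ht1, by rw [hb]; exact bot_le⟩
    · obtain ⟨⟨t, ht⟩, ht1'⟩ := Subgroup.ne_bot_iff_exists_ne_one.1 hb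
      have ht1 : t ≠ 1 := fun h => ht1' (Subtype.ext h)
      have form : ∀ x ∈ H, x ≠ 1 → ∃ i : ℤ, x = s * g ^ i := by
        intro x hx hx1
        obtain ⟨i, hi | hi⟩ := dihedral_form hs hsg (hH hx)
        · exact absurd (hi.trans (key i (hi ▸ hx))) hx1
        · exact ⟨i, hi⟩
      have prod : ∀ x ∈ H, ∀ y ∈ H, x ≠ 1 → y ≠ 1 → x * y = 1 := by
        intro x hx y hy hx1 hy1
        obtain ⟨i, rfl⟩ := form x hx hx1
        obtain ⟨j, rfl⟩ := form y hy hy1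
        have e1 : s * g ^ i * (s * g ^ j) = g ^ (-i + j) := by
          rw [mul_assoc, ← mul_assoc (g ^ i), hsi, ← mul_assoc, ← mul_assoc, hs, one_mul, zpow_add,
            zpow_neg]
        rw [e1]
        exact key _ (by rw [← e1]; exact H.mul_mem hx hy)
      refine ⟨t, prod _ ht _ ht ht1 ht1, ht1, fun x hx => ?_⟩
      by_cases hx1 : x = 1
      · rw [hx1]; exact one_mem _
      · rw [eq_inv_of_mul_eq_one_left (prod x hx _ ht hx1 ht1)]
        exact inv_mem (Subgroup.mem_zpowers _)

lemma perm3_der : ∀ (σ τ : Equiv.Perm (Fin 3)) (b : Fin 3), σ 0 ≠ 0 ∧ σ b = b ∧ τ b ≠ b →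
    (∀ i, τ i ≠ i) ∨ ∀ i, (σ * τ) i ≠ i := by decide

lemma perm3_rel : ∀ (σ τ : Equiv.Perm (Fin 3)), (∀ i, σ i ≠ i) ∧ τ ≠ 1 ∧ (∃ i, τ i = i) →
    τ * τ = 1 ∧ σ * τ = τ * σ⁻¹ := by decide

lemma perm3_all : ∀ (σ τ ρ : Equiv.Perm (Fin 3)), (∀ i, σ i ≠ i) ∧ τ ≠ 1 ∧ (∃ i, τ i = i) →
    ρ ∈ [1, σ, σ * σ, τ, τ * σ, τ * (σ * σ)] := by decide

/-- A reducible subgroup of a monomial group fixes a vertex of the frame or is small. -/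
lemma mon_red {H : Subgroup (SU K)} (hM : MonP H) {x : V K} (hx : x ≠ 0) (hR : H ≤ StL x) :
    MonVP H ∨ S3P H := by
  obtain ⟨e, E, hF⟩ := hM
  by_cases hfix : ∃ i, ∀ h ∈ H, ∀ σ, Mono e h σ → σ i = i
  · obtain ⟨i, hi⟩ := hfix
    refine Or.inl ⟨e, E, hF, i, fun h hh => ?_⟩
    obtain ⟨σ, hσ⟩ := hF hh
    have := hi h hh σ hσ
    obtain ⟨k, hk, h1⟩ := hσ
    exact ⟨k i, hk i, by rw [h1, this]⟩
  right
  push Not at hfix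
  -- some element of `H` induces a 3-cycle
  obtain ⟨g, hg, σ, hσ, hder⟩ : ∃ g ∈ H, ∃ σ, Mono e g σ ∧ ∀ i, σ i ≠ i := by
    obtain ⟨a, ha, σ, hσ, h0⟩ := hfix 0
    by_cases hd : ∀ i, σ i ≠ i
    · exact ⟨a, ha, σ, hσ, hd⟩
    push Not at hd
    obtain ⟨b, hb⟩ := hd
    obtain ⟨a', ha', τ, hτ, h0'⟩ := hfix b
    rcases perm3_der σ τ b ⟨h0, hb, h0'⟩ with h | h
    · exact ⟨a', ha', τ, hτ, h⟩
    · exact ⟨a * a', H.mul_mem ha ha', σ * τ, hσ.mul hτ, h⟩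
  have hcoord : ∀ i, hf x (e i) ≠ 0 := by
    obtain ⟨k, hk, h1⟩ := hR hg
    obtain ⟨l, hl, h2⟩ := hσ
    have step : ∀ i, hf x (e i) ≠ 0 → hf x (e (σ i)) ≠ 0 := by
      intro i hi h0
      have := hf_ac g x (e i)
      rw [h1, h2, hf_smul_left, hf_smul_right, h0] at this
      simp at this
      exact hi this.symm
    have hex : ∃ i, hf x (e i) ≠ 0 := by
      by_contra! h
      exact hx (E.ext fun i => by rw [h]; simp)
    obtain ⟨i, hi⟩ := hex
    have tr : ∀ (σ : Equiv.Perm (Fin 3)), (∀ i, σ i ≠ i) → ∀ i j, j = i ∨ j = σ i ∨ j = σ (σ i) := by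
      decide
    intro j
    rcases tr σ hder i j with rfl | rfl | rfl
    · exact hi
    · exact step _ hi
    · exact step _ (step _ hi)
  have hdiag : ∀ d ∈ H, Mono e d 1 → d = 1 := by
    intro d hd hd1
    obtain ⟨a, ha⟩ := hd1.diag
    obtain ⟨k, hk, h1⟩ := hR hd
    have hak : ∀ i, a i = k := by
      intro i
      have h2 := hf_ac d x (e i)
      rw [h1, ha, hf_smul_left, hf_smul_right] at h2
      have h3 : k * star (a i) = 1 := mul_right_cancel₀ (hcoord i) (by linear_combination h2)
      have h4 : a i * star (a i) = 1 := E.norm_eq (ha i)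
      have h5 : star (a i) ≠ 0 := right_ne_zero_of_mul_eq_one h4
      exact mul_right_cancel₀ h5 (h4.trans h3.symm)
    have h6 := E.prod_eq ha
    rw [hak 0, hak 1, hak 2] at h6
    have hk1 : k = 1 := cube_root (by linear_combination h6) (by
      rw [← hak 0]; exact E.norm_eq (ha 0))
    refine E.ac_ext fun i => ?_
    rw [ha, hak, hk1, one_smul, ac_one]
  have hinj : ∀ a ∈ H, ∀ b ∈ H, ∀ τ, Mono e a τ → Mono e b τ → a = b := by
    intro a ha b hb τ h1 h2
    have h3 := h1.mul h2.inv
    rw [mul_inv_cancel] at h3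
    exact mul_inv_eq_one.1 (hdiag _ (H.mul_mem ha (H.inv_mem hb)) h3)
  have hg3 : g ^ 3 = 1 := by
    have h3 : ∀ (σ : Equiv.Perm (Fin 3)), (∀ i, σ i ≠ i) → σ ^ 3 = 1 := by decide
    refine hdiag _ (H.pow_mem hg 3) ?_
    rw [← h3 σ hder]; exact hσ.pow 3
  have hg1 : g ≠ 1 := by
    rintro rfl
    have := hσ.eq E (Mono.one e)
    rw [this] at hder
    exact hder 0 rfl
  by_cases htr : ∃ s ∈ H, ∃ τ, Mono e s τ ∧ τ ≠ 1 ∧ ∃ i, τ i = i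
  · obtain ⟨s, hs, τ, hτ, hτ1, hτi⟩ := htr
    obtain ⟨d1, d2⟩ := perm3_rel σ τ ⟨hder, hτ1, hτi⟩
    have d3 := fun ρ => perm3_all σ τ ρ ⟨hder, hτ1, hτi⟩
    refine ⟨g, s, hg3, hg1, ?_, ?_, fun x hx => ?_⟩
    · exact hdiag _ (H.mul_mem hs hs) (d1 ▸ hτ.mul hτ)
    · exact hinj _ (H.mul_mem hg hs) _ (H.mul_mem hs (H.inv_mem hg)) _ (hσ.mul hτ)
        (d2 ▸ hτ.mul hσ.inv)
    · obtain ⟨ρ, hρ⟩ := hF hx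
      have mg : g ∈ Subgroup.closure {g, s} := Subgroup.subset_closure (by simp)
      have ms : s ∈ Subgroup.closure {g, s} := Subgroup.subset_closure (by simp)
      have d4 := d3 ρ
      simp only [List.mem_cons, List.not_mem_nil, or_false] at d4
      rcases d4 with rfl | rfl | rfl | rfl | rfl | rfl
      · rw [hdiag x hx hρ]; exact one_mem _
      · rw [hinj x hx g hg _ hρ hσ]; exact mg
      · rw [hinj x hx _ (H.mul_mem hg hg) _ hρ (hσ.mul hσ)]; exact mul_mem mg mg
      · rw [hinj x hx s hs _ hρ hτ]; exact ms
      · rw [hinj x hx _ (H.mul_mem hs hg) _ hρ (hτ.mul hσ)]; exact mul_mem ms mg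
      · rw [hinj x hx _ (H.mul_mem hs (H.mul_mem hg hg)) _ hρ (hτ.mul (hσ.mul hσ))]
        exact mul_mem ms (mul_mem mg mg)
  · push Not at htr
    obtain ⟨g', s', a1, a2, a3, a4, a5, -⟩ := exists_s3 E
    obtain ⟨k, rfl⟩ := order3_conj a1 a2 hg3 hg1
    refine ⟨_, k * s' * k⁻¹, hg3, hg1, ?_, ?_, fun x hx => ?_⟩
    · have : k * (s' * s') * k⁻¹ = 1 := by rw [a3]; group
      simpa [mul_assoc] using this
    · have : k * (g' * s') * k⁻¹ = k * (s' * g'⁻¹) * k⁻¹ := by rw [a5]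
      simpa [mul_assoc] using this
    · obtain ⟨ρ, hρ⟩ := hF hx
      have c1 : ∀ (σ ρ : Equiv.Perm (Fin 3)), (∀ i, σ i ≠ i) → (ρ ≠ 1 → ∀ i, ρ i ≠ i) →
        ρ = 1 ∨ ρ = σ ∨ ρ = σ * σ := by decide
      have mg : k * g' * k⁻¹ ∈ Subgroup.closure {k * g' * k⁻¹, k * s' * k⁻¹} :=
        Subgroup.subset_closure (by simp)
      rcases c1 σ ρ hder (htr x hx ρ hρ) with rfl | rfl | rfl
      · rw [hdiag x hx hρ]; exact one_mem _
      · rw [hinj x hx _ hg _ hρ hσ]; exact mg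
      · rw [hinj x hx _ (H.mul_mem hg hg) _ hρ (hσ.mul hσ)]; exact mul_mem mg mg

/-- For subgroups of monomial groups, reducibility means fixing a line of an orthonormal frame or
lying in a dihedral group of order six. -/
lemma mon_red_iff {H : Subgroup (SU K)} :
    MonP H ∧ (IsoP H ∨ AniP H) ↔ MonVP H ∨ S3P H := by
  constructor
  · rintro ⟨hM, ⟨c, hc, -, h⟩ | ⟨w, hw, h⟩⟩
    · exact mon_red hM hc h
    · exact mon_red hM (by rintro rfl; simp at hw) h
  · rintro (h | h)
    · exact ⟨(monV_imp h).1, Or.inr (monV_imp h).2⟩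
    · exact ⟨(s3P_imp h).1, Or.inr (s3P_imp h).2⟩

end preds

/-! ### Möbius functions on conjugacy classes of subgroups -/

section mob
variable {G : Type*} [Group G]

/-- `H` is contained in a conjugate of `M`. -/
def cle (H M : Subgroup G) : Prop := ∃ g : G, ∀ h ∈ H, g * h * g⁻¹ ∈ M

lemma cle_iff {H M : Subgroup G} : (∃ g : ConjAct G, H ≤ g • M) ↔ cle H M := by
  constructor
  · rintro ⟨g, hg⟩
    refine ⟨(ConjAct.ofConjAct g)⁻¹, fun h hh => ?_⟩
    have := Subgroup.mem_pointwise_smul_iff_inv_smul_mem.1 (hg hh)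
    rwa [ConjAct.smul_def, ConjAct.ofConjAct_inv] at this
  · rintro ⟨g, hg⟩
    refine ⟨(ConjAct.toConjAct g)⁻¹, fun h hh => ?_⟩
    rw [Subgroup.mem_pointwise_smul_iff_inv_smul_mem, inv_inv, ConjAct.smul_def]
    exact hg h hh

lemma clsOf_eq_iff {H M : Subgroup G} : clsOf H = clsOf M ↔ ∃ g : ConjAct G, g • M = H := by
  unfold clsOf
  rw [Quotient.eq, MulAction.orbitRel_apply]
  rfl

lemma card_conj (g : ConjAct G) (M : Subgroup G) : Nat.card (g • M : Subgroup G) = Nat.card M :=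
  (Nat.card_congr (Subgroup.equivSMul g M).toEquiv).symm

lemma card_of_cls {H M : Subgroup G} (h : clsOf H = clsOf M) : Nat.card H = Nat.card M := by
  obtain ⟨g, rfl⟩ := clsOf_eq_iff.1 h
  exact card_conj g M

lemma clsOf_eq_of [Finite G] {H M : Subgroup G} (h : cle H M) (hc : Nat.card M ≤ Nat.card H) :
    clsOf H = clsOf M := by
  obtain ⟨g, hg⟩ := cle_iff.2 h
  refine clsOf_eq_iff.2 ⟨g, (Subgroup.eq_of_le_of_card_ge hg ?_).symm⟩
  rwa [card_conj]

lemma cle_trans {H M N : Subgroup G} (h1 : cle H M) (h2 : cle M N) : cle H N := by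
  obtain ⟨a, ha⟩ := h1
  obtain ⟨b, hb⟩ := h2
  exact ⟨b * a, fun h hh => by simpa [mul_assoc] using hb _ (ha h hh)⟩

lemma cle_of_cls {H M : Subgroup G} (h : clsOf H = clsOf M) : cle H M := by
  obtain ⟨g, rfl⟩ := clsOf_eq_iff.1 h
  exact cle_iff.1 ⟨g, le_rfl⟩

lemma clsLe_iff {H M : Subgroup G} : clsLe (clsOf H) (clsOf M) ↔ cle H M := by
  constructor
  · rintro ⟨H', M', h1, h2, h3⟩
    exact cle_trans (cle_of_cls h1.symm) (cle_trans (cle_iff.1 h3) (cle_of_cls h2))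
  · exact fun h => ⟨H, M, rfl, rfl, cle_iff.2 h⟩

lemma cls_surj (x : SubClasses G) : ∃ H, clsOf H = x := Quotient.exists_rep x

/-- The defining recursion determines the Möbius function. -/
lemma mobius_unique [Finite G] {f : SubClasses G → ℤ}
    (hf : ∀ x, (∑ᶠ y ∈ {y : SubClasses G | clsLe x y}, f y) = 0) : f = 0 := by
  by_contra hne
  obtain ⟨x, hx⟩ := Function.ne_iff.1 hne
  obtain ⟨H0, rfl⟩ := cls_surj x
  -- a class of maximal order on which `f` does not vanish
  obtain ⟨H, hH, hmax⟩ := Set.exists_max_image {H : Subgroup G | f (clsOf H) ≠ 0}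
    (fun H => Nat.card H) (Set.toFinite _) ⟨H0, hx⟩
  apply hH
  rw [← hf (clsOf H)]
  rw [finsum_mem_eq_finite_toFinset_sum _ (Set.toFinite _)]
  symm
  refine Finset.sum_eq_single (clsOf H) ?_ (fun hn => (hn ?_).elim)
  swap
  · rw [Set.Finite.mem_toFinset]
    exact clsLe_iff.2 ⟨1, by simp⟩
  intro y hy hne
  rw [Set.Finite.mem_toFinset] at hy
  obtain ⟨M, rfl⟩ := cls_surj y
  by_contra h0
  exact hne (clsOf_eq_of (clsLe_iff.1 hy) (hmax M h0)).symm

/-- If the indicator of `H = G` is a combination of indicators of `H` lying in a conjugate of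
`M i`, then the Möbius function can be read off from the coefficients. -/
lemma mobius_values [Finite G] {lam : SubClasses G → ℤ} (hlam : IsClassMobius lam) {ι : Type*}
    [Fintype ι] (M : ι → Subgroup G) (c : ι → ℤ)
    (h : ∀ H : Subgroup G, (∑ i, if cle H (M i) then c i else 0) = if H = ⊤ then 1 else 0)
    (H : Subgroup G) : lam (clsOf H) = ∑ i, if clsOf (M i) = clsOf H then c i else 0 := by
  set lam' : SubClasses G → ℤ := fun y => ∑ i, if clsOf (M i) = y then c i else 0 with hl
  have : (fun y => lam y - lam' y) = 0 := by
    apply mobius_unique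
    intro x
    rw [finsum_mem_sub_distrib _ _ (Set.toFinite _), hlam x, sub_eq_zero]
    obtain ⟨H, rfl⟩ := cls_surj x
    have e1 : (clsOf H = clsOf (⊤ : Subgroup G)) ↔ H = ⊤ := by
      refine ⟨fun h => ?_, fun h => by rw [h]⟩
      apply Subgroup.eq_top_of_card_eq
      rw [card_of_cls h, Subgroup.card_top]
    simp only [e1]
    rw [← h H, hl, finsum_mem_eq_finite_toFinset_sum _ (Set.toFinite _), Finset.sum_comm]
    refine Finset.sum_congr rfl fun i _ => ?_
    rw [Finset.sum_ite_eq]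
    simp [clsLe_iff]
  have := congrFun this (clsOf H)
  simpa [sub_eq_zero] using this

lemma cle_comap {G' : Type*} [Group G'] (φ : G ≃* G') {H : Subgroup G} {M : Subgroup G'} :
    cle H (M.comap φ.toMonoidHom) ↔ cle (H.map φ.toMonoidHom) M := by
  constructor
  · rintro ⟨g, hg⟩
    refine ⟨φ g, ?_⟩
    rintro _ ⟨h, hh, rfl⟩
    simpa using hg h hh
  · rintro ⟨g, hg⟩
    refine ⟨φ.symm g, fun h hh => ?_⟩
    simpa using hg _ ⟨h, hh, rfl⟩

end mob

/-! ### Elements without eigenvectors -/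

section noeig
variable {K : Type*} [Field K] [StarRing K] [UField K]

instance : Finite (SU K) := Subtype.finite

/-- The type of nonzero isotropic vectors. -/
abbrev IsoV (K : Type*) [Field K] [StarRing K] : Type _ := {x : V K // x ≠ 0 ∧ hf x x = 0}

lemma card_isoV : Nat.card (IsoV K) = (qq K ^ 2 - 1) * (qq K ^ 3 + 1) := by
  obtain ⟨u, v, w, H⟩ := exists_hyp (K := K)
  have hT : ∀ m : Fx K, ∃ x : K, x + star x = m := fun m => tr_surj m.2
  choose T hT using hT
  let nm : K → Fx K := fun c => ⟨c * star c, nm_mem c⟩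
  let f : (Kˣ × K × Fx K) ⊕ Kˣ → IsoV K := Sum.elim
    (fun y => ⟨((T (nm y.2.1) + y.2.2) * (star (y.1 : K))⁻¹) • u + (y.1 : K) • v + y.2.1 • w, by
      have hb : (star (y.1 : K)) ≠ 0 := by simp
      refine ⟨fun h => ?_, ?_⟩
      · have := congrArg (fun z => hf z u) h
        simp [H.uu, H.vu, H.wu] at this
      · have h1 := hT (nm y.2.1)
        have h2 : star (y.2.2 : K) = y.2.2 := y.2.2.2
        simp [H.uu, H.vu, H.wu, H.uv, H.vv, H.wv, H.uw, H.vw, H.ww, h2]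
        field_simp
        have h3 := c2 (K := K) (y.2.2 : K)
        have h4 := c2 (K := K) (nm y.2.1 : K)
        have h5 : (nm y.2.1 : K) = y.2.1 * star y.2.1 := rfl
        linear_combination h1 + h3 + h4 - h5⟩)
    (fun a => ⟨(a : K) • u, by simp [H.u_ne], by simp [H.uu]⟩)
  have hbij : Function.Bijective f := by
    constructor
    · rintro (⟨b, c, s⟩ | a) (⟨b', c', s'⟩ | a') h
      · have h0 := congrArg Subtype.val h
        have e1 := congrArg (fun z => hf z u) h0
        have e2 := congrArg (fun z => hf z v) h0
        have e3 := congrArg (fun z => hf z w) h0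
        simp [f, H.uu, H.vu, H.wu, H.uv, H.vv, H.wv, H.uw, H.vw, H.ww] at e1 e2 e3
        obtain ⟨e1, e3⟩ : b = b' ∧ c = c' := ⟨Units.ext e1, e3⟩
        subst e1 e3
        simpa using e2
      · have h0 := congrArg Subtype.val h
        have e1 := congrArg (fun z => hf z u) h0
        simp [f, H.uu, H.vu, H.wu, H.uv, H.vv, H.wv, H.uw, H.vw, H.ww] at e1
      · have h0 := congrArg Subtype.val h
        have e1 := congrArg (fun z => hf z u) h0
        simp [f, H.uu, H.vu, H.wu, H.uv, H.vv, H.wv, H.uw, H.vw, H.ww] at e1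
        exact absurd e1.symm b'.ne_zero
      · have h0 := congrArg Subtype.val h
        have e1 := congrArg (fun z => hf z v) h0
        simp [f, H.uu, H.vu, H.wu, H.uv, H.vv, H.wv, H.uw, H.vw, H.ww] at e1
        rw [Units.ext e1]
    · rintro ⟨x, hx0, hx⟩
      have hxx := H.hf_eq x x
      rw [hx, hf_comm_of (rfl : hf x v = _), hf_comm_of (rfl : hf x u = _),
        hf_comm_of (rfl : hf x w = _)] at hxx
      by_cases hb : hf x u = 0
      · have hc : hf x w = 0 := nm_zero.1 (by rw [hb] at hxx; simpa using hxx.symm)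
        have ha : hf x v ≠ 0 := by
          intro ha
          apply hx0
          rw [H.expand x, ha, hb, hc]; simp
        refine ⟨Sum.inr (Units.mk0 _ ha), Subtype.ext ?_⟩
        change hf x v • u = x
        conv_rhs => rw [H.expand x, hb, hc]
        simp
      · have hb' : star (hf x u) ≠ 0 := fun h => hb (star_eq_zero.1 h)
        refine ⟨Sum.inl (Units.mk0 _ hb, hf x w,
          ⟨hf x v * star (hf x u) - T (nm (hf x w)), ?_⟩), Subtype.ext ?_⟩
        · have h1 := hT (nm (hf x w))
          have h5 : (nm (hf x w) : K) = hf x w * star (hf x w) := rfl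
          rw [mem_Fx, star_sub, star_mul', star_star]
          have h6 := c2 (K := K) (T (nm (hf x w)))
          have h7 := c2 (K := K) (hf x v * star (hf x u))
          have h8 := c2 (K := K) (hf x w * star (hf x w))
          linear_combination h6 - h1 + h5 - hxx - h7 - h8
        · change ((T (nm (hf x w)) + (hf x v * star (hf x u) - T (nm (hf x w)))) *
            (star (hf x u))⁻¹) • u + hf x u • v + hf x w • w = x
          conv_rhs => rw [H.expand x]
          rw [add_sub_cancel, mul_assoc, mul_inv_cancel₀ hb', mul_one]
  rw [← Nat.card_congr (Equiv.ofBijective f hbij), Nat.card_sum, Nat.card_prod, Nat.card_prod,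
    Nat.card_units, card_K, card_Fx]
  ring

/-- `q² - q + 1` divides the order of `SU K`. -/
lemma dvd_card : qq K ^ 2 - qq K + 1 ∣ Nat.card (SU K) := by
  let _ : MulAction (SU K) (IsoV K) :=
    { smul := fun g x => ⟨ac g x.1, by simpa using x.2.1, by rw [hf_ac]; exact x.2.2⟩
      one_smul := fun x => Subtype.ext (ac_one _)
      mul_smul := fun g h x => Subtype.ext (ac_mul _ _ _) }
  obtain ⟨u, v, w, H⟩ := exists_hyp (K := K)
  let x0 : IsoV K := ⟨u, H.u_ne, H.uu⟩
  have h1 : MulAction.orbit (SU K) x0 = Set.univ := by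
    ext y
    simp only [Set.mem_univ, iff_true]
    obtain ⟨g, hg⟩ := tv_one_conj H.u_ne H.uu y.2.1 y.2.2
    exact ⟨g, Subtype.ext hg⟩
  have h2 := Nat.card_congr (MulAction.orbitProdStabilizerEquivGroup (SU K) x0)
  rw [Nat.card_prod, h1, Nat.card_congr (Equiv.Set.univ _), card_isoV] at h2
  rw [← h2]
  have h3 : qq K ^ 3 + 1 = (qq K ^ 2 - qq K + 1) * (qq K + 1) := by
    have : qq K ≤ qq K ^ 2 := Nat.le_self_pow two_ne_zero _
    zify [this]; ring
  rw [h3]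
  exact ((Dvd.intro _ rfl).mul_left _).mul_right _

/-- `g` has no eigenvector. -/
def NoEig (g : SU K) : Prop := ∀ x : V K, x ≠ 0 → ∀ k : K, ac g x ≠ k • x

lemma root_one {k : K} {m : ℕ} (hm : Nat.Coprime m (qq K ^ 2 - 1)) (h : k ^ m = 1) : k = 1 := by
  have hk : k ≠ 0 := by
    rintro rfl
    by_cases h0 : m = 0
    · subst h0
      have := qq_ge K
      have h3 : qq K ^ 2 - 1 ≠ 1 := by
        have : 16 ≤ qq K ^ 2 := by nlinarith
        omega
      exact h3 (by simpa using hm)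
    · simp [h0] at h
  have h1 : k ^ (qq K ^ 2 - 1) = 1 := by
    have h2 : (Units.mk0 k hk) ^ (qq K ^ 2 - 1) = 1 := by
      rw [← card_K K, ← Nat.card_units]; exact pow_card_eq_one'
    simpa using congrArg Units.val h2
  have h2 := orderOf_dvd_of_pow_eq_one h
  have h3 := orderOf_dvd_of_pow_eq_one h1
  have h4 := Nat.dvd_gcd h2 h3
  rw [hm] at h4
  exact orderOf_eq_one_iff.1 (Nat.dvd_one.1 h4)

lemma ac_pow_smul {g : SU K} {x : V K} {k : K} (h : ac g x = k • x) (m : ℕ) :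
    ac (g ^ m) x = k ^ m • x := by
  induction m with
  | zero => simp
  | succ m ih => rw [pow_succ, ac_mul, h, map_smul, ih, smul_smul, pow_succ']

/-- An element of order prime to `q² - 1` fixing an isotropic vector is unipotent. -/
lemma uni {c v w : V K} (H : Hyp c v w) {g : SU K} (hc : ac g c = c) {m : ℕ}
    (hm : Nat.Coprime m (qq K ^ 2 - 1)) (h : g ^ m = 1) :
    ∃ α : K, ac g w = w + α • c ∧ g * g = tv c (α * star α) := by
  have e1 : hf (ac g w) c = 0 := by
    have := hf_ac g w c
    rwa [hc, H.wu] at this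
  have e2 := H.expand (ac g w)
  rw [e1, zero_smul, add_zero] at e2
  set α := hf (ac g w) v
  set κ := hf (ac g w) w
  have e3 : ∀ n, hf (ac (g ^ n) w) w = κ ^ n := by
    intro n
    have hcn : ∀ n, ac (g ^ n) c = c := fun n => by
      have := ac_pow_smul (g := g) (x := c) (k := 1) (by rw [hc, one_smul]) n
      simpa using this
    induction n with
    | zero => simp [H.ww]
    | succ n ih =>
      rw [pow_succ, ac_mul, e2, map_add, map_smul, map_smul, hcn]
      simp only [hf_add_left, hf_smul_left, H.uw, ih, pow_succ]
      ring
  have hκ : κ = 1 := root_one hm (by rw [← e3, h, ac_one, H.ww])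
  rw [hκ, one_smul] at e2
  have e4 : hf (ac g v) c = 1 := by
    have := hf_ac g v c
    rwa [hc, H.vu] at this
  have e5 := H.expand (ac g v)
  rw [e4, one_smul] at e5
  have e6 : hf (ac g v) w = star α := by
    have := hf_ac g v w
    rw [e2] at this
    simp [e4, H.vw] at this
    exact (add_eq_zero'.1 this).symm
  rw [e6] at e5
  generalize hf (ac g v) v = β at e5
  refine ⟨α, by rw [e2, add_comm], ?_⟩
  refine H.ac_ext ?_ ?_ ?_
  · rw [ac_mul, hc, hc, tv_apply H.uu (nm_mem _)]; simp [H.uu]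
  · rw [ac_mul, tv_apply H.uu (nm_mem _), H.vu, e5]
    simp only [map_add, map_smul, hc]
    rw [e5, e2]
    calc _ = (β • c + β • c) + v + (star α • w + star α • w) + (star α * α) • c := by module
      _ = _ := by rw [vc2, vc2]; simp [mul_comm]
  · rw [ac_mul, tv_apply H.uu (nm_mem _), H.wu, e2]
    simp only [map_add, map_smul, hc]
    rw [e2]
    calc _ = (α • c + α • c) + w := by abel
      _ = _ := by rw [vc2]; simp

lemma uni_four {c v w : V K} (H : Hyp c v w) {g : SU K} (hc : ac g c = c) {m : ℕ}
    (hm : Nat.Coprime m (qq K ^ 2 - 1)) (h : g ^ m = 1) : g ^ 4 = 1 := by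
  obtain ⟨α, -, h2⟩ := uni H hc hm h
  rw [show 4 = 2 * 2 from rfl, pow_mul, pow_two g, h2, pow_two, tv_sq H.uu (nm_mem _)]

lemma pow_coprime {G : Type*} [Group G] {g : G} {m n : ℕ} (h : Nat.Coprime m n) (hm : g ^ m = 1)
    (hn : g ^ n = 1) : g = 1 := by
  have h4 := Nat.dvd_gcd (orderOf_dvd_of_pow_eq_one hm) (orderOf_dvd_of_pow_eq_one hn)
  rw [h] at h4
  exact orderOf_eq_one_iff.1 (Nat.dvd_one.1 h4)

/-- An element of odd prime order not dividing `q² - 1` has no eigenvector. -/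
lemma noEig_of_prime {p : ℕ} (hp : p.Prime) (hp2 : p ≠ 2) (hpq : ¬ p ∣ qq K ^ 2 - 1) {g : SU K}
    (hg : g ^ p = 1) (hg1 : g ≠ 1) : NoEig g := by
  have hcop : Nat.Coprime p (qq K ^ 2 - 1) := (Nat.Prime.coprime_iff_not_dvd hp).2 hpq
  have hp4 : Nat.Coprime p 4 := by
    rw [show 4 = 2 ^ 2 from rfl]
    exact Nat.Coprime.pow_right _ ((Nat.coprime_primes hp Nat.prime_two).2 hp2)
  have key : ∀ c : V K, c ≠ 0 → hf c c = 0 → ac g c ≠ c := by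
    intro c hc0 hc hgc
    obtain ⟨v, w, H⟩ := exists_hyp_of_iso hc0 hc
    exact hg1 (pow_coprime hp4 hg (uni_four H hgc hcop hg))
  intro x hx k hk
  have hk1 : k = 1 := by
    refine root_one hcop ?_
    have := ac_pow_smul hk p
    rw [hg, ac_one] at this
    have h2 : (k ^ p - 1) • x = 0 := by rw [sub_smul, one_smul, ← this, sub_self]
    exact sub_eq_zero.1 ((smul_eq_zero.1 h2).resolve_right hx)
  rw [hk1, one_smul] at hk
  by_cases hxx : hf x x = 0
  · exact key x hx hxx hk
  obtain ⟨l, hl, hl1⟩ := normalize hxx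
  set w := l • x
  have hgw : ac g w = w := by rw [map_smul, hk]
  obtain ⟨u, v, H⟩ := exists_hyp_of_unit hl1
  obtain ⟨a, b, c, d, ha, hb, hc, hd, -, hgu, hgv⟩ := su2 H hgw
  -- a fixed vector in the `Fx K`-plane spanned by `u` and `v`
  let S := {y : Fx K × Fx K // y ≠ 0}
  let φ : Fx K × Fx K → V K := fun y => (y.1 : K) • u + (y.2 : K) • v
  have hφ : Function.Injective φ := by
    rintro ⟨y1, y2⟩ ⟨z1, z2⟩ h
    have e1 := congrArg (fun z => hf z u) h
    have e2 := congrArg (fun z => hf z v) h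
    simp [φ, H.uu, H.vu, H.uv, H.vv] at e1 e2
    rw [e1, e2]
  let a' : Fx K := ⟨a, ha⟩
  let b' : Fx K := ⟨b, hb⟩
  let c' : Fx K := ⟨c, hc⟩
  let d' : Fx K := ⟨d, hd⟩
  let F : Fx K × Fx K → Fx K × Fx K := fun y => (y.1 * a' + y.2 * c', y.1 * b' + y.2 * d')
  have hF : ∀ y, φ (F y) = ac g (φ y) := by
    intro y
    simp only [φ, F, map_add, map_smul, hgu, hgv]
    push_cast
    simp only [a', b', c', d']
    module
  have hφ0 : φ 0 = 0 := by simp [φ]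
  have hF0 : ∀ y, y ≠ 0 → F y ≠ 0 := by
    intro y hy h0
    have := hF y
    rw [h0, hφ0, eq_comm, ac_eq_zero, ← hφ0] at this
    exact hy (hφ this)
  let f : Function.End S := fun y => ⟨F y.1, hF0 _ y.2⟩
  have hf' : ∀ n (y : S), φ ((f ^ n) y).1 = ac (g ^ n) (φ y.1) := by
    intro n
    induction n with
    | zero => intro y; rw [pow_zero, pow_zero, ac_one]; rfl
    | succ n ih =>
      intro y
      rw [pow_succ', pow_succ', ac_mul, ← ih, ← hF]; rfl
  have hfp : f ^ p ^ 1 = 1 := by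
    funext y
    apply Subtype.ext
    apply hφ
    rw [hf', pow_one, hg, ac_one]; rfl
  have : Fact p.Prime := ⟨hp⟩
  let _ : Fintype S := Fintype.ofFinite S
  have hmod := Equiv.Perm.card_fixedPoints_modEq hfp
  have hS : Fintype.card S = qq K ^ 2 - 1 := by
    have h1 : Nat.card S = Nat.card (Fx K × Fx K) - 1 := by
      have := Set.ncard_compl ({0} : Set (Fx K × Fx K))
      rw [Set.ncard_singleton] at this
      rw [← this]; rfl
    rw [← Nat.card_eq_fintype_card, h1, Nat.card_prod, card_Fx, pow_two]
  rw [hS] at hmod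
  have hne : Nonempty (f.fixedPoints) := by
    by_contra h
    rw [not_nonempty_iff] at h
    rw [Fintype.card_eq_zero] at hmod
    exact hpq ((Nat.modEq_zero_iff_dvd).1 hmod)
  obtain ⟨y, hy⟩ := hne
  refine key (φ y.1) ?_ ?_ ?_
  · rw [← hφ0]; exact fun h => y.2 (hφ h)
  · have h1 : star (y.1.1 : K) = y.1.1 := y.1.1.2
    have h2 : star (y.1.2 : K) = y.1.2 := y.1.2.2
    simp [φ, H.uu, H.vu, H.uv, H.vv, h1, h2]
    rw [mul_comm, c2]
  · rw [← hF]
    exact congrArg (fun z : S => φ z.1) hy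

/-- A prime `p ≥ 5` dividing `q² - q + 1` and not `q² - 1`. -/
lemma exists_p0 : ∃ p : ℕ, p.Prime ∧ 5 ≤ p ∧ p ∣ qq K ^ 2 - qq K + 1 ∧ ¬ p ∣ qq K ^ 2 - 1 := by
  have hq := qq_ge K
  have hle : qq K ≤ qq K ^ 2 := Nat.le_self_pow two_ne_zero _
  obtain ⟨p, hp, hd⟩ := Nat.exists_prime_and_dvd (n := qq K ^ 2 - qq K + 1) (by
    have : 4 * qq K ≤ qq K ^ 2 := by nlinarith
    omega)
  have hZ : (p : ℤ) ∣ (qq K : ℤ) ^ 2 - qq K + 1 := by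
    have := Int.natCast_dvd_natCast.2 hd
    push_cast [hle] at this
    exact this
  have hpZ : Prime (p : ℤ) := Nat.prime_iff_prime_int.1 hp
  have h3 : p ≠ 3 := by
    rintro rfl
    have h1 := qq_mod K
    obtain ⟨k, hk⟩ : ∃ k, qq K = 3 * k + 1 := ⟨qq K / 3, by omega⟩
    rw [hk] at hZ
    push_cast at hZ
    obtain ⟨m, hm⟩ := hZ
    have : (1 : ℤ) = 3 * (m - 3 * k ^ 2 - k) := by linear_combination hm
    omega
  have h2 : p ≠ 2 := by
    rintro rfl
    obtain ⟨k, hk⟩ := Nat.dvd_of_mod_eq_zero (qq_even K)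
    rw [hk] at hZ
    push_cast at hZ
    obtain ⟨m, hm⟩ := hZ
    have : (1 : ℤ) = 2 * (m - 2 * k ^ 2 + k) := by linear_combination hm
    omega
  refine ⟨p, hp, ?_, hd, ?_⟩
  · have := hp.two_le
    have h4 : p ≠ 4 := by rintro rfl; norm_num at hp
    omega
  · intro hd2
    have hZ2 : (p : ℤ) ∣ ((qq K : ℤ) - 1) * (qq K + 1) := by
      have := Int.natCast_dvd_natCast.2 hd2
      push_cast [Nat.one_le_pow 2 (qq K) (by omega)] at this
      rwa [show (qq K : ℤ) ^ 2 - 1 = (qq K - 1) * (qq K + 1) by ring] at this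
    rcases hpZ.dvd_or_dvd hZ2 with h | h
    · have : (p : ℤ) ∣ 1 := by
        have := dvd_sub hZ (h.mul_right (qq K : ℤ))
        rwa [show (qq K : ℤ) ^ 2 - qq K + 1 - (qq K - 1) * qq K = 1 by ring] at this
      exact hpZ.not_isUnit (isUnit_of_dvd_one this)
    · have : (p : ℤ) ∣ 3 := by
        have := dvd_sub hZ (h.mul_right ((qq K : ℤ) - 2))
        rwa [show (qq K : ℤ) ^ 2 - qq K + 1 - (qq K + 1) * (qq K - 2) = 3 by ring] at this
      have := Int.natCast_dvd_natCast.1 (by exact_mod_cast this : (p : ℤ) ∣ (3 : ℕ))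
      exact h3 ((Nat.prime_dvd_prime_iff_eq hp Nat.prime_three).1 this)

/-- There is an element of prime order at least five without eigenvectors. -/
lemma exists_noEig {p : ℕ} (hp : p.Prime) (h5 : 5 ≤ p) (hd : p ∣ qq K ^ 2 - qq K + 1)
    (hnd : ¬ p ∣ qq K ^ 2 - 1) : ∃ z : SU K, orderOf z = p ∧ NoEig z := by
  have : Fact p.Prime := ⟨hp⟩
  obtain ⟨z, hz⟩ := exists_prime_orderOf_dvd_card' (G := SU K) p (hd.trans dvd_card)
  refine ⟨z, hz, noEig_of_prime hp (by omega) hnd (by rw [← hz, pow_orderOf_eq_one]) ?_⟩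
  rintro rfl
  rw [orderOf_one] at hz
  omega

end noeig

/-! ### Centralizers of elements without eigenvectors -/

section fin_domain

lemma fin_dom_pow {R : Type*} [Ring R] [IsDomain R] [Finite R] {x : R} (hx : x ≠ 0) :
    x ^ (Nat.card R - 1) = 1 := by
  let _ := (Finite.isDomain_to_isField R).toField
  have h2 : (Units.mk0 x hx) ^ (Nat.card R - 1) = 1 := by
    rw [← Nat.card_units]; exact pow_card_eq_one'
  simpa using congrArg Units.val h2

lemma fin_dom_cauchy {R : Type*} [Ring R] [IsDomain R] [Finite R] {p : ℕ} (hp : p.Prime)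
    (h : p ∣ Nat.card R - 1) : ∃ x : R, x ^ p = 1 ∧ x ≠ 1 := by
  let _ := (Finite.isDomain_to_isField R).toField
  have : Fact p.Prime := ⟨hp⟩
  rw [← Nat.card_units] at h
  obtain ⟨x, hx⟩ := exists_prime_orderOf_dvd_card' p h
  refine ⟨x, ?_, ?_⟩
  · rw [← Units.val_pow_eq_pow_val, ← hx, pow_orderOf_eq_one]; rfl
  · intro h1
    have : x = 1 := Units.ext h1
    rw [this, orderOf_one] at hx
    exact hp.one_lt.ne hx

end fin_domain

section cent
variable {K : Type*} [Field K] [StarRing K] [UField K]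

/-- The centralizer algebra of `g` in the full matrix algebra. -/
abbrev CR (g : SU K) : Subalgebra K (Matrix (Fin 3) (Fin 3) K) :=
  Subalgebra.centralizer K {g.1.1}

lemma mem_CR {g : SU K} {N : Matrix (Fin 3) (Fin 3) K} : N ∈ CR g ↔ g.1.1 * N = N * g.1.1 := by
  rw [Subalgebra.mem_centralizer_iff]; simp

lemma mem_CR_coe {g x : SU K} : x.1.1 ∈ CR g ↔ g * x = x * g := by
  rw [mem_CR]
  constructor
  · intro h; exact Subtype.ext (Subtype.ext h)
  · intro h; exact congrArg (fun y : SU K => y.1.1) h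

lemma NoEig.no_line {g : SU K} (hg : NoEig g) {W : Submodule K (V K)}
    (hW : ∀ x ∈ W, ac g x ∈ W) : Module.finrank K W ≠ 1 := by
  intro h
  obtain ⟨x, hx0, hx⟩ := finrank_eq_one_iff'.1 h
  obtain ⟨k, hk⟩ := hx ⟨ac g x, hW _ x.2⟩
  exact hg x.1 (fun h => hx0 (Subtype.ext h)) k (congrArg Subtype.val hk).symm

lemma ac_mulVec (g : SU K) (x : V K) : ac g x = g.1.1.mulVec x := rfl

/-- The centralizer algebra of an element without eigenvectors acts freely. -/
lemma NoEig.inj {g : SU K} (hg : NoEig g) {N : Matrix (Fin 3) (Fin 3) K} (hN : N ∈ CR g)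
    (h0 : N ≠ 0) {x : V K} (hx : N.mulVec x = 0) : x = 0 := by
  by_contra hx0
  let f := Matrix.toLin' N
  have hgf : ∀ y, ac g (f y) = f (ac g y) := by
    intro y
    change g.1.1.mulVec (N.mulVec y) = N.mulVec (g.1.1.mulVec y)
    rw [Matrix.mulVec_mulVec, Matrix.mulVec_mulVec, mem_CR.1 hN]
  have h1 : Module.finrank K (LinearMap.range f) ≠ 1 := hg.no_line (by
    rintro _ ⟨y, rfl⟩
    exact ⟨ac g y, (hgf y).symm⟩)
  have h2 : Module.finrank K (LinearMap.ker f) ≠ 1 := hg.no_line (by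
    intro y hy
    rw [LinearMap.mem_ker] at hy ⊢
    rw [← hgf, hy, map_zero])
  have h3 := LinearMap.finrank_range_add_finrank_ker f
  rw [Module.finrank_fin_fun] at h3
  have h4 : Module.finrank K (LinearMap.range f) ≠ 0 := by
    intro h
    rw [Submodule.finrank_eq_zero, LinearMap.range_eq_bot] at h
    exact h0 (Matrix.toLin'.map_eq_zero_iff.1 h)
  have h5 : Module.finrank K (LinearMap.ker f) ≠ 0 := by
    intro h
    rw [Submodule.finrank_eq_zero] at h
    have : x ∈ LinearMap.ker f := hx
    rw [h] at this
    exact hx0 this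
  omega

lemma exists_V_ne : ∃ x : V K, x ≠ 0 := exists_ne 0

lemma NoEig.isDomain {g : SU K} (hg : NoEig g) : IsDomain (CR g) := by
  have : NoZeroDivisors (CR g) := ⟨by
    rintro ⟨a, ha⟩ ⟨b, hb⟩ h
    by_contra! h2
    have ha0 : a ≠ 0 := fun h => h2.1 (Subtype.ext h)
    have hb0 : b ≠ 0 := fun h => h2.2 (Subtype.ext h)
    obtain ⟨x, hx⟩ := exists_V_ne (K := K)
    have h3 : a * b = 0 := congrArg Subtype.val h
    have h4 : a.mulVec (b.mulVec x) = 0 := by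
      rw [Matrix.mulVec_mulVec, h3, Matrix.zero_mulVec]
    exact hx (hg.inj hb hb0 (hg.inj ha ha0 h4))⟩
  exact NoZeroDivisors.to_isDomain _

lemma NoEig.comm {g : SU K} (hg : NoEig g) {a b : Matrix (Fin 3) (Fin 3) K} (ha : a ∈ CR g)
    (hb : b ∈ CR g) : a * b = b * a := by
  have := hg.isDomain
  exact congrArg Subtype.val ((Finite.isDomain_to_isField (CR g)).mul_comm ⟨a, ha⟩ ⟨b, hb⟩)

lemma NoEig.comm' {g a b : SU K} (hg : NoEig g) (ha : g * a = a * g) (hb : g * b = b * g) :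
    a * b = b * a := by
  have := hg.comm (mem_CR_coe.2 ha) (mem_CR_coe.2 hb)
  exact Subtype.ext (Subtype.ext this)

lemma SU_scalar {x : SU K} {k : K} (h : ∀ y, ac x y = k • y) : x = 1 := by
  obtain ⟨e, H⟩ := exists_onb (K := K)
  have h1 := H.norm_eq (i := 0) (j := 0) (h (e 0))
  have h2 := H.prod_eq (a := fun _ => k) (fun i => h (e i))
  have h3 : k = 1 := cube_root (by rw [← h2]; ring) h1
  exact ac_inj fun y => by rw [h, h3, one_smul, ac_one]

lemma NoEig.of_comm {g x : SU K} (hg : NoEig g) (hx : g * x = x * g) (h1 : x ≠ 1) : NoEig x := by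
  intro y hy k hk
  apply h1
  have hN : x.1.1 - algebraMap K _ k ∈ CR g :=
    Subalgebra.sub_mem _ (mem_CR_coe.2 hx) (Subalgebra.algebraMap_mem _ k)
  have h2 : x.1.1 - algebraMap K _ k = 0 := by
    by_contra h0
    refine hy (hg.inj hN h0 ?_)
    rw [Matrix.sub_mulVec, ← ac_mulVec, hk, Algebra.algebraMap_eq_smul_one, Matrix.smul_mulVec,
      Matrix.one_mulVec, sub_self]
  refine SU_scalar (k := k) fun y => ?_
  rw [ac_mulVec, sub_eq_zero.1 h2, Algebra.algebraMap_eq_smul_one, Matrix.smul_mulVec,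
      Matrix.one_mulVec]

lemma NoEig.comm_iff {g x : SU K} (hg : NoEig g) (hx : g * x = x * g) (h1 : x ≠ 1) {y : SU K} :
    x * y = y * x ↔ g * y = y * g :=
  ⟨fun h => (hg.of_comm hx h1).comm' hx.symm h, fun h => hg.comm' hx h⟩

lemma NoEig.conj {g : SU K} (hg : NoEig g) (h : SU K) : NoEig (h * g * h⁻¹) := by
  intro x hx k hk
  refine hg (ac h⁻¹ x) (by simpa using hx) k ?_
  rw [ac_mul, ac_mul] at hk
  rw [← map_smul, ← hk, ac_inv_ac]

lemma charpoly_conj (g h : SU K) : (h * g * h⁻¹).1.1.charpoly = g.1.1.charpoly := by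
  have hu' : (h⁻¹).1.1 * h.1.1 = 1 := congrArg (fun y : SU K => y.1.1) (inv_mul_cancel h)
  have hm : (h * g * h⁻¹).1.1 = h.1.1 * g.1.1 * (h⁻¹).1.1 := rfl
  rw [hm, Matrix.charpoly_mul_comm, ← mul_assoc, hu', one_mul]

/-- At most three conjugates of `g` commute with `g`: they are roots of its characteristic
polynomial in the centralizer field. -/
lemma NoEig.three {g : SU K} (hg : NoEig g) : ∃ S : Finset (SU K), S.card ≤ 3 ∧
    ∀ h, g * (h * g * h⁻¹) = (h * g * h⁻¹) * g → h * g * h⁻¹ ∈ S := by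
  have := hg.isDomain
  let _ : CommRing (CR g) := { (inferInstance : Ring (CR g)) with
    mul_comm := (Finite.isDomain_to_isField (CR g)).mul_comm }
  let P := g.1.1.charpoly
  have hP : P ≠ 0 := (Matrix.charpoly_monic _).ne_zero
  let Q : Polynomial (CR g) := P.map (algebraMap K (CR g))
  have hQ : Q ≠ 0 := ((Matrix.charpoly_monic g.1.1).map _).ne_zero
  let T : Finset (SU K) := (Set.toFinite {x : SU K | ∃ y ∈ Q.roots, y.1 = x.1.1}).toFinset
  refine ⟨T, ?_, ?_⟩
  · let f : SU K → CR g := fun x => if h : x.1.1 ∈ CR g then ⟨_, h⟩ else 0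
    have h1 : T.card ≤ Q.roots.toFinset.card := by
      refine Finset.card_le_card_of_injOn f ?_ ?_
      · intro x hx
        simp only [T, Set.Finite.coe_toFinset, Set.mem_ofPred_eq] at hx
        obtain ⟨y, hy, hyx⟩ := hx
        have hx : x.1.1 ∈ CR g := hyx ▸ y.2
        have : f x = y := by simp only [f, dif_pos hx]; exact Subtype.ext hyx.symm
        rw [this]; simpa using hy
      · intro x hx x' hx' he
        simp only [T, Set.Finite.coe_toFinset, Set.mem_ofPred_eq] at hx hx'
        obtain ⟨y, hy, hyx⟩ := hx
        obtain ⟨y', hy', hyx'⟩ := hx'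
        have hx : x.1.1 ∈ CR g := hyx ▸ y.2
        have hx' : x'.1.1 ∈ CR g := hyx' ▸ y'.2
        simp only [f, dif_pos hx, dif_pos hx'] at he
        have h9 : x.1.1 = x'.1.1 := congrArg (fun y : CR g => y.1) he
        exact Subtype.ext (Subtype.ext h9)
    calc T.card ≤ _ := h1
      _ ≤ Q.roots.card := Multiset.toFinset_card_le _
      _ ≤ Q.natDegree := Polynomial.card_roots' _
      _ ≤ P.natDegree := Polynomial.natDegree_map_le
      _ = 3 := by rw [Matrix.charpoly_natDegree_eq_dim]; rfl
  · intro h hh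
    simp only [T, Set.Finite.mem_toFinset, Set.mem_ofPred_eq]
    have hm : (h * g * h⁻¹).1.1 ∈ CR g := mem_CR_coe.2 hh
    refine ⟨⟨_, hm⟩, (Polynomial.mem_roots hQ).2 ?_, rfl⟩
    rw [Polynomial.IsRoot, Polynomial.eval_map_algebraMap]
    apply Subtype.ext
    have h1 : ((Polynomial.aeval (⟨_, hm⟩ : CR g)) P : CR g).1 =
        Polynomial.aeval (h * g * h⁻¹).1.1 P := by
      have := Polynomial.aeval_algHom_apply (CR g).val (⟨_, hm⟩ : CR g) P
      exact this.symm
    rw [h1]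
    have h2 : P = (h * g * h⁻¹).1.1.charpoly := (charpoly_conj g h).symm
    rw [h2, Matrix.aeval_self_charpoly]; rfl

lemma card_V : Nat.card (V K) = qq K ^ 6 := by
  rw [Nat.card_fun, card_K, Nat.card_fin, ← pow_mul]

/-- The centralizer field has `q⁶` elements. -/
lemma NoEig.card {g : SU K} (hg : NoEig g) : Nat.card (CR g) = qq K ^ 6 := by
  have := hg.isDomain
  have hdiv := fun a => (Finite.isDomain_to_isField (CR g)).mul_inv_cancel (a := a)
  obtain ⟨v, hv⟩ := exists_V_ne (K := K)
  have hinj : ∀ x : V K, x ≠ 0 → ∀ N : CR g, N.1.mulVec x = 0 → N = 0 := by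
    intro x hx N h
    by_contra h0
    exact hx (hg.inj N.2 (fun h => h0 (Subtype.ext h)) h)
  have h1 : Function.Injective fun N : CR g => N.1.mulVec v := by
    intro N M h
    rw [← sub_eq_zero]
    refine hinj v hv _ ?_
    change (N.1 - M.1).mulVec v = 0
    rw [Matrix.sub_mulVec, sub_eq_zero]; exact h
  rw [← card_V]
  refine le_antisymm (Nat.card_le_card_of_injective _ h1) ?_
  refine Nat.card_le_card_of_surjective (fun N : CR g => N.1.mulVec v) ?_
  by_contra hs
  obtain ⟨w, hw⟩ := not_forall.1 hs
  have h2 : Function.Injective fun N : CR g × CR g => N.1.1.mulVec v + N.2.1.mulVec w := by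
    rintro ⟨N, M⟩ ⟨N', M'⟩ h
    have h3 : (N - N').1.mulVec v + (M - M').1.mulVec w = 0 := by
      change (N.1 - N'.1).mulVec v + (M.1 - M'.1).mulVec w = 0
      simp only at h
      rw [Matrix.sub_mulVec, Matrix.sub_mulVec]
      linear_combination (exp := 1) h
    have h4 : M - M' = 0 := by
      by_contra h0
      obtain ⟨L, hL⟩ := hdiv _ h0
      have hL' : L * (M - M') = 1 := by
        rw [(Finite.isDomain_to_isField (CR g)).mul_comm, hL]
      refine hw ⟨-(L * (N - N')), ?_⟩
      have h5 := congrArg (fun y => L.1.mulVec y) h3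
      simp only [Matrix.mulVec_add, Matrix.mulVec_mulVec, Matrix.mulVec_zero] at h5
      have h6 : L.1 * (M - M').1 = 1 := congrArg Subtype.val hL'
      rw [h6, Matrix.one_mulVec] at h5
      change (-(L.1 * (N - N').1)).mulVec v = w
      rw [Matrix.neg_mulVec]
      exact neg_eq_of_add_eq_zero_right h5
    have h5 : N - N' = 0 := by
      refine hinj v hv _ ?_
      rw [h4] at h3
      simpa using h3
    rw [sub_eq_zero.1 h4, sub_eq_zero.1 h5]
  have h3 := Nat.card_le_card_of_injective _ h2
  have hgm : g.1.1 ∈ CR g := mem_CR_coe.2 rfl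
  have h4 : Function.Injective fun a : K × K =>
      algebraMap K (CR g) a.1 + algebraMap K (CR g) a.2 * ⟨_, hgm⟩ := by
    rintro ⟨a, b⟩ ⟨a', b'⟩ h
    have h5 : a • v + b • ac g v = a' • v + b' • ac g v := by
      have := congrArg (fun N : CR g => N.1.mulVec v) h
      simp only at this
      change ((algebraMap K (Matrix (Fin 3) (Fin 3) K) a) + algebraMap K _ b * g.1.1).mulVec v =
        ((algebraMap K _ a') + algebraMap K _ b' * g.1.1).mulVec v at this
      simpa [Algebra.algebraMap_eq_smul_one, Matrix.add_mulVec, Matrix.smul_mulVec,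
        ac_mulVec] using this
    have hb : b = b' := by
      by_contra hb
      refine hg v hv (-((b - b')⁻¹ * (a - a'))) ?_
      have h6 : (b - b') • ac g v = -((a - a') • v) := by
        rw [sub_smul, sub_smul]; linear_combination (exp := 1) h5
      have h7 := congrArg (fun y => (b - b')⁻¹ • y) h6
      simp only [smul_smul, inv_mul_cancel₀ (sub_ne_zero.2 hb), one_smul] at h7
      rw [h7, smul_neg, smul_smul, neg_smul]
    subst hb
    have : a = a' := smul_left_injective K hv (add_right_cancel h5)
    rw [this]
  have h5 := Nat.card_le_card_of_injective _ h4
  rw [Nat.card_prod, card_K] at h5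
  rw [Nat.card_prod, card_V] at h3
  have hq := qq_ge K
  have h6 : (qq K ^ 2 * qq K ^ 2) * (qq K ^ 2 * qq K ^ 2) ≤ qq K ^ 6 :=
    (Nat.mul_le_mul h5 h5).trans h3
  have h7 : qq K ^ 6 < qq K ^ 8 := Nat.pow_lt_pow_right (by omega) (by norm_num)
  have h8 : (qq K ^ 2 * qq K ^ 2) * (qq K ^ 2 * qq K ^ 2) = qq K ^ 8 := by ring
  omega

end cent

section cent2
variable {K : Type*} [Field K] [StarRing K] [UField K]

lemma star_mem_CR {g : SU K} {N : Matrix (Fin 3) (Fin 3) K} (hN : N ∈ CR g) : star N ∈ CR g := by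
  rw [mem_CR] at hN ⊢
  have h1 : star g.1.1 * g.1.1 = 1 := Matrix.UnitaryGroup.star_mul_self g.1
  have h2 : g.1.1 * star g.1.1 = 1 := mul_eq_one_comm.1 h1
  have h3 : star N * star g.1.1 = star g.1.1 * star N := by
    rw [← star_mul, hN, star_mul]
  calc g.1.1 * star N = g.1.1 * star N * (star g.1.1 * g.1.1) := by rw [h1, mul_one]
    _ = g.1.1 * (star N * star g.1.1) * g.1.1 := by simp only [mul_assoc]
    _ = (g.1.1 * star g.1.1) * star N * g.1.1 := by rw [h3]; simp only [mul_assoc]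
    _ = star N * g.1.1 := by rw [h2, one_mul]

/-- The subring of Hermitian matrices in the centralizer field. -/
def NoEig.R0 {g : SU K} (hg : NoEig g) : Subring (CR g) where
  carrier := {N | star N.1 = N.1}
  zero_mem' := star_zero _
  one_mem' := star_one _
  add_mem' := by
    intro a b ha hb
    change star (a.1 + b.1) = a.1 + b.1
    rw [star_add, ha, hb]
  neg_mem' := by
    intro a ha
    change star (-a.1) = -a.1
    rw [star_neg, ha]
  mul_mem' := by
    intro a b ha hb
    change star (a.1 * b.1) = a.1 * b.1
    rw [star_mul, ha, hb, hg.comm b.2 a.2]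

lemma NoEig.mem_R0 {g : SU K} (hg : NoEig g) {N : CR g} : N ∈ hg.R0 ↔ star N.1 = N.1 := Iff.rfl

lemma NoEig.card_R0 {g : SU K} (hg : NoEig g) : Nat.card hg.R0 = qq K ^ 3 := by
  have hc := hg.card
  let ψ : CR g →+ CR g :=
    { toFun := fun N => ⟨N.1 + star N.1, add_mem N.2 (star_mem_CR N.2)⟩
      map_zero' := Subtype.ext (by simp)
      map_add' := fun a b => Subtype.ext (by simp; abel) }
  have c2' : ∀ N : Matrix (Fin 3) (Fin 3) K, N + N = 0 := fun N => by ext i j; exact c2 _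
  have h1 : Nat.card ψ.ker = Nat.card hg.R0 := by
    refine Nat.card_congr (Equiv.subtypeEquivRight fun N => ?_)
    change ψ N = 0 ↔ star N.1 = N.1
    rw [Subtype.ext_iff]
    change N.1 + star N.1 = 0 ↔ _
    constructor
    · intro h
      calc star N.1 = (N.1 + star N.1) + N.1 - (N.1 + N.1) := by abel
        _ = N.1 := by rw [h, c2']; simp
    · intro h; rw [h, c2']
  have h2 : Nat.card ψ.range ≤ Nat.card hg.R0 := by
    refine Nat.card_le_card_of_injective (fun N => (⟨N.1, ?_⟩ : hg.R0)) ?_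
    · obtain ⟨_, M, rfl⟩ := N
      change star (M.1 + star M.1) = M.1 + star M.1
      rw [star_add, star_star, add_comm]
    · intro a b h
      exact Subtype.ext (congrArg (fun y : hg.R0 => y.1) h)
  have h3 := ψ.ker.card_mul_index
  rw [AddSubgroup.index_ker, h1, hc] at h3
  have h4 : qq K ^ 6 ≤ Nat.card hg.R0 * Nat.card hg.R0 := by
    rw [← h3]; exact Nat.mul_le_mul_left _ h2
  obtain ⟨t, ht⟩ := tr_surj (one_mem (Fx K))
  have h5 : Function.Injective fun a : hg.R0 × hg.R0 =>
      (a.1.1 + algebraMap K (CR g) t * a.2.1 : CR g) := by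
    rintro ⟨⟨a, ha⟩, ⟨b, hb⟩⟩ ⟨⟨a', ha'⟩, ⟨b', hb'⟩⟩ h
    have e1 : a.1 + t • b.1 = a'.1 + t • b'.1 := by
      have := congrArg Subtype.val h
      change a.1 + algebraMap K _ t * b.1 = a'.1 + algebraMap K _ t * b'.1 at this
      simpa [Algebra.algebraMap_eq_smul_one] using this
    have e2 := congrArg star e1
    rw [star_add, star_add, star_smul, star_smul, hg.mem_R0.1 ha, hg.mem_R0.1 hb,
      hg.mem_R0.1 ha', hg.mem_R0.1 hb'] at e2
    have e3 : (t + star t) • b.1 = (t + star t) • b'.1 := by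
      rw [add_smul, add_smul]
      calc t • b.1 + star t • b.1 = (a.1 + t • b.1) + (a.1 + star t • b.1) - (a.1 + a.1) := by abel
        _ = (a'.1 + t • b'.1) + (a'.1 + star t • b'.1) - (a'.1 + a'.1) := by
          rw [e1, e2, c2', c2']
        _ = _ := by abel
    rw [ht, one_smul, one_smul] at e3
    rw [e3] at e1
    have hbb : b = b' := Subtype.ext e3
    have haa : a = a' := Subtype.ext (add_right_cancel e1)
    subst hbb haa
    rfl
  have h6 := Nat.card_le_card_of_injective _ h5
  rw [Nat.card_prod, hc] at h6
  have h7 : Nat.card hg.R0 ^ 2 = (qq K ^ 3) ^ 2 := by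
    rw [← pow_mul, pow_two]; exact le_antisymm h6 h4
  exact Nat.pow_left_injective two_ne_zero h7

lemma NoEig.exists_prime {g : SU K} (hg : NoEig g) {p : ℕ} (hp : p.Prime)
    (h6 : p ∣ qq K ^ 6 - 1) (h3 : ¬ p ∣ qq K ^ 3 - 1) (h2 : ¬ p ∣ qq K ^ 2 - 1) :
    ∃ x : SU K, g * x = x * g ∧ x ^ p = 1 ∧ x ≠ 1 := by
  have := hg.isDomain
  rw [← hg.card] at h6
  obtain ⟨x, hx, hx1⟩ := fin_dom_cauchy hp h6
  let sx : CR g := ⟨star x.1, star_mem_CR x.2⟩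
  have hcx : x * sx = sx * x := (Finite.isDomain_to_isField (CR g)).mul_comm _ _
  have hsx : sx ^ p = 1 := by
    apply Subtype.ext
    have := congrArg (fun y : CR g => star y.1) hx
    simp only [SubmonoidClass.coe_pow, star_pow, OneMemClass.coe_one, star_one] at this ⊢
    exact this
  have hy : (x * sx) ^ p = 1 := by
    rw [(show Commute x sx from hcx).mul_pow, hx, hsx, one_mul]
  have hmem : x * sx ∈ hg.R0 := by
    rw [hg.mem_R0]
    change star (x.1 * star x.1) = x.1 * star x.1
    rw [star_mul, star_star]
  have hy0 : (⟨x * sx, hmem⟩ : hg.R0) ≠ 0 := by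
    intro h
    have : x * sx = 0 := congrArg Subtype.val h
    rw [this, zero_pow hp.ne_zero] at hy
    exact zero_ne_one hy
  have hy1 := fin_dom_pow hy0
  rw [hg.card_R0] at hy1
  have hy2 : (x * sx) ^ (qq K ^ 3 - 1) = 1 := congrArg Subtype.val hy1
  have hone : x * sx = 1 := by
    have h4 := Nat.dvd_gcd (orderOf_dvd_of_pow_eq_one hy) (orderOf_dvd_of_pow_eq_one hy2)
    rw [(Nat.Prime.coprime_iff_not_dvd hp).2 h3] at h4
    exact orderOf_eq_one_iff.1 (Nat.dvd_one.1 h4)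
  have hu : x.1 ∈ Matrix.unitaryGroup (Fin 3) K := by
    rw [Matrix.mem_unitaryGroup_iff]; exact congrArg Subtype.val hone
  have hxp : x.1 ^ p = 1 := congrArg Subtype.val hx
  have hdet : x.1.det = 1 := by
    refine root_one ((Nat.Prime.coprime_iff_not_dvd hp).2 h2) ?_
    rw [← Matrix.det_pow, hxp, Matrix.det_one]
  let X : SU K := ⟨⟨x.1, hu⟩, hdet⟩
  refine ⟨X, mem_CR_coe.1 x.2, ?_, ?_⟩
  · exact Subtype.ext (Subtype.ext hxp)
  · intro h
    exact hx1 (Subtype.ext (congrArg (fun y : SU K => y.1.1) h))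

/-! ### The normalizer of a centralizer without eigenvectors -/

/-- The normalizer of the centralizer of an element without eigenvectors. -/
def NC (z : SU K) : Subgroup (SU K) := Subgroup.normalizer (Subgroup.centralizer {z} : Subgroup (SU K))

lemma NoEig.ne_one {g : SU K} (hg : NoEig g) : g ≠ 1 := by
  rintro rfl
  obtain ⟨x, hx⟩ := exists_V_ne (K := K)
  exact hg x hx 1 (by simp)

lemma mem_cent {z x : SU K} : x ∈ Subgroup.centralizer ({z} : Set (SU K)) ↔ z * x = x * z := by
  rw [Subgroup.mem_centralizer_singleton_iff, eq_comm]

lemma NoEig.mem_NC {z : SU K} (hz : NoEig z) {h : SU K} :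
    h ∈ NC z ↔ z * (h * z * h⁻¹) = h * z * h⁻¹ * z := by
  rw [NC, Subgroup.mem_normalizer_iff]
  constructor
  · intro H
    exact mem_cent.1 ((H z).1 (mem_cent.2 rfl))
  · intro H x
    have h1 := hz.comm_iff H (hz.conj h).ne_one (y := h * x * h⁻¹)
    rw [mem_cent, mem_cent, ← h1]
    constructor
    · intro h2
      calc h * z * h⁻¹ * (h * x * h⁻¹) = h * (z * x) * h⁻¹ := by group
        _ = _ := by rw [h2]; group
    · intro h2
      calc z * x = h⁻¹ * (h * z * h⁻¹ * (h * x * h⁻¹)) * h := by group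
        _ = _ := by rw [h2]; group

lemma NC_congr {z x : SU K} (hz : NoEig z) (hx : z * x = x * z) (h1 : x ≠ 1) : NC x = NC z := by
  have : Subgroup.centralizer ({x} : Set (SU K)) = Subgroup.centralizer {z} := by
    ext y; rw [mem_cent, mem_cent]; exact hz.comm_iff hx h1
  rw [NC, NC, this]

lemma NC_conj {z g h : SU K} (hz : NoEig z) : h ∈ NC z ↔ g * h * g⁻¹ ∈ NC (g * z * g⁻¹) := by
  rw [hz.mem_NC, (hz.conj g).mem_NC]
  have e1 : g * z * g⁻¹ * (g * h * g⁻¹ * (g * z * g⁻¹) * (g * h * g⁻¹)⁻¹) =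
    g * (z * (h * z * h⁻¹)) * g⁻¹ := by group
  have e2 : g * h * g⁻¹ * (g * z * g⁻¹) * (g * h * g⁻¹)⁻¹ * (g * z * g⁻¹) =
    g * (h * z * h⁻¹ * z) * g⁻¹ := by group
  rw [e1, e2, mul_left_inj, mul_right_inj]

lemma invol_not_noEig {s : SU K} (hs : s * s = 1) : ¬ NoEig s := by
  intro h
  obtain ⟨c, hc0, hc, rfl⟩ := exists_center hs h.ne_one
  refine h c hc0 1 ?_
  rw [tv_apply hc (one_mem _), hc]; simp

/-- A product of two involutions fixes a vector. -/
lemma invol_mul_not_noEig {s t : SU K} (hs : s * s = 1) (ht : t * t = 1) : ¬ NoEig (s * t) := by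
  intro h
  by_cases h1 : s = 1
  · subst h1; rw [one_mul] at h; exact invol_not_noEig ht h
  by_cases h2 : t = 1
  · subst h2; rw [mul_one] at h; exact invol_not_noEig hs h
  obtain ⟨c, hc0, hc, rfl⟩ := exists_center hs h1
  obtain ⟨d, hd0, hd, rfl⟩ := exists_center ht h2
  obtain ⟨w, hw0, h3, h4⟩ := exists_perp c d
  refine h w hw0 1 ?_
  rw [ac_mul, tv_apply hd (one_mem _), h4, tv_apply hc (one_mem _)]; simp [h3]

lemma NoEig.NC_no_invol {z : SU K} (hz : NoEig z) {s : SU K} (hs : s ∈ NC z) (h2 : s * s = 1) :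
    s = 1 := by
  by_contra h1
  have hsi : s⁻¹ = s := inv_eq_of_mul_eq_one_left h2
  have hc := hz.mem_NC.1 hs
  rw [hsi] at hc
  have hyc : z * (z * (s * z * s)) = z * (s * z * s) * z := by
    rw [mul_assoc z (s * z * s) z, ← hc]
  have hys : z * (s * z * s) * s = s * (z * (s * z * s)) := by
    have e : s * (s * z * s * z) = z * s * z := by
      rw [show s * (s * z * s * z) = (s * s) * z * s * z by group, h2, one_mul]
    rw [hc] 
    rw [e, ← hc, show z * (s * z * s) * s = z * s * z * (s * s) by group, h2, mul_one]
  by_cases hy1 : z * (s * z * s) = 1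
  · refine invol_mul_not_noEig (s := s) (t := s * z) h2 ?_ (by rwa [← mul_assoc, h2, one_mul])
    rw [hc] at hy1
    rw [← hy1]; group
  · have := (hz.comm_iff hyc hy1).1 hys
    exact invol_not_noEig h2 (hz.of_comm this h1)

lemma odd_of_no_invol {G : Type*} [Group G] [Finite G] (H : Subgroup G)
    (h : ∀ s ∈ H, s * s = 1 → s = 1) : Odd (Nat.card H) := by
  by_contra ho
  rw [Nat.not_odd_iff_even, even_iff_two_dvd] at ho
  obtain ⟨x, hx⟩ := exists_prime_orderOf_dvd_card' (G := H) 2 ho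
  have h1 : x ^ 2 = 1 := by rw [← hx, pow_orderOf_eq_one]
  have h2 := h x.1 x.2 (by rw [pow_two] at h1; exact congrArg Subtype.val h1)
  have : x = 1 := Subtype.ext h2
  rw [this, orderOf_one] at hx
  omega

lemma NoEig.NC_odd {z : SU K} (hz : NoEig z) : Odd (Nat.card (NC z)) :=
  odd_of_no_invol _ fun _ hs h => hz.NC_no_invol hs h

/-- Among the first three powers of an element of `NC z` one centralizes `z`. -/
lemma NoEig.NC_pow {z : SU K} (hz : NoEig z) {x : SU K} (hx : x ∈ NC z) :
    ∃ i : ℕ, 1 ≤ i ∧ i ≤ 3 ∧ z * x ^ i = x ^ i * z := by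
  obtain ⟨S, hS, h⟩ := hz.three
  have h1 : ∀ i ∈ Finset.range 4, x ^ i * z * (x ^ i)⁻¹ ∈ S := fun i _ =>
    h _ (hz.mem_NC.1 (pow_mem hx i))
  obtain ⟨i, hi, j, hj, hij, he⟩ := Finset.exists_ne_map_eq_of_card_lt_of_maps_to
    (by rw [Finset.card_range]; omega) h1
  wlog hlt : i < j generalizing i j
  · exact this j hj i hi hij.symm he.symm (by omega)
  simp only [Finset.mem_range] at hi hj
  refine ⟨j - i, by omega, by omega, ?_⟩
  have e : x ^ j = x ^ i * x ^ (j - i) := by rw [← pow_add]; congr 1; omega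
  rw [e] at he
  have he2 := congrArg (fun y => (x ^ i)⁻¹ * y * (x ^ i * x ^ (j - i))) he
  calc z * x ^ (j - i) = (x ^ i)⁻¹ * (x ^ i * z * (x ^ i)⁻¹) * (x ^ i * x ^ (j - i)) := by group
    _ = _ := by rw [he2]; group

end cent2

/-! ### Elements of prime order dividing `q² - q + 1` -/

section nc
variable {K : Type*} [Field K] [StarRing K] [UField K]

/-- An element of prime order `p ≥ 5` without eigenvectors, where `p` divides `q² - q + 1`. -/
structure Sing (p : ℕ) (z : SU K) : Prop where
  prime : p.Prime
  five : 5 ≤ p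
  dvd : p ∣ qq K ^ 2 - qq K + 1
  ndvd : ¬ p ∣ qq K ^ 2 - 1
  order : orderOf z = p
  noEig : NoEig z

variable (K) in
lemma exists_sing : ∃ (p : ℕ) (z : SU K), Sing p z := by
  obtain ⟨p, hp, h5, hd, hnd⟩ := exists_p0 (K := K)
  obtain ⟨z, hz, hn⟩ := exists_noEig hp h5 hd hnd
  exact ⟨p, z, hp, h5, hd, hnd, hz, hn⟩

lemma Sing.pow {p : ℕ} {z : SU K} (h : Sing p z) : z ^ p = 1 := by
  rw [← h.order, pow_orderOf_eq_one]

lemma Sing.dvd6 {p : ℕ} {z : SU K} (h : Sing p z) : p ∣ qq K ^ 6 - 1 ∧ ¬ p ∣ qq K ^ 3 - 1 := by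
  have hq := qq_ge K
  have hle : qq K ≤ qq K ^ 2 := Nat.le_self_pow two_ne_zero _
  have h3 : 1 ≤ qq K ^ 3 := Nat.one_le_pow _ _ (by omega)
  have e1 : qq K ^ 3 + 1 = (qq K ^ 2 - qq K + 1) * (qq K + 1) := by
    zify [hle]; ring
  have e2 : qq K ^ 6 - 1 = (qq K ^ 3 + 1) * (qq K ^ 3 - 1) := by
    zify [h3, Nat.one_le_pow 6 (qq K) (by omega)]; ring
  have h1 : p ∣ qq K ^ 3 + 1 := by rw [e1]; exact h.dvd.mul_right _
  refine ⟨by rw [e2]; exact h1.mul_right _, fun h2 => ?_⟩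
  have h4 := Nat.dvd_sub h1 h2
  have h5 : qq K ^ 3 + 1 - (qq K ^ 3 - 1) = 2 := by omega
  rw [h5] at h4
  have := Nat.le_of_dvd (by norm_num) h4
  have := h.five
  omega

/-- A Sylow subgroup containing `z` centralizes `z`. -/
lemma sylow_cent {p : ℕ} (hp : p.Prime) {z : SU K} (hz : NoEig z) (Q : Sylow p (SU K))
    (hzQ : z ∈ Q) {x : SU K} (hx : x ∈ Q) : z * x = x * z := by
  have : Fact p.Prime := ⟨hp⟩
  have : Nontrivial Q := ⟨⟨⟨z, hzQ⟩, 1, fun h => hz.ne_one (congrArg Subtype.val h)⟩⟩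
  have := Q.isPGroup'.center_nontrivial
  obtain ⟨y, hy⟩ := exists_ne (1 : Subgroup.center Q)
  have hyc := Subgroup.mem_center_iff.1 y.2
  have h1 : z * y.1.1 = y.1.1 * z := congrArg Subtype.val (hyc ⟨z, hzQ⟩)
  have h2 : x * y.1.1 = y.1.1 * x := congrArg Subtype.val (hyc ⟨x, hx⟩)
  exact (hz.comm_iff h1 (fun h => hy (Subtype.ext (Subtype.ext h)))).1 h2.symm

/-- `NC z` is strictly larger than the centralizer of `z`, by Burnside's transfer theorem. -/
lemma Sing.exists_not_cent {p : ℕ} {z : SU K} (h : Sing p z) : ∃ x ∈ NC z, z * x ≠ x * z := by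
  by_contra! hc
  have : Fact p.Prime := ⟨h.prime⟩
  have hzp : IsPGroup p (Subgroup.zpowers z) := IsPGroup.of_card (n := 1) (by
    rw [Nat.card_zpowers, h.order, pow_one])
  obtain ⟨Q, hQ⟩ := hzp.exists_le_sylow
  have hzQ : z ∈ Q := hQ (Subgroup.mem_zpowers z)
  have hN : Subgroup.normalizer (Q : Set (SU K)) ≤ Subgroup.centralizer (Q : Set (SU K)) := by
    intro g hg
    have h1 : g * z * g⁻¹ ∈ Q := (Subgroup.mem_normalizer_iff.1 hg z).1 hzQ
    have h2 := hc g (h.noEig.mem_NC.2 (sylow_cent h.prime h.noEig Q hzQ h1))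
    rw [Subgroup.mem_centralizer_iff]
    intro x hx
    exact h.noEig.comm' (sylow_cent h.prime h.noEig Q hzQ hx) h2
  have hcomp := MonoidHom.ker_transferSylow_isComplement' Q hN
  have htop : (MonoidHom.transferSylow Q hN).ker = ⊤ := by
    refine gen_tv fun c hc0 hc => ?_
    rw [MonoidHom.mem_ker]
    set y := MonoidHom.transferSylow Q hN (tv c 1)
    have h1 : y ^ 2 = 1 := by
      rw [pow_two, ← map_mul, tv_sq hc (one_mem _), map_one]
    obtain ⟨k, hk⟩ := Q.isPGroup' y
    refine pow_coprime ?_ h1 hk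
    refine Nat.Coprime.pow_right _ ((Nat.coprime_primes Nat.prime_two h.prime).2 ?_)
    have := h.five
    omega
  rw [htop, Subgroup.isComplement'_top_left] at hcomp
  have : z ∈ (Q : Subgroup (SU K)) := hzQ
  rw [hcomp, Subgroup.mem_bot] at this
  exact h.noEig.ne_one this

lemma Sing.exists_three {p : ℕ} {z : SU K} (h : Sing p z) : ∃ x ∈ NC z, x ^ 3 = 1 ∧ x ≠ 1 := by
  obtain ⟨x, hx, hxc⟩ := h.exists_not_cent
  have hodd : Odd (orderOf x) := by
    refine h.noEig.NC_odd.of_dvd_nat ?_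
    rw [← Subgroup.orderOf_mk x hx]
    exact orderOf_dvd_natCard _
  have hnot : ∀ i : ℕ, z * x ^ i = x ^ i * z → ¬ Nat.Coprime (orderOf x) i := by
    intro i hi hco
    obtain ⟨m, hm⟩ := exists_pow_eq_self_of_coprime hco.symm
    have : Commute z ((x ^ i) ^ m) := (show Commute z (x ^ i) from hi).pow_right m
    rw [hm] at this
    exact hxc this
  have h3 : 3 ∣ orderOf x := by
    obtain ⟨i, h1, h2, hi⟩ := h.noEig.NC_pow hx
    have := hnot i hi
    by_contra h3
    apply this
    interval_cases i
    · simp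
    · exact Nat.coprime_two_right.2 hodd
    · exact ((Nat.Prime.coprime_iff_not_dvd Nat.prime_three).2 h3).symm
  obtain ⟨m, hm⟩ := h3
  have hpos : 0 < orderOf x := orderOf_pos x
  refine ⟨x ^ m, pow_mem hx m, ?_, ?_⟩
  · rw [← pow_mul, mul_comm, ← hm, pow_orderOf_eq_one]
  · intro h1
    have := Nat.le_of_dvd (by omega) (orderOf_dvd_of_pow_eq_one h1)
    omega

/-- `H` normalizes the centralizer of an element without eigenvectors. -/
def I4 (H : Subgroup (SU K)) : Prop := ∃ a, NoEig a ∧ H ≤ NC a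

/-- All the groups `NC a` are contained in conjugates of a single one: the centralizer of `a`
has an element of order `p`, and after conjugation this lies in a Sylow `p`-subgroup containing `z`,
hence commutes with `z`. -/
lemma Sing.I4_iff {p : ℕ} {z : SU K} (hz : Sing p z) {H : Subgroup (SU K)} :
    I4 H ↔ cle H (NC z) := by
  constructor
  · rintro ⟨a, ha, hH⟩
    obtain ⟨h6, h3⟩ := hz.dvd6
    obtain ⟨x, hax, hxp, hx1⟩ := ha.exists_prime hz.prime h6 h3 hz.ndvd
    have : Fact p.Prime := ⟨hz.prime⟩
    have hpg : ∀ y : SU K, orderOf y = p → IsPGroup p (Subgroup.zpowers y) := fun y hy =>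
      IsPGroup.of_card (n := 1) (by rw [Nat.card_zpowers, hy, pow_one])
    obtain ⟨Q, hQ⟩ := (hpg z hz.order).exists_le_sylow
    obtain ⟨P, hP⟩ := (hpg x (orderOf_eq_prime hxp hx1)).exists_le_sylow
    obtain ⟨g, hg⟩ := MulAction.exists_smul_eq (SU K) P Q
    have h1 : g * x * g⁻¹ ∈ Q := by
      rw [← hg]
      have hxP : x ∈ (P : Subgroup (SU K)) := hP (Subgroup.mem_zpowers x)
      exact Subgroup.smul_mem_pointwise_smul x (MulAut.conj g) _ hxP
    have h2 := sylow_cent hz.prime hz.noEig Q (hQ (Subgroup.mem_zpowers z)) h1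
    have hx := ha.of_comm hax hx1
    refine ⟨g, fun h hh => ?_⟩
    have h3 := hH hh
    rw [← NC_congr ha hax hx1] at h3
    rw [← NC_congr hz.noEig h2 (hx.conj g).ne_one]
    exact (NC_conj hx).1 h3
  · rintro ⟨g, hg⟩
    refine ⟨g⁻¹ * z * g⁻¹⁻¹, hz.noEig.conj _, fun h hh => ?_⟩
    have := (NC_conj (g := g⁻¹) hz.noEig).1 (hg h hh)
    rwa [show g⁻¹ * (g * h * g⁻¹) * g⁻¹⁻¹ = h by group] at this

lemma cube_not_noEig {g : SU K} (h : g ^ 3 = 1) : ¬ NoEig g := by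
  intro hg
  obtain ⟨w, hw, hw1, -, hw2⟩ := exists_omega (K := K)
  obtain ⟨u, v, e, H, -, -, he⟩ := order3 hw hw1 hw2 h hg.ne_one
  exact hg e H.w_ne 1 (by rw [he, one_smul])

lemma perm3_six : ∀ σ : Equiv.Perm (Fin 3), σ ^ 6 = 1 := by
  intro σ
  have h : Fintype.card (Equiv.Perm (Fin 3)) = 6 := by simp [Fintype.card_perm, Nat.factorial]
  rw [← h, pow_card_eq_one]

lemma mono_no_noEig {e : Fin 3 → V K} (E : Onb e) {g z : SU K} (hz : NoEig z)
    (hzg : z * g = g * z) (hg : g ∈ StF e) : g = 1 := by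
  by_contra h1
  have hg1 := hz.of_comm hzg h1
  obtain ⟨σ, hσ⟩ := hg
  have hc : ∀ n, z * g ^ n = g ^ n * z := fun n => (show Commute z g from hzg).pow_right n
  have h6 : g ^ 6 = 1 := by
    by_contra h6
    have h7 := hσ.pow 6
    rw [perm3_six] at h7
    obtain ⟨a, ha⟩ := h7.diag
    exact hz.of_comm (hc 6) h6 _ (E.ne_zero 0) _ (ha 0)
  have h3 : g ^ 3 = 1 := by
    by_contra h3
    refine invol_not_noEig ?_ (hz.of_comm (hc 3) h3)
    rw [← pow_add]; exact h6
  exact cube_not_noEig h3 hg1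

/-- The subgroups of `NC z` satisfying one of the other three conditions of `exhaust` have order
one or three: they have no nontrivial element commuting with `z`, since that would have no
eigenvector, and `NC z` has odd order and conjugates `z` to at most three elements. -/
lemma I4_iff_C3 {H : Subgroup (SU K)} : I4 H ∧ (IsoP H ∨ AniP H ∨ MonP H) ↔ C3P H := by
  constructor
  · rintro ⟨⟨z, hz, hH⟩, hR⟩
    have htriv : ∀ x ∈ H, z * x = x * z → x = 1 := by
      intro x hx hzx
      have hline : ∀ c : V K, c ≠ 0 → H ≤ StL c → x = 1 := by
        intro c hc hHc
        by_contra h1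
        obtain ⟨k, -, hk⟩ := hHc hx
        exact hz.of_comm hzx h1 c hc k hk
      rcases hR with ⟨c, hc, -, h⟩ | ⟨w, hw, h⟩ | ⟨e, E, h⟩
      · exact hline c hc h
      · exact hline w (by rintro rfl; simp at hw) h
      · exact mono_no_noEig E hz hzx (h hx)
    obtain ⟨S, hS, h3⟩ := hz.three
    have hcard : Nat.card H ≤ 3 := by
      have : Function.Injective fun h : H =>
          (⟨h.1 * z * h.1⁻¹, h3 _ (hz.mem_NC.1 (hH h.2))⟩ : S) := by
        intro a b hab
        have h1 : a.1 * z * a.1⁻¹ = b.1 * z * b.1⁻¹ := congrArg Subtype.val hab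
        have h2 : b.1⁻¹ * a.1 = 1 := by
          refine htriv _ (H.mul_mem (H.inv_mem b.2) a.2) ?_
          calc z * (b.1⁻¹ * a.1) = b.1⁻¹ * (b.1 * z * b.1⁻¹) * a.1 := by group
            _ = _ := by rw [← h1]; group
        exact Subtype.ext (inv_mul_eq_one.1 h2).symm
      have h4 := Nat.card_le_card_of_injective _ this
      rw [Nat.card_eq_finsetCard] at h4
      omega
    have hodd : Odd (Nat.card H) := hz.NC_odd.of_dvd_nat (Subgroup.card_dvd_of_le hH)
    have hpos : 0 < Nat.card H := Nat.card_pos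
    have h13 : Nat.card H = 1 ∨ Nat.card H = 3 := by
      obtain ⟨k, hk⟩ := hodd; omega
    rcases h13 with h1 | h1
    · obtain ⟨e, E⟩ := exists_onb (K := K)
      obtain ⟨g, s, hg3, hg1, -⟩ := exists_s3 E
      refine ⟨g, hg3, hg1, ?_⟩
      rw [Subgroup.card_eq_one.1 h1]; exact bot_le
    · have : Fact (Nat.Prime 3) := ⟨Nat.prime_three⟩
      obtain ⟨x, hx⟩ := exists_prime_orderOf_dvd_card' (G := H) 3 (by rw [h1])
      have hx' : orderOf x.1 = 3 := by rw [Subgroup.orderOf_coe, hx]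
      refine ⟨x.1, by have h3 := pow_orderOf_eq_one x.1; rwa [hx'] at h3, ?_, ?_⟩
      · intro h
        rw [h, orderOf_one] at hx'
        omega
      · have hle : Subgroup.zpowers x.1 ≤ H := by rw [Subgroup.zpowers_le]; exact x.2
        exact (Subgroup.eq_of_le_of_card_ge hle (by rw [Nat.card_zpowers, hx', h1])).ge
  · rintro ⟨g, h3, h1, hH⟩
    obtain ⟨w, hw, hw1, -, hw2⟩ := exists_omega (K := K)
    obtain ⟨u, v, e, E, -, -, he⟩ := order3 hw hw1 hw2 h3 h1
    refine ⟨?_, Or.inr (Or.inl ⟨e, E.ww, hH.trans ?_⟩)⟩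
    · obtain ⟨p, z, hz⟩ := exists_sing K
      rw [hz.I4_iff]
      obtain ⟨x, hx, hx3, hx1⟩ := hz.exists_three
      obtain ⟨k, hk⟩ := order3_conj h3 h1 hx3 hx1
      refine ⟨k, fun y hy => ?_⟩
      obtain ⟨i, rfl⟩ := hH hy
      simp only
      rw [← conj_zpow, hk]
      exact zpow_mem hx i
    · rw [Subgroup.zpowers_le]
      exact ⟨1, one_ne_zero, by rw [he, one_smul]⟩

end nc

/-! ### Lines fixed by `p`-groups -/

section oddp
variable {K : Type*} [Field K] [StarRing K] [UField K]

lemma card_units_K' : Nat.card Kˣ = qq K ^ 2 - 1 := by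
  rw [Nat.card_units, card_K]

/-- A `p`-group stabilizing a set `X` of nonzero vectors closed under scalars fixes a line in `X`
as soon as the number of lines in `X` is prime to `p`. -/
lemma fixed_line {p : ℕ} (hp : p.Prime) {A : Subgroup (SU K)} (hA : IsPGroup p A) (X : Set (V K))
    (h0 : (0 : V K) ∉ X) (hs : ∀ k : K, k ≠ 0 → ∀ x ∈ X, k • x ∈ X)
    (hAX : ∀ a ∈ A, ∀ x ∈ X, ac a x ∈ X) {m : ℕ} (hm : ¬ p ∣ m)
    (hc : Nat.card X = (qq K ^ 2 - 1) * m) : ∃ x ∈ X, A ≤ StL x := by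
  have : Fact p.Prime := ⟨hp⟩
  let α := {L : Submodule K (V K) // ∃ x ∈ X, L = Submodule.span K {x}}
  let _ : MulAction A α :=
    { smul := fun a L => ⟨L.1.map (ac a.1), by
        obtain ⟨x, hx, h⟩ := L.2
        exact ⟨ac a.1 x, hAX _ a.2 _ hx, by rw [h, Submodule.map_span, Set.image_singleton]⟩⟩
      one_smul := fun L => Subtype.ext (by
        change L.1.map (ac (1 : SU K)) = L.1
        rw [map_one]; exact Submodule.map_id _)
      mul_smul := fun a b L => Subtype.ext (by
        change L.1.map (ac (a.1 * b.1)) = (L.1.map (ac b.1)).map (ac a.1)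
        rw [map_mul]; exact Submodule.map_comp _ _ _) }
  have hr : ∀ L : α, ∃ x ∈ X, L.1 = Submodule.span K {x} := fun L => L.2
  choose r hrX hr using hr
  have hcard : Nat.card (α × Kˣ) = Nat.card X := by
    refine Nat.card_congr (Equiv.ofBijective
      (fun y => (⟨(y.2 : K) • r y.1, hs _ y.2.ne_zero _ (hrX _)⟩ : X)) ⟨?_, ?_⟩)
    · rintro ⟨L, k⟩ ⟨L', k'⟩ h
      have h1 : (k : K) • r L = (k' : K) • r L' := congrArg Subtype.val h
      have h2 : L = L' := by
        apply Subtype.ext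
        rw [hr L, hr L', ← Submodule.span_singleton_smul_eq k.isUnit (r L),
          ← Submodule.span_singleton_smul_eq k'.isUnit (r L'), h1]
      subst h2
      have hne : r L ≠ 0 := fun h => h0 (h ▸ hrX L)
      have h3 := smul_left_injective K hne h1
      rw [Units.ext h3]
    · rintro ⟨x, hx⟩
      let L : α := ⟨Submodule.span K {x}, x, hx, rfl⟩
      have h1 : x ∈ Submodule.span K {r L} := by
        rw [← hr L]; exact Submodule.mem_span_singleton_self x
      obtain ⟨k, hk⟩ := Submodule.mem_span_singleton.1 h1
      have hk0 : k ≠ 0 := by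
        rintro rfl
        rw [zero_smul] at hk
        exact h0 (hk ▸ hx)
      exact ⟨(L, Units.mk0 k hk0), Subtype.ext hk⟩
  rw [Nat.card_prod, card_units_K', hc, mul_comm] at hcard
  have hq := qq_ge K
  have hpos : 0 < qq K ^ 2 - 1 := by
    have : 4 ^ 2 ≤ qq K ^ 2 := Nat.pow_le_pow_left hq 2
    omega
  have hα := Nat.eq_of_mul_eq_mul_left hpos hcard
  have : Finite α := Subtype.finite
  obtain ⟨L, hL⟩ := hA.nonempty_fixed_point_of_prime_not_dvd_card α (by rwa [hα])
  have hne : r L ≠ 0 := fun h => h0 (h ▸ hrX L)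
  refine ⟨r L, hrX L, fun a ha => ?_⟩
  have h1 : L.1.map (ac a) = L.1 := congrArg Subtype.val (hL ⟨a, ha⟩)
  rw [hr L, Submodule.map_span, Set.image_singleton] at h1
  have h2 : ac a (r L) ∈ Submodule.span K {r L} := by
    rw [← h1]; exact Submodule.mem_span_singleton_self _
  obtain ⟨k, hk⟩ := Submodule.mem_span_singleton.1 h2
  exact mem_StL_of hne hk.symm

lemma hf_smul_right' (k : K) (x y : V K) : hf x (k • y) = star k * hf x y := by simp

lemma hf_add_left' (x y z : V K) : hf (x + y) z = hf x z + hf y z := by simp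

lemma hf_smul_left' (k : K) (x y : V K) : hf (k • x) y = k * hf x y := by simp

lemma hf_smul_self (k : K) (x : V K) : hf (k • x) (k • x) = k * star k * hf x x := by
  simp; ring

/-- `p`-groups with `p ∣ q - 1` fix two isotropic lines. -/
lemma type_Y {p : ℕ} (hp : p.Prime) (hp2 : p ≠ 2) (hpq : p ∣ qq K - 1) {A : Subgroup (SU K)}
    (hA : IsPGroup p A) : ∃ u v w, Hyp u v w ∧ A ≤ StL u ∧ A ≤ StL v := by
  have hq := qq_ge K
  have h1 : qq K ≡ 1 [MOD p] := ((Nat.modEq_iff_dvd' (by omega)).2 hpq).symm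
  obtain ⟨u, ⟨hu0, hu⟩, hAu⟩ := fixed_line hp hA {x | x ≠ 0 ∧ hf x x = 0} (by simp)
    (fun k hk x hx => ⟨smul_ne_zero hk hx.1, by rw [hf_smul_self, hx.2, mul_zero]⟩)
    (fun a _ x hx => ⟨by simpa using hx.1, by rw [hf_ac]; exact hx.2⟩) (m := qq K ^ 3 + 1)
    (fun h => by
      have h2 : qq K ^ 3 + 1 ≡ 1 ^ 3 + 1 [MOD p] := (h1.pow 3).add_right 1
      have h3 : p ∣ 1 ^ 3 + 1 := (h2.dvd_iff dvd_rfl).1 h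
      exact hp2 ((Nat.prime_dvd_prime_iff_eq hp Nat.prime_two).1 h3)) card_isoV
  have hcard : Nat.card {x : V K | (x ≠ 0 ∧ hf x x = 0) ∧ ∀ k : K, x ≠ k • u} =
      (qq K ^ 2 - 1) * qq K ^ 3 := by
    have e : Nat.card ({x : V K | (x ≠ 0 ∧ hf x x = 0) ∧ ∀ k : K, x ≠ k • u} ⊕ Kˣ) =
        Nat.card (IsoV K) := by
      refine Nat.card_congr (Equiv.ofBijective (Sum.elim (fun x => ⟨x.1, x.2.1⟩)
        fun k => ⟨(k : K) • u, smul_ne_zero k.ne_zero hu0, by rw [hf_smul_self, hu, mul_zero]⟩)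
        ⟨?_, ?_⟩)
      · rintro (x | k) (y | l) h
        · have h1 : x.1 = y.1 := congrArg (fun z : IsoV K => z.1) h
          exact congrArg _ (Subtype.ext h1)
        · exact absurd (congrArg Subtype.val h) (x.2.2 l)
        · exact absurd (congrArg Subtype.val h).symm (y.2.2 k)
        · exact congrArg _ (Units.ext (smul_left_injective K hu0 (congrArg Subtype.val h)))
      · rintro ⟨x, hx⟩
        by_cases h : ∃ k : K, x = k • u
        · obtain ⟨k, rfl⟩ := h
          have hk : k ≠ 0 := by rintro rfl; simp at hx
          exact ⟨Sum.inr (Units.mk0 k hk), rfl⟩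
        · push Not at h
          exact ⟨Sum.inl ⟨x, hx, h⟩, rfl⟩
    rw [Nat.card_sum, card_isoV, card_units_K', mul_add, mul_one] at e
    omega
  obtain ⟨v, ⟨⟨hv0, hv⟩, hvu⟩, hAv⟩ := fixed_line hp hA
    {x | (x ≠ 0 ∧ hf x x = 0) ∧ ∀ k : K, x ≠ k • u} (by simp)
    (fun k hk x hx => ⟨⟨smul_ne_zero hk hx.1.1, by rw [hf_smul_self, hx.1.2, mul_zero]⟩,
      fun l hl => hx.2 (k⁻¹ * l) (by rw [mul_smul, ← hl, smul_smul, inv_mul_cancel₀ hk, one_smul])⟩)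
    (fun a ha x hx => ⟨⟨by simpa using hx.1.1, by rw [hf_ac]; exact hx.1.2⟩, fun l hl => by
      obtain ⟨k, hk, h⟩ := hAu ha
      refine hx.2 (l * k⁻¹) (ac_injective a ?_)
      rw [hl, map_smul, h, smul_smul, mul_assoc, inv_mul_cancel₀ hk, mul_one]⟩) (m := qq K ^ 3)
    (fun h => by
      have h2 : qq K ^ 3 ≡ 1 ^ 3 [MOD p] := h1.pow 3
      have h3 : p ∣ 1 ^ 3 := (h2.dvd_iff dvd_rfl).1 h
      rw [one_pow] at h3
      exact hp.one_lt.ne' (Nat.dvd_one.1 h3)) hcard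
  have huv : hf u v ≠ 0 := by
    intro h
    obtain ⟨k, hk⟩ := iso_perp hu0 hu hv (hf_comm_zero h)
    exact hvu k hk
  have hk : star (hf u v)⁻¹ ≠ 0 := by rw [Ne, star_eq_zero]; exact inv_ne_zero huv
  obtain ⟨w, H⟩ := hyp_complete hu (v := star (hf u v)⁻¹ • v) (by rw [hf_smul_self, hv, mul_zero])
    (by rw [hf_smul_right', star_star, inv_mul_cancel₀ huv])
  exact ⟨u, _, w, H, hAu, by rwa [StL_smul hk]⟩

/-- The number of anisotropic vectors. -/
lemma card_aniV : Nat.card {x : V K | hf x x ≠ 0} =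
    (qq K ^ 2 - 1) * (qq K ^ 2 * (qq K ^ 2 - qq K + 1)) := by
  have e : Nat.card ({x : V K | hf x x ≠ 0} ⊕ IsoV K ⊕ Unit) = Nat.card (V K) := by
    refine Nat.card_congr (Equiv.ofBijective
      (Sum.elim (fun x => x.1) (Sum.elim (fun x => x.1) fun _ => 0)) ⟨?_, ?_⟩)
    · rintro (x | x | x) (y | y | y) h
      · exact congrArg _ (Subtype.ext h)
      · exact absurd (by rw [show x.1 = y.1 from h]; exact y.2.2) x.2
      · exact absurd (by rw [show x.1 = 0 from h]; simp) x.2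
      · exact absurd (by rw [show y.1 = x.1 from h.symm]; exact x.2.2) y.2
      · exact congrArg _ (congrArg _ (Subtype.ext h))
      · exact absurd h x.2.1
      · exact absurd (by rw [show y.1 = 0 from h.symm]; simp) y.2
      · exact absurd h.symm y.2.1
      · rfl
    · intro x
      by_cases h : hf x x = 0
      · by_cases h0 : x = 0
        · exact ⟨Sum.inr (Sum.inr ()), h0.symm⟩
        · exact ⟨Sum.inr (Sum.inl ⟨x, h0, h⟩), rfl⟩
      · exact ⟨Sum.inl ⟨x, h⟩, rfl⟩
  rw [Nat.card_sum, Nat.card_sum, card_isoV, card_V, show Nat.card Unit = 1 from Nat.card_unique] at e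
  have hq := qq_ge K
  have h1 : 1 ≤ qq K ^ 2 := Nat.one_le_pow _ _ (by omega)
  have h2 : qq K ≤ qq K ^ 2 := Nat.le_self_pow two_ne_zero _
  zify [h1, h2] at e ⊢
  linear_combination e

/-- The number of anisotropic vectors orthogonal to an anisotropic vector. -/
lemma card_aniP {w : V K} (hw : hf w w = 1) : Nat.card {x : V K | hf x x ≠ 0 ∧ hf x w = 0} =
    (qq K ^ 2 - 1) * (qq K ^ 2 - qq K) := by
  obtain ⟨u, v, H⟩ := exists_hyp_of_unit hw
  have h1 : Nat.card {c : K // c ∉ Fx K} = qq K ^ 2 - qq K := by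
    have e := Nat.card_congr (Equiv.sumCompl (fun c : K => c ∈ Fx K))
    rw [Nat.card_sum, card_K K] at e
    have : Nat.card {c : K // c ∈ Fx K} = qq K := card_Fx K
    omega
  rw [← h1, ← card_units_K', ← Nat.card_prod]
  symm
  refine Nat.card_congr (Equiv.ofBijective (fun y => ⟨(y.1 : K) • u +
    (star (y.2.1 / y.1)) • v, ?_, ?_⟩) ⟨?_, ?_⟩)
  · have hb : (y.1 : K) ≠ 0 := y.1.ne_zero
    have hb' : star (y.1 : K) ≠ 0 := by simpa using hb
    have h : hf ((y.1 : K) • u + (star (y.2.1 / y.1)) • v) ((y.1 : K) • u +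
        (star (y.2.1 / y.1)) • v) = y.2.1 + star y.2.1 := by
      simp [H.uu, H.uv, H.vv, H.vu]
      field_simp
      ring
    rw [h]
    intro h0
    exact y.2.2 (add_eq_zero'.1 h0).symm
  · simp [H.uw, H.vw]
  · rintro ⟨a, c⟩ ⟨b, d⟩ h
    have h1 := congrArg Subtype.val h
    have h2 := congrArg (fun z => hf z v) h1
    have h3 := congrArg (fun z => hf z u) h1
    simp [H.uu, H.uv, H.vv, H.vu] at h2 h3
    have h2 := Units.ext h2
    subst h2
    have hb : star (a : K) ≠ 0 := by simp
    rw [div_left_inj' hb] at h3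
    have := star_injective h3
    rw [Subtype.ext this]
  · rintro ⟨x, hx, hxw⟩
    have h2 := H.hf_eq x x
    rw [hxw, zero_mul, add_zero] at h2
    have ha : hf x v ≠ 0 := by
      intro h
      have h' : hf v x = 0 := hf_comm_zero h
      rw [h, h'] at h2; simp at h2; exact hx h2
    refine ⟨(Units.mk0 _ ha, ⟨hf u x * hf x v, fun h => hx ?_⟩), Subtype.ext ?_⟩
    · have h3 : star (hf u x * hf x v) = hf u x * hf x v := h
      simp at h3
      rw [h2, add_eq_zero']
      rw [mul_comm (hf x v), ← h3, mul_comm]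
    · simp only [Units.val_mk0]
      rw [mul_div_assoc, div_self ha, mul_one, hf_star]
      conv_rhs => rw [H.expand x, hxw, zero_smul, add_zero]

/-- `p`-groups with `p ∣ q + 1`, `p ≠ 3`, are diagonal on an orthonormal basis. -/
lemma type_D {p : ℕ} (hp : p.Prime) (hp2 : p ≠ 2) (hp3 : p ≠ 3) (hpq : p ∣ qq K + 1)
    {A : Subgroup (SU K)} (hA : IsPGroup p A) : ∃ e : Fin 3 → V K, Onb e ∧ ∀ i, A ≤ StL (e i) := by
  have hq := qq_ge K
  have hle : qq K ≤ qq K ^ 2 := Nat.le_self_pow two_ne_zero _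
  have hpq' : ((qq K : ℤ) : ZMod p) = -1 := by
    have : ((qq K + 1 : ℕ) : ZMod p) = 0 := (ZMod.natCast_eq_zero_iff _ _).2 hpq
    push_cast at this ⊢
    linear_combination this
  have h3' : ∀ k : ℕ, p ∣ k → k = 3 ∨ k = 2 ∨ k = 1 → False := by
    rintro k hk (rfl | rfl | rfl)
    · exact hp3 ((Nat.prime_dvd_prime_iff_eq hp Nat.prime_three).1 hk)
    · exact hp2 ((Nat.prime_dvd_prime_iff_eq hp Nat.prime_two).1 hk)
    · exact hp.one_lt.ne' (Nat.dvd_one.1 hk)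
  obtain ⟨w, hw, hAw⟩ := fixed_line hp hA {x | hf x x ≠ 0} (by simp)
    (fun k hk x hx => by
      change hf _ _ ≠ 0
      rw [hf_smul_self]; exact mul_ne_zero (by simp [hk]) hx)
    (fun a _ x hx => by change hf _ _ ≠ 0; rw [hf_ac]; exact hx) (fun h => by
      rw [← ZMod.natCast_eq_zero_iff] at h
      push_cast [hle] at h
      push_cast at hpq'
      rw [hpq'] at h
      refine h3' 3 ?_ (by simp)
      rw [← ZMod.natCast_eq_zero_iff]
      push_cast; linear_combination h) card_aniV
  obtain ⟨k, hk, hw1⟩ := normalize hw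
  rw [← StL_smul hk] at hAw
  set w' := k • w with hw'
  obtain ⟨x, ⟨hx, hxw⟩, hAx⟩ := fixed_line hp hA {x | hf x x ≠ 0 ∧ hf x w' = 0} (by simp)
    (fun k hk x hx => ⟨by rw [hf_smul_self]; exact mul_ne_zero (by simp [hk]) hx.1, by
      rw [hf_smul_left', hx.2, mul_zero]⟩)
    (fun a ha x hx => ⟨by rw [hf_ac]; exact hx.1, by
      obtain ⟨l, hl, h⟩ := hAw ha
      have h1 := hf_ac a x w'
      rw [h, hx.2, hf_smul_right'] at h1
      exact (mul_eq_zero.1 h1).resolve_left (by simpa using hl)⟩) (fun h => by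
      rw [← ZMod.natCast_eq_zero_iff] at h
      push_cast [hle] at h
      push_cast at hpq'
      rw [hpq'] at h
      refine h3' 2 ?_ (by simp)
      rw [← ZMod.natCast_eq_zero_iff]
      push_cast; linear_combination h) (card_aniP hw1)
  obtain ⟨l, hl, hx1⟩ := normalize hx
  rw [← StL_smul hl] at hAx
  obtain ⟨y, E⟩ := exists_onb_of_two hx1 hw1 (by rw [hf_smul_left', hxw, mul_zero])
  refine ⟨_, E, fun i => ?_⟩
  fin_cases i
  · exact hAx
  · intro a ha
    obtain ⟨s, hs, h1⟩ := hAx ha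
    obtain ⟨t, ht, h2⟩ := hAw ha
    have h3 := hf_ac a y (l • x)
    have h4 := hf_ac a y w'
    have hE0 := E 1 0
    have hE2 := E 1 2
    simp only [Matrix.cons_val] at hE0 hE2
    rw [h1, hE0] at h3
    rw [h2, hE2] at h4
    refine mem_StL_of (E.ne_zero 1) (k := hf (ac a y) y) ?_
    change ac a y = _ • y
    refine (E.expand (ac a y)).trans ?_
    simp [hs, ht] at h3 h4
    simp [hl] at h3
    simp [h3, h4]
  · exact hAw

end oddp

/-! ### Normalizers of diagonal groups -/

section oddn
variable {K : Type*} [Field K] [StarRing K] [UField K]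

lemma StF_of_lines {e : Fin 3 → V K} (E : Onb e) {g : SU K}
    (h : ∀ i, ∃ j, ∃ k : K, ac g (e i) = k • e j) : g ∈ StF e := by
  choose f k hk using h
  have hk0 : ∀ i, k i ≠ 0 := by
    intro i h0
    have h1 := hk i
    rw [h0, zero_smul, ac_eq_zero] at h1
    exact E.ne_zero i h1
  have hf' : Function.Injective f := by
    intro i j hij
    by_contra hne
    have h1 := hf_ac g (e i) (e j)
    rw [hk, hk, hf_smul_left', hf_smul_right', hij, E, E, if_neg hne, if_pos rfl] at h1
    simp [hk0] at h1
  exact ⟨Equiv.ofBijective f (Finite.injective_iff_bijective.1 hf'), k, hk0, fun i => hk i⟩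

/-- An element with the eigenvalue `x` on the plane orthogonal to the unit vector `w`. -/
lemma refl_form {e : Fin 3 → V K} (E : Onb e) {a : SU K} {x y : K} (h0 : ac a (e 0) = x • e 0)
    (h1 : ac a (e 1) = x • e 1) (h2 : ac a (e 2) = y • e 2) (z : V K) :
    ac a z = x • z + (hf z (e 2) * (y - x)) • e 2 := by
  conv_lhs => rw [E.expand z]
  conv_rhs => rw [E.expand z]
  simp only [map_add, map_smul, h0, h1, h2, hf_add_left', hf_smul_left', E _ _]
  simp
  module

lemma diag_comm {e : Fin 3 → V K} (E : Onb e) {g h : SU K} (hg : ∀ i, g ∈ StL (e i))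
    (hh : ∀ i, h ∈ StL (e i)) : g * h = h * g := by
  refine E.ac_ext fun i => ?_
  obtain ⟨k, -, hk⟩ := hg i
  obtain ⟨l, -, hl⟩ := hh i
  simp only [ac_mul, hk, hl, map_smul]
  rw [smul_comm]

lemma norm_inv {G : Type*} [Group G] {A H : Subgroup G} (hN : ∀ h ∈ H, ∀ a ∈ A, h * a * h⁻¹ ∈ A)
    {h a : G} (hh : h ∈ H) (ha : a ∈ A) : ∃ b ∈ A, a * h = h * b :=
  ⟨h⁻¹ * a * h, by simpa using hN _ (H.inv_mem hh) a ha, by group⟩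

/-- If the characters of `A` on the three lines of the frame are distinct, then the normalizer of
`A` permutes these lines. -/
lemma norm_D_sep {e : Fin 3 → V K} (E : Onb e) {A H : Subgroup (SU K)} (hA : ∀ i, A ≤ StL (e i))
    (hN : ∀ h ∈ H, ∀ a ∈ A, h * a * h⁻¹ ∈ A)
    (hs : ∀ i j, i ≠ j → ∃ a ∈ A, ∀ k : K, ¬ (ac a (e i) = k • e i ∧ ac a (e j) = k • e j)) :
    H ≤ StF e := by
  intro h hh
  refine StF_of_lines E fun i => ?_
  have key : ∀ j k, j ≠ k → hf (ac h (e i)) (e j) = 0 ∨ hf (ac h (e i)) (e k) = 0 := by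
    intro j k hjk
    obtain ⟨a, ha, hak⟩ := hs j k hjk
    obtain ⟨b, hb, hab⟩ := norm_inv hN hh ha
    obtain ⟨x, hx0, hx⟩ := hA i hb
    have h1 : ac a (ac h (e i)) = x • ac h (e i) := by rw [← ac_mul, hab, ac_mul, hx, map_smul]
    have h2 : ∀ l, hf (ac h (e i)) (e l) ≠ 0 → ac a (e l) = x • e l := by
      intro l hl
      obtain ⟨y, hy0, hy⟩ := hA l ha
      have hyn := E.norm_eq hy
      have h3 := hf_ac a (ac h (e i)) (e l)
      rw [h1, hy, hf_smul_left', hf_smul_right'] at h3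
      have h4 : x * star y = 1 := by
        apply mul_right_cancel₀ hl
        rw [one_mul, mul_assoc, h3]
      have h5 : x = y := by
        have hy' : star y ≠ 0 := by simpa using hy0
        exact mul_right_cancel₀ hy' (h4.trans hyn.symm)
      rw [hy, h5]
    by_contra! hcon
    exact hak x ⟨h2 j hcon.1, h2 k hcon.2⟩
  by_contra! hcon
  have hne : ∀ j, ∃ k, k ≠ j ∧ hf (ac h (e i)) (e k) ≠ 0 := by
    intro j
    by_contra! hj
    refine hcon j (hf (ac h (e i)) (e j)) (E.ext fun k => ?_)
    by_cases hkj : k = j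
    · subst hkj; rw [hf_smul_left', E, if_pos rfl, mul_one]
    · rw [hj k hkj, hf_smul_left', E, if_neg (Ne.symm hkj), mul_zero]
  obtain ⟨j, -, hj⟩ := hne 0
  obtain ⟨k, hkj, hk⟩ := hne j
  rcases key j k hkj.symm with h1 | h1
  · exact hj h1
  · exact hk h1

/-- If `A` acts by scalars on a plane, then its normalizer fixes the orthogonal line and
centralizes `A`. -/
lemma norm_D_two {e : Fin 3 → V K} (E : Onb e) {A H : Subgroup (SU K)} (hA : ∀ i, A ≤ StL (e i))
    (hN : ∀ h ∈ H, ∀ a ∈ A, h * a * h⁻¹ ∈ A) (h1 : A ≠ ⊥)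
    (hs : ∀ a ∈ A, ∃ k : K, ac a (e 0) = k • e 0 ∧ ac a (e 1) = k • e 1) :
    H ≤ StL (e 2) ∧ ∀ h ∈ H, ∀ a ∈ A, h * a = a * h := by
  have hfix : ∀ h ∈ H, ∀ a ∈ A, a ≠ 1 → h * a = a * h ∧ h ∈ StL (e 2) := by
    intro h hh a ha ha1
    obtain ⟨b, hb, hab⟩ := norm_inv hN hh ha
    obtain ⟨x, hx0, hx1⟩ := hs a ha
    obtain ⟨x', hx0', hx1'⟩ := hs b hb
    obtain ⟨y, hy0, hy⟩ := hA 2 ha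
    obtain ⟨y', hy0', hy'⟩ := hA 2 hb
    have ea := refl_form E hx0 hx1 hy
    have eb := refl_form E hx0' hx1' hy'
    have hxx : x = x' := by
      obtain ⟨z, hz, hz1, hz2⟩ := exists_perp (e 2) (ac h⁻¹ (e 2))
      have hz3 : hf (ac h z) (e 2) = 0 := by
        have := hf_ac h z (ac h⁻¹ (e 2))
        rw [ac_ac_inv] at this
        rw [this, hz2]
      have h3 : ac a (ac h z) = ac h (ac b z) := by rw [← ac_mul, hab, ac_mul]
      rw [ea, eb, hz3, hz1, zero_mul, zero_mul, zero_smul, add_zero, add_zero, map_smul] at h3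
      exact smul_left_injective K (by simpa using hz) h3
    subst hxx
    have dets : x * x * y = 1 := by
      have := E.prod_eq (a := ![x, x, y]) (fun i => by fin_cases i <;> simp [hx0, hx1, hy]) (g := a)
      simpa using this
    have dets' : x * x * y' = 1 := by
      have := E.prod_eq (a := ![x, x, y']) (g := b)
        (fun i => by fin_cases i <;> simp [hx0', hx1', hy'])
      simpa using this
    have hx : x * x ≠ 0 := left_ne_zero_of_mul_eq_one dets
    have hyy : y = y' := mul_left_cancel₀ hx (dets.trans dets'.symm)
    subst hyy
    have hba : a = b := E.ac_ext fun i => by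
      fin_cases i
      · exact hx0.trans hx0'.symm
      · exact hx1.trans hx1'.symm
      · exact hy.trans hy'.symm
    subst hba
    refine ⟨hab.symm, ?_⟩
    have hxy : y - x ≠ 0 := by
      intro h
      have hyx : y = x := sub_eq_zero.1 h
      subst hyx
      have hy1 : y = 1 := cube_root (by rw [← dets]; ring) (E.norm_eq hy)
      subst hy1
      exact ha1 (E.ac_ext fun i => by fin_cases i <;> simp [hx0, hx1, hy])
    have h3 : ac a (ac h (e 2)) = y • ac h (e 2) := by rw [← ac_mul, hab, ac_mul, hy, map_smul]
    rw [ea] at h3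
    refine mem_StL_of (E.ne_zero 2) (k := hf (ac h (e 2)) (e 2)) ?_
    have h4 : (y - x) • ac h (e 2) = (y - x) • (hf (ac h (e 2)) (e 2) • e 2) := by
      rw [sub_smul, ← h3, smul_smul, mul_comm (y - x)]; abel
    exact smul_right_injective _ hxy h4
  obtain ⟨a, ha, ha1⟩ := (Subgroup.ne_bot_iff_exists_ne_one).1 h1 |>.elim fun a h =>
    (⟨a.1, a.2, fun h' => h (Subtype.ext h')⟩ : ∃ a ∈ A, a ≠ 1)
  refine ⟨fun h hh => (hfix h hh a ha ha1).2, fun h hh b hb => ?_⟩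
  by_cases hb1 : b = 1
  · subst hb1; simp
  · exact (hfix h hh b hb hb1).1

lemma Onb.exists_perm (i j : Fin 3) (h : i ≠ j) : ∃ τ : Equiv.Perm (Fin 3), τ 0 = i ∧ τ 1 = j := by
  revert i j; decide

/-- The normalizer of a diagonal subgroup permutes the frame, or fixes a vertex and centralizes
the subgroup. -/
lemma norm_D {e : Fin 3 → V K} (E : Onb e) {A H : Subgroup (SU K)} (hA : ∀ i, A ≤ StL (e i))
    (hN : ∀ h ∈ H, ∀ a ∈ A, h * a * h⁻¹ ∈ A) (h1 : A ≠ ⊥) :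
    H ≤ StF e ∨ AniP H ∧ ∀ h ∈ H, ∀ a ∈ A, h * a = a * h := by
  by_cases hs : ∀ i j, i ≠ j → ∃ a ∈ A, ∀ k : K, ¬ (ac a (e i) = k • e i ∧ ac a (e j) = k • e j)
  · exact Or.inl (norm_D_sep E hA hN hs)
  · push Not at hs
    obtain ⟨i, j, hij, hs⟩ := hs
    obtain ⟨τ, rfl, rfl⟩ := Onb.exists_perm i j hij
    obtain ⟨h2, h3⟩ := norm_D_two (E.comp τ) (fun i => hA (τ i)) hN h1 hs
    exact Or.inr ⟨⟨_, by simp [E _ _], h2⟩, h3⟩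

lemma hyp_third {u v w : V K} (E : Hyp u v w) {g : SU K} (hu : g ∈ StL u) (hv : g ∈ StL v) :
    g ∈ StL w := by
  have hw : w ≠ 0 := E.w_ne
  obtain ⟨k, hk, h1⟩ := hu
  obtain ⟨l, hl, h2⟩ := hv
  have h3 := hf_ac g w u
  have h4 := hf_ac g w v
  rw [h1, hf_smul_right', E.wu] at h3
  rw [h2, hf_smul_right', E.wv] at h4
  have h3 := (mul_eq_zero.1 h3).resolve_left (by simpa using hk)
  have h4 := (mul_eq_zero.1 h4).resolve_left (by simpa using hl)
  refine mem_StL_of hw (k := hf (ac g w) w) ?_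
  refine (E.expand _).trans ?_
  rw [h3, h4, zero_smul, zero_smul, zero_add, zero_add]

/-- The normalizer of a nontrivial `p`-group fixing `u`, `v` fixes `w` and permutes the lines of
`u` and `v`. -/
lemma norm_Y {u v w : V K} (E : Hyp u v w) {p : ℕ} (hp : p.Prime)
    (hpq : p ∣ qq K - 1) {A H : Subgroup (SU K)} (hA : IsPGroup p A) (hu : A ≤ StL u)
    (hv : A ≤ StL v) (hN : ∀ h ∈ H, ∀ a ∈ A, h * a * h⁻¹ ∈ A) (h1 : A ≠ ⊥) :
    H ≤ StL w ∧ ∀ h ∈ H, h * h ∈ StL u ∧ h * h ∈ StL v := by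
  have hp' : Fact p.Prime := ⟨hp⟩
  have form : ∀ b ∈ A, orderOf b = p → ∃ x : K, x ≠ 0 ∧ x ≠ 1 ∧ x * x ≠ 1 ∧ ac b u = x • u ∧
      ac b v = x⁻¹ • v ∧ ac b w = w := by
    intro b hb hbp
    obtain ⟨x, hx0, hx⟩ := hu hb
    obtain ⟨y, hy0, hy⟩ := hv hb
    obtain ⟨z, hz0, hz⟩ := hyp_third E (hu hb) (hv hb)
    have hb1 : b ≠ 1 := by rintro rfl; rw [orderOf_one] at hbp; exact hp.one_lt.ne hbp
    have hbpow : b ^ p = 1 := by rw [← hbp, pow_orderOf_eq_one]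
    have hxp : x ^ p = 1 := by
      have := ac_pow_smul hx p
      rw [hbpow, ac_one] at this
      exact (smul_left_injective K E.u_ne (by simpa using this)).symm
    have hxq : x ^ (qq K - 1) = 1 := by
      obtain ⟨m, hm⟩ := hpq
      rw [hm, pow_mul, hxp, one_pow]
    have hsx : star x = x := by
      have hq := qq_ge K
      rw [star_eq, show qq K = qq K - 1 + 1 by omega, pow_succ, hxq, one_mul]
    have hxy : x * y = 1 := by
      have h2 := hf_ac b v u
      rw [hx, hy, hf_smul_left', hf_smul_right', hsx, E.vu] at h2
      rw [mul_comm]; simpa using h2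
    have hy' : y = x⁻¹ := eq_inv_of_mul_eq_one_right hxy
    have hz1 : z = 1 := by
      have := E.prod_eq hx hy hz
      rwa [hxy, one_mul] at this
    have hx1 : x ≠ 1 := by
      rintro rfl
      rw [one_mul] at hxy
      exact hb1 (E.ac_ext (by simpa using hx) (by simpa [hxy] using hy) (by simpa [hz1] using hz))
    refine ⟨x, hx0, hx1, fun h => hx1 ?_, hx, by rw [hy, hy'], by rw [hz, hz1, one_smul]⟩
    exact sq_inj (by rw [pow_two, h, one_pow])
  have : Nontrivial A := (Subgroup.nontrivial_iff_ne_bot _).2 h1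
  obtain ⟨⟨a, ha⟩, haord⟩ := exists_prime_orderOf_dvd_card' (G := A) p (by
    obtain ⟨n, hn, hc⟩ := hA.nontrivial_iff_card.1 this
    rw [hc]; exact dvd_pow_self p hn.ne')
  rw [Subgroup.orderOf_mk] at haord
  obtain ⟨x, hx0, hx1, hx2, hax, hay, haz⟩ := form a ha haord
  have hform : ∀ h ∈ H, ∃ b ∈ A, a * h = h * b ∧ orderOf b = p := by
    intro h hh
    obtain ⟨b, hb, hab⟩ := norm_inv hN hh ha
    refine ⟨b, hb, hab, ?_⟩
    have : b = h⁻¹ * a * h⁻¹⁻¹ := by rw [inv_inv, mul_assoc, hab]; group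
    rw [this]
    exact (orderOf_injective (MulAut.conj h⁻¹).toMonoidHom (MulAut.conj h⁻¹).injective a).trans haord
  have hxi : x⁻¹ ≠ 1 := by simpa using hx1
  have hxxi : x⁻¹ ≠ x := fun h => hx2 (by nth_rw 1 [← h]; exact inv_mul_cancel₀ hx0)
  have coords : ∀ y : V K, ac a y = (x * hf y v) • u + (x⁻¹ * hf y u) • v + hf y w • w := by
    intro y
    conv_lhs => rw [E.expand y]
    simp only [map_add, map_smul, hax, hay, haz, smul_smul, mul_comm]
  have eig : ∀ (y : V K) (k : K), ac a y = k • y →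
      (k = x ∨ hf y v = 0) ∧ (k = x⁻¹ ∨ hf y u = 0) := by
    intro y k hy
    rw [coords] at hy
    have e1 := congrArg (fun z => hf z v) hy
    have e2 := congrArg (fun z => hf z u) hy
    simp [E.uv, E.vv, E.wv, E.uu, E.vu, E.wu, E.uw, E.vw, E.ww] at e1 e2
    exact ⟨by tauto, by tauto⟩
  have hHw : H ≤ StL w := by
    intro h hh
    obtain ⟨b, hb, hab, hbp⟩ := hform h hh
    obtain ⟨y, -, -, -, -, -, hbw⟩ := form b hb hbp
    obtain ⟨e1, e2⟩ := eig (ac h w) 1 (by rw [← ac_mul, hab, ac_mul, hbw, one_smul])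
    refine mem_StL_of E.w_ne (k := hf (ac h w) w) ((E.expand _).trans ?_)
    rw [e1.resolve_left hx1.symm, e2.resolve_left hxi.symm]; simp
  refine ⟨hHw, fun h hh => ?_⟩
  have hperm : ∀ h ∈ H, ∀ c, hf c w = 0 → c ≠ 0 → (∀ b ∈ A, orderOf b = p → ∃ k : K, ac b c = k • c) →
      (∃ k : K, ac h c = k • u) ∨ ∃ k : K, ac h c = k • v := by
    intro h hh c hcw hc0 hc
    obtain ⟨b, hb, hab, hbp⟩ := hform h hh
    obtain ⟨k, hk⟩ := hc b hb hbp
    obtain ⟨e1, e2⟩ := eig (ac h c) k (by rw [← ac_mul, hab, ac_mul, hk, map_smul])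
    have hw0 : hf (ac h c) w = 0 := by
      obtain ⟨l, hl, h2⟩ := hHw hh
      have h3 := hf_ac h c w
      rw [h2, hcw, hf_smul_right'] at h3
      exact (mul_eq_zero.1 h3).resolve_left (by simpa using hl)
    have hexp := E.expand (ac h c)
    rw [hw0, zero_smul, add_zero] at hexp
    by_cases hkx : k = x
    · left
      rw [e2.resolve_left (fun h => hxxi (h.symm.trans hkx)), zero_smul, add_zero] at hexp
      exact ⟨_, hexp⟩
    · right
      rw [e1.resolve_left hkx, zero_smul, zero_add] at hexp
      exact ⟨_, hexp⟩
  have hU := hperm h hh u E.uw E.u_ne fun b hb hbp => by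
    obtain ⟨x, -, -, -, h, -⟩ := form b hb hbp; exact ⟨x, h⟩
  have hV := hperm h hh v E.vw E.v_ne fun b hb hbp => by
    obtain ⟨x, -, -, -, -, h, -⟩ := form b hb hbp; exact ⟨_, h⟩
  have huv : ∀ k l : K, u = k • v → False := by
    intro k l h
    have := E.uv
    rw [h, hf_smul_left', E.vv, mul_zero] at this
    exact zero_ne_one this
  rcases hU with ⟨k, hk⟩ | ⟨k, hk⟩
  · have hmu : h ∈ StL u := mem_StL_of E.u_ne hk
    rcases hV with ⟨l, hl⟩ | ⟨l, hl⟩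
    · exfalso
      have h2 := hf_ac h u v
      rw [hk, hl, E.uv, hf_smul_left', hf_smul_right', E.uu] at h2
      simp at h2
    · have hmv : h ∈ StL v := mem_StL_of E.v_ne hl
      exact ⟨mul_mem hmu hmu, mul_mem hmv hmv⟩
  · rcases hV with ⟨l, hl⟩ | ⟨l, hl⟩
    · exact ⟨mem_StL_of E.u_ne (k := k * l) (by rw [ac_mul, hk, map_smul, hl, smul_smul]),
        mem_StL_of E.v_ne (k := l * k) (by rw [ac_mul, hl, map_smul, hk, smul_smul])⟩
    · exfalso
      have h2 := hf_ac h u v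
      rw [hk, hl, E.uv, hf_smul_left', hf_smul_right', E.vv] at h2
      simp at h2

end oddn

/-! ### Groups with a nontrivial normal subgroup of odd order -/

section oddo
variable {K : Type*} [Field K] [StarRing K] [UField K]

lemma coprime_of_odd {n p : ℕ} (hp3 : p ≠ 3) (hn : Odd n) (h3 : 3 ∣ n → p = 3) {i : ℕ}
    (h1 : 1 ≤ i) (hi : i ≤ 3) : Nat.Coprime i n := by
  have h2 : Nat.Coprime 2 n := Nat.coprime_two_left.2 hn
  have h3' : Nat.Coprime 3 n := (Nat.Prime.coprime_iff_not_dvd Nat.prime_three).2 fun h => hp3 (h3 h)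
  interval_cases i
  · exact Nat.coprime_one_left n
  · exact h2
  · exact h3'

/-- The normalizer of a nontrivial `p`-group, `p` odd, satisfies one of the four conditions of
`exhaust`, and its elements of odd order centralize the `p`-group, except when `p ≠ 3` and the
order is divisible by three. -/
lemma norm_type {p : ℕ} (hp : p.Prime) (hp2 : p ≠ 2) {A H : Subgroup (SU K)} (hA : IsPGroup p A)
    (h1 : A ≠ ⊥) (hN : ∀ h ∈ H, ∀ a ∈ A, h * a * h⁻¹ ∈ A) :
    (IsoP H ∨ AniP H ∨ MonP H ∨ I4 H) ∧
      ∀ g ∈ H, Odd (orderOf g) → (3 ∣ orderOf g → p = 3) → ∀ a ∈ A, g * a = a * g := by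
  have hq := qq_ge K
  have hp' : Fact p.Prime := ⟨hp⟩
  by_cases hm : p ∣ qq K - 1
  · obtain ⟨u, v, w, E, hu, hv⟩ := type_Y hp hp2 hm hA
    obtain ⟨hw, huv⟩ := norm_Y E hp hm hA hu hv hN h1
    refine ⟨Or.inr (Or.inl ⟨w, E.ww, hw⟩), fun g hg hodd _ a ha => ?_⟩
    obtain ⟨m, hm⟩ := exists_pow_eq_self_of_coprime (n := 2) (x := g)
      (Nat.coprime_two_left.2 hodd)
    rw [pow_two] at hm
    obtain ⟨k, -, hk⟩ : g ∈ StL u := by rw [← hm]; exact pow_mem (huv g hg).1 m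
    obtain ⟨l, -, hl⟩ : g ∈ StL v := by rw [← hm]; exact pow_mem (huv g hg).2 m
    obtain ⟨r, -, hr⟩ := hw hg
    obtain ⟨k', -, hk'⟩ := hu ha
    obtain ⟨l', -, hl'⟩ := hv ha
    obtain ⟨r', -, hr'⟩ := hyp_third E (hu ha) (hv ha)
    refine E.ac_ext ?_ ?_ ?_ <;>
      simp only [ac_mul, hk, hl, hr, hk', hl', hr', map_smul] <;> rw [smul_comm]
  have hp3 : p ≠ 3 := by
    rintro rfl
    have := qq_mod K
    exact hm ((Nat.modEq_iff_dvd' (by omega)).1 (show 1 % 3 = qq K % 3 by omega))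
  by_cases hpl : p ∣ qq K + 1
  · obtain ⟨e, E, he⟩ := type_D hp hp2 hp3 hpl hA
    rcases norm_D E he hN h1 with h | ⟨h2, h3⟩
    · refine ⟨Or.inr (Or.inr (Or.inl ⟨e, E, h⟩)), fun g hg hodd h3 a ha => ?_⟩
      obtain ⟨σ, hσ⟩ := h hg
      have e1 : σ ^ orderOf g = 1 := by
        have h4 := hσ.pow (orderOf g)
        rw [pow_orderOf_eq_one] at h4
        exact h4.eq E (Mono.one e)
      have hc : Nat.Coprime (orderOf g) 6 := by
        rw [show 6 = 2 * 3 from rfl]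
        exact Nat.Coprime.mul_right (coprime_of_odd hp3 hodd h3 (by norm_num) (by norm_num)).symm
          (coprime_of_odd hp3 hodd h3 (by norm_num) (by norm_num)).symm
      have hσ1 : σ = 1 := pow_coprime hc e1 (perm3_six σ)
      subst hσ1
      obtain ⟨k, hk, hk'⟩ := hσ
      exact diag_comm E (fun i => ⟨k i, hk i, hk' i⟩) (fun i => he i ha)
    · exact ⟨Or.inr (Or.inl h2), fun g hg _ _ => h3 g hg⟩
  · have hpq : ¬ p ∣ qq K ^ 2 - 1 := by
      intro h
      have e : qq K ^ 2 - 1 = (qq K + 1) * (qq K - 1) := by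
        rw [← Nat.sq_sub_sq, one_pow]
      rw [e, hp.dvd_mul] at h
      tauto
    have : Nontrivial A := (Subgroup.nontrivial_iff_ne_bot _).2 h1
    have := hA.center_nontrivial
    have hZ : IsPGroup p (Subgroup.center A) := hA.to_subgroup _
    obtain ⟨z, hzord⟩ := exists_prime_orderOf_dvd_card' (G := Subgroup.center A) p (by
      obtain ⟨n, hn, hc⟩ := hZ.nontrivial_iff_card.1 this
      rw [hc]; exact dvd_pow_self p hn.ne')
    have hz1 : z.1.1 ≠ 1 := by
      intro h
      have : z = 1 := Subtype.ext (Subtype.ext h)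
      rw [this, orderOf_one] at hzord
      exact hp.one_lt.ne hzord
    have hzp : z.1.1 ^ p = 1 := by
      have h2 : z ^ p = 1 := by rw [← hzord, pow_orderOf_eq_one]
      exact congrArg (fun y : Subgroup.center A => y.1.1) h2
    have hzn := noEig_of_prime hp hp2 hpq hzp hz1
    have hzc : ∀ a ∈ A, z.1.1 * a = a * z.1.1 := fun a ha =>
      (congrArg Subtype.val (Subgroup.mem_center_iff.1 z.2 ⟨a, ha⟩)).symm
    have hH : H ≤ NC z.1.1 := fun h hh => hzn.mem_NC.2 (hzc _ (hN h hh _ z.1.2))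
    refine ⟨Or.inr (Or.inr (Or.inr ⟨z.1.1, hzn, hH⟩)), fun g hg hodd h3 a ha => ?_⟩
    obtain ⟨i, hi1, hi3, hi⟩ := hzn.NC_pow (hH hg)
    obtain ⟨m, hm⟩ := exists_pow_eq_self_of_coprime (n := i) (x := g)
      (coprime_of_odd hp3 hodd h3 hi1 hi3)
    have hzg : z.1.1 * g = g * z.1.1 := by
      rw [← hm]; exact (show Commute _ (g ^ i) from hi).pow_right m
    exact hzn.comm' hzg (hzc a ha)

/-- If odd order elements normalizing `p`-subgroups centralize them whenever no obstruction at the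
prime three occurs, then Burnside's transfer theorem yields normal `p`-subgroups in groups of odd
order, without the odd order theorem. -/
lemma exists_normal_p {G : Type*} [Group G] [Finite G]
    (comm : ∀ p : ℕ, p.Prime → p ≠ 2 → ∀ A : Subgroup G, IsPGroup p A → A ≠ ⊥ →
      ∀ g ∈ Subgroup.normalizer (A : Set G), Odd (orderOf g) → (3 ∣ orderOf g → p = 3) →
        ∀ a ∈ A, g * a = a * g) (H : Subgroup G) (n : ℕ) :
    ∀ O : Subgroup G, Nat.card O = n → Odd n → O ≠ ⊥ → (∀ h ∈ H, ∀ o ∈ O, h * o * h⁻¹ ∈ O) →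
      ∃ (p : ℕ) (A : Subgroup G), p.Prime ∧ p ≠ 2 ∧ IsPGroup p A ∧ A ≠ ⊥ ∧
        ∀ h ∈ H, ∀ a ∈ A, h * a * h⁻¹ ∈ A := by
  induction n using Nat.strong_induction_on with
  | _ n ih =>
  intro O hOn hodd hO hN
  have hn1 : n ≠ 1 := by
    rintro rfl
    exact hO (Subgroup.card_eq_one.1 hOn)
  set p := n.minFac with hpdef
  have hp : p.Prime := Nat.minFac_prime hn1
  have hpn : p ∣ n := Nat.minFac_dvd n
  have hp2 : p ≠ 2 := by
    intro h
    rw [h] at hpn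
    exact (Nat.not_even_iff_odd.2 hodd) (even_iff_two_dvd.2 hpn)
  have hp' : Fact p.Prime := ⟨hp⟩
  let P : Sylow p O := default
  let A : Subgroup G := P.1.map O.subtype
  have hPA : IsPGroup p A := P.2.map _
  have hP1 : P.1 ≠ ⊥ := P.ne_bot_of_dvd_card (by rwa [hOn])
  have hA1 : A ≠ ⊥ := by
    intro h
    exact hP1 ((Subgroup.map_eq_bot_iff_of_injective _ O.subtype_injective).1 h)
  have hP : Subgroup.normalizer (P : Set O) ≤ Subgroup.centralizer (P : Set O) := by
    intro g hg
    rw [Subgroup.mem_centralizer_iff]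
    intro a ha
    have hgA : g.1 ∈ Subgroup.normalizer (A : Set G) := by
      replace hg : g ∈ Subgroup.normalizer (P.1 : Set O) := hg
      rw [Subgroup.mem_normalizer_iff] at hg ⊢
      intro x
      constructor
      · rintro ⟨y, hy, rfl⟩
        exact ⟨g * y * g⁻¹, (hg y).1 hy, rfl⟩
      · rintro ⟨y, hy, hyx⟩
        refine ⟨g⁻¹ * y * g, (hg _).2 ?_, ?_⟩
        · have : g * (g⁻¹ * y * g) * g⁻¹ = y := by group
          rw [this]; exact hy
        · change g.1⁻¹ * y.1 * g.1 = x
          rw [show (y.1 : G) = g.1 * x * g.1⁻¹ from hyx]; group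
    have hord : orderOf g.1 ∣ n := by
      rw [Subgroup.orderOf_coe, ← hOn]; exact orderOf_dvd_natCard g
    have := comm p hp hp2 A hPA hA1 g.1 hgA (hodd.of_dvd_nat hord) (fun h3 => by
      have h4 : p ≤ 3 := Nat.minFac_le_of_dvd (by norm_num) (h3.trans hord)
      have := hp.two_le
      omega) a.1 ⟨a, ha, rfl⟩
    exact Subtype.ext this.symm
  let N := (MonoidHom.transferSylow P hP).ker
  have hNc : Subgroup.IsComplement' N P.1 := MonoidHom.ker_transferSylow_isComplement' P hP
  have hNp : ¬ p ∣ Nat.card N := MonoidHom.not_dvd_card_ker_transferSylow P hP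
  by_cases hN1 : N = ⊥
  · have hPtop : P.1 = ⊤ := by
      rw [hN1] at hNc
      exact Subgroup.isComplement'_bot_left.1 hNc
    have hAO : A = O := by
      change P.1.map O.subtype = O
      rw [hPtop, ← MonoidHom.range_eq_map, Subgroup.range_subtype]
    exact ⟨p, A, hp, hp2, hPA, hA1, hAO ▸ hN⟩
  · have hcard : Nat.card (N.map O.subtype) = Nat.card N :=
      Subgroup.card_map_of_injective O.subtype_injective
    have hdvd : Nat.card N ∣ n := hOn ▸ Subgroup.card_subgroup_dvd_card N
    have hlt : Nat.card N < n := by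
      refine lt_of_le_of_ne (Nat.le_of_dvd hodd.pos hdvd) fun h => hNp (h ▸ hpn)
    refine ih _ hlt (N.map O.subtype) hcard (hodd.of_dvd_nat hdvd)
      (fun h => hN1 ((Subgroup.map_eq_bot_iff_of_injective _ O.subtype_injective).1 h)) ?_
    rintro h hh _ ⟨x, hx, rfl⟩
    refine ⟨⟨h * x.1 * h⁻¹, hN h hh _ x.2⟩, ?_, rfl⟩
    set y : O := ⟨h * x.1 * h⁻¹, hN h hh _ x.2⟩ with hy
    have hxo : orderOf x ∣ Nat.card N := by
      have := orderOf_dvd_natCard (⟨x, hx⟩ : N)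
      rwa [Subgroup.orderOf_mk] at this
    have hyo : orderOf y = orderOf x := by
      rw [← Subgroup.orderOf_coe, ← Subgroup.orderOf_coe]
      exact orderOf_injective (MulAut.conj h).toMonoidHom (MulAut.conj h).injective x.1
    change MonoidHom.transferSylow P hP y = 1
    obtain ⟨k, hk⟩ := P.2 (MonoidHom.transferSylow P hP y)
    refine pow_coprime (m := orderOf y) (n := p ^ k) ?_ ?_ hk
    · rw [hyo]
      exact (Nat.Coprime.pow_left k (hp.coprime_iff_not_dvd.2 fun h => hNp (h.trans hxo))).symm
    · rw [← map_pow, pow_orderOf_eq_one, map_one]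

/-- A group normalizing a nontrivial subgroup of odd order satisfies one of the four conditions of
`exhaust`. -/
lemma odd_normal {O H : Subgroup (SU K)} (hodd : Odd (Nat.card O)) (hO : O ≠ ⊥)
    (hN : ∀ h ∈ H, ∀ o ∈ O, h * o * h⁻¹ ∈ O) : IsoP H ∨ AniP H ∨ MonP H ∨ I4 H := by
  obtain ⟨p, A, hp, hp2, hA, hA1, hHA⟩ := exists_normal_p
    (fun p hp hp2 A hA hA1 g hg => (norm_type hp hp2 hA hA1
      (fun h hh a ha => ((Subgroup.mem_normalizer_iff.1 hh) a).1 ha)).2 g hg) H _ O rfl hodd hO hN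
  exact (norm_type hp hp2 hA hA1 hHA).1

end oddo

/-! ### Counting involutions -/

/-- Double counting, for a set `J` of involutions `u` with centres `ln u` acting on the set of
centres. Those not centred at `l` can be sorted by their centre or by the image of `l`; at a centre
`l` carrying the fewest involutions this shows that all centres carry equally many, whence all the
bounds `h2` are equalities. -/
lemma count_core {A B : Type*} (J : Finset A) (ln : A → B) (act : A → B → B)
    (h1 : ∀ l ∈ J.image ln, ∀ u ∈ J, ln u ≠ l → act u l ∈ J.image ln ∧ act u l ≠ l)
    (h2 : ∀ l ∈ J.image ln, ∀ m ∈ J.image ln, m ≠ l →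
      (J.filter (fun u => act u l = m)).card ≤ (J.filter (fun u => ln u = l)).card) :
    ∀ l ∈ J.image ln, ∀ m ∈ J.image ln, m ≠ l →
      (J.filter (fun u => act u l = m)).card = (J.filter (fun u => ln u = l)).card := by
  set L := J.image ln with hL
  let r : B → ℕ := fun l => (J.filter (fun u => ln u = l)).card
  let f : B → B → ℕ := fun l m => ((J.filter (fun u => ln u ≠ l)).filter (fun u => act u l = m)).card
  have hf1 : ∀ l m, f l m ≤ (J.filter (fun u => act u l = m)).card := fun l m =>
    Finset.card_le_card (Finset.filter_subset_filter _ (Finset.filter_subset _ _))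
  have hsum : ∀ l ∈ L, ∑ m ∈ L.erase l, r m = ∑ m ∈ L.erase l, f l m := by
    intro l hl
    have e1 : (J.filter (fun u => ln u ≠ l)).card = ∑ m ∈ L.erase l, f l m := by
      refine Finset.card_eq_sum_card_fiberwise fun u hu => ?_
      have hu' := Finset.mem_filter.1 (Finset.mem_coe.1 hu)
      exact Finset.mem_coe.2 (Finset.mem_erase.2 ⟨(h1 l hl u hu'.1 hu'.2).2, (h1 l hl u hu'.1 hu'.2).1⟩)
    rw [← e1, Finset.card_eq_sum_card_fiberwise (f := ln) (t := L.erase l)]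
    · refine Finset.sum_congr rfl fun m hm => congrArg Finset.card ?_
      ext u
      simp only [Finset.mem_filter]
      constructor
      · rintro ⟨a, b⟩; exact ⟨⟨a, by rw [b]; exact (Finset.mem_erase.1 hm).1⟩, b⟩
      · rintro ⟨⟨a, _⟩, b⟩; exact ⟨a, b⟩
    · intro u hu
      have hu' := Finset.mem_filter.1 (Finset.mem_coe.1 hu)
      exact Finset.mem_coe.2 (Finset.mem_erase.2 ⟨hu'.2, Finset.mem_image_of_mem _ hu'.1⟩)
  have hle : ∀ l ∈ L, ∑ m ∈ L.erase l, r m ≤ ∑ m ∈ L.erase l, r l := fun l hl => by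
    rw [hsum l hl]
    refine Finset.sum_le_sum fun m hm => (hf1 l m).trans ?_
    exact h2 l hl m (Finset.mem_erase.1 hm).2 (Finset.mem_erase.1 hm).1
  intro l hl m hm hml
  obtain ⟨l0, hl0, hmin⟩ := Finset.exists_min_image L r ⟨l, hl⟩
  have hr : ∀ m ∈ L, r m = r l0 := by
    intro m hm
    by_cases hm0 : m = l0
    · rw [hm0]
    · have := (Finset.sum_eq_sum_iff_of_le (s := L.erase l0) (f := fun _ => r l0) (g := r)
        (fun i hi => hmin i (Finset.mem_erase.1 hi).2)).1 (le_antisymm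
          (Finset.sum_le_sum fun i hi => hmin i (Finset.mem_erase.1 hi).2) (hle l0 hl0))
      exact (this m (Finset.mem_erase.2 ⟨hm0, hm⟩)).symm
  have hfe : ∀ i ∈ L.erase l, f l i ≤ r l := fun i hi => (hf1 l i).trans
    (h2 l hl i (Finset.mem_erase.1 hi).2 (Finset.mem_erase.1 hi).1)
  have h3 : ∑ i ∈ L.erase l, f l i = ∑ i ∈ L.erase l, r l := by
    rw [← hsum l hl]
    exact Finset.sum_congr rfl fun i hi => by
      rw [hr i (Finset.mem_erase.1 hi).2, hr l hl]
  have h4 := (Finset.sum_eq_sum_iff_of_le hfe).1 h3 m (Finset.mem_erase.2 ⟨hml, hm⟩)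
  exact le_antisymm (h2 l hl m hm hml) (h4.symm.le.trans (hf1 l m))

section cnt
variable {K : Type*} [Field K] [StarRing K] [UField K]

lemma swap_form {c d w : V K} (E : Hyp c d w) {u : SU K} (hu : u * u = 1) (hu1 : u ≠ 1) {l : K}
    (h : ac u c = l • d) : l ≠ 0 ∧ star l = l ∧ ac u d = l⁻¹ • c ∧ ac u w = w := by
  have hl : l ≠ 0 := by
    rintro rfl
    rw [zero_smul, ac_eq_zero] at h
    exact E.u_ne h
  have hd : ac u d = l⁻¹ • c := by
    have : ac u (ac u c) = c := by rw [← ac_mul, hu, ac_one]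
    rw [h, map_smul] at this
    rw [← this, smul_smul, inv_mul_cancel₀ hl, one_smul]
  have h1 := hf_ac u c d
  rw [h, hd, E.uv, hf_smul_left, hf_smul_right, E.vu, mul_one, star_inv₀,
    mul_inv_eq_one₀ (star_ne_zero.2 hl)] at h1
  refine ⟨hl, h1.symm, hd, ?_⟩
  obtain ⟨e, he0, hee, rfl⟩ := exists_center hu hu1
  rw [tv_apply hee (one_mem _), one_mul] at h ⊢
  have hce : hf c e ≠ 0 := by
    intro h0
    rw [h0, zero_smul, add_zero] at h
    have := E.uv
    rw [h, hf_smul_left, E.vv, mul_zero] at this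
    exact zero_ne_one this
  have hwe : star (hf c e) * hf w e = 0 := by
    have := congrArg (hf w) h
    rwa [hf_add_right, hf_smul_right, hf_smul_right, E.wu, E.wv, mul_zero, zero_add] at this
  rcases mul_eq_zero.1 hwe with h0 | h0
  · exact absurd (star_eq_zero.1 h0) hce
  · rw [h0, zero_smul, add_zero]

/-- The line spanned by the centre of an involution. -/
noncomputable def ln (u : SU K) : Submodule K (V K) := LinearMap.range (ac u - 1)

lemma ln_tv {c : V K} (hc : hf c c = 0) {a : K} (ha : a ∈ Fx K) (ha0 : a ≠ 0) (hc0 : c ≠ 0) :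
    ln (tv c a) = Submodule.span K {c} := by
  have hx : ∀ x, (ac (tv c a) - 1) x = (a * hf x c) • c := fun x => by
    rw [LinearMap.sub_apply, tv_apply hc ha]
    simp
  ext y
  rw [ln, LinearMap.mem_range, Submodule.mem_span_singleton]
  constructor
  · rintro ⟨x, rfl⟩; exact ⟨_, (hx x).symm⟩
  · rintro ⟨k, rfl⟩
    obtain ⟨z, hz⟩ := exists_dual hc0
    have hz' : hf z c = 1 := by rw [← hf_star, hz, star_one]
    refine ⟨(a⁻¹ * k) • z, ?_⟩
    rw [hx, hf_smul_left, hz', mul_one, mul_inv_cancel_left₀ ha0]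

lemma map_span (u : SU K) (c : V K) :
    (Submodule.span K {c}).map (ac u) = Submodule.span K {ac u c} := by
  rw [Submodule.map_span, Set.image_singleton]

lemma span_eq_iff {c d : V K} (hc : c ≠ 0) :
    Submodule.span K {c} = Submodule.span K {d} ↔ ∃ k : K, k ≠ 0 ∧ c = k • d := by
  constructor
  · intro h
    have : c ∈ Submodule.span K {d} := h ▸ Submodule.mem_span_singleton_self c
    obtain ⟨k, hk⟩ := Submodule.mem_span_singleton.1 this
    exact ⟨k, by rintro rfl; exact hc (by rw [← hk, zero_smul]), hk.symm⟩
  · rintro ⟨k, hk, rfl⟩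
    exact Submodule.span_singleton_smul_eq (IsUnit.mk0 k hk) d

/-- The centre of an involution is the only isotropic line which it fixes. -/
lemma fixed_center {c e : V K} (hc0 : c ≠ 0) (hc : hf c c = 0) (he0 : e ≠ 0) (hee : hf e e = 0)
    {k : K} (h : ac (tv e 1) c = k • c) : ∃ m : K, m ≠ 0 ∧ c = m • e := by
  rw [tv_apply hee (one_mem _), one_mul] at h
  have h1 := congrArg (fun y => hf y c) h
  simp only [hf_add_left, hf_smul_left, hc, mul_zero, zero_add] at h1
  have h0 : hf c e = 0 := by
    rcases mul_eq_zero.1 h1 with h0 | h0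
    · exact h0
    · exact hf_comm_zero h0
  obtain ⟨m, rfl⟩ := iso_perp he0 hee hc h0
  exact ⟨m, by rintro rfl; exact hc0 (zero_smul _ _), rfl⟩

/-- Given transvections of `H` with the two centres `c` and `d`, the equality case of `count_core`
provides an involution of `H` exchanging the two lines, and, as a product of two such involutions,
a dilation of the hyperbolic plane that conjugates `tv c 1` to a prescribed `tv c a` of `H`. -/
lemma dil_core {H : Subgroup (SU K)} {c d w : V K} (E : Hyp c d w) (hc1 : tv c 1 ∈ H) {b : K}
    (hb : b ∈ Fx K) (hb0 : b ≠ 0) (hd : tv d b ∈ H) :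
    (∃ u ∈ H, ∃ l : K, l ≠ 0 ∧ star l = l ∧ ac u c = l • d ∧ ac u d = l⁻¹ • c ∧ ac u w = w) ∧
    ∀ a ∈ Fx K, a ≠ 0 → tv c a ∈ H → ∃ γ : K, γ ≠ 0 ∧ star γ = γ ∧ γ * γ = a ∧
      ∃ g ∈ H, ac g c = γ • c ∧ ac g d = γ⁻¹ • d ∧ ac g w = w := by
  have := Fintype.ofFinite (SU K)
  let J : Finset (SU K) := Finset.univ.filter fun s => s ∈ H ∧ s * s = 1 ∧ s ≠ 1
  have hJ : ∀ s, s ∈ J ↔ s ∈ H ∧ s * s = 1 ∧ s ≠ 1 := fun s => by simp [J]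
  let act : SU K → Submodule K (V K) → Submodule K (V K) := fun u l => l.map (ac u)
  -- every line in the image of `ln` is spanned by the centre of a transvection of `H`
  have hline : ∀ l ∈ J.image ln, ∃ c : V K, c ≠ 0 ∧ hf c c = 0 ∧ tv c 1 ∈ H ∧
      l = Submodule.span K {c} := by
    intro l hl
    obtain ⟨s, hs, rfl⟩ := Finset.mem_image.1 hl
    obtain ⟨h1, h2, h3⟩ := (hJ s).1 hs
    obtain ⟨e, he0, hee, rfl⟩ := exists_center h2 h3
    exact ⟨e, he0, hee, h1, ln_tv hee (one_mem _) one_ne_zero he0⟩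
  have hmem : ∀ (c : V K) (a : K), c ≠ 0 → hf c c = 0 → a ∈ Fx K → a ≠ 0 → tv c a ∈ H → tv c a ∈ J :=
    fun c a h1 h2 h3 h4 h5 => (hJ _).2 ⟨h5, tv_sq h2 h3, tv_ne_one h1 h2 h3 h4⟩
  have key : ∀ c d w : V K, Hyp c d w → ∀ s ∈ J, ln s = Submodule.span K {c} → ∀ u0 ∈ J,
      act u0 (Submodule.span K {c}) = Submodule.span K {d} →
      Set.MapsTo (fun u => (u * u0) * s * (u * u0)⁻¹)
        (J.filter (fun u => act u (Submodule.span K {c}) = Submodule.span K {d}) : Finset (SU K))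
        (J.filter (fun u => ln u = Submodule.span K {c}) : Finset (SU K)) ∧
      Set.InjOn (fun u => (u * u0) * s * (u * u0)⁻¹)
        (J.filter (fun u => act u (Submodule.span K {c}) = Submodule.span K {d}) : Finset (SU K)) ∧
      ∀ u ∈ J, act u (Submodule.span K {c}) = Submodule.span K {d} → ∃ γ : K, γ ≠ 0 ∧ star γ = γ ∧ 
        ac (u * u0) c = γ • c ∧ ac (u * u0) d = γ⁻¹ • d ∧ ac (u * u0) w = w := by
    intro c d w E s hs hsc u0 hu0 hu0c
    have hform : ∀ u ∈ J, act u (Submodule.span K {c}) = Submodule.span K {d} → ∃ l : K, l ≠ 0 ∧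
        star l = l ∧ ac u c = l • d ∧ ac u d = l⁻¹ • c ∧ ac u w = w := by
      intro u hu h
      simp only [act, map_span] at h
      obtain ⟨l, hl, h⟩ := (span_eq_iff (ac_eq_zero.not.2 E.u_ne)).1 h
      obtain ⟨-, h2, h3⟩ := (hJ u).1 hu
      have := swap_form E h2 h3 h
      exact ⟨l, hl, this.2.1, h, this.2.2⟩
    obtain ⟨l0, hl0, hl0s, h0c, h0d, h0w⟩ := hform u0 hu0 hu0c
    obtain ⟨hsH, hs2, hs1⟩ := (hJ s).1 hs
    obtain ⟨e, he0, hee, rfl⟩ := exists_center hs2 hs1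
    rw [ln_tv hee (one_mem _) one_ne_zero he0, span_eq_iff he0] at hsc
    obtain ⟨m, hm, rfl⟩ := hsc
    have hcc := E.uu
    have hmm := nm_mem m
    have hmm0 : m * star m ≠ 0 := mul_ne_zero hm (star_ne_zero.2 hm)
    rw [tv_smul hcc (one_mem _), one_mul] at *
    have hg : ∀ u ∈ J, act u (Submodule.span K {c}) = Submodule.span K {d} → ∃ l : K, l ≠ 0 ∧
        star l = l ∧ ac u c = l • d ∧ ac u d = l⁻¹ • c ∧ ac u w = w ∧
        ac (u * u0) c = (l0 * l⁻¹) • c ∧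
        (u * u0) * tv c (m * star m) * (u * u0)⁻¹ = tv c (m * star m * (l0 * l⁻¹ * (l0 * l⁻¹))) := by
      intro u hu h
      obtain ⟨l, hl, hls, hc, hd, hw⟩ := hform u hu h
      have : ac (u * u0) c = (l0 * l⁻¹) • c := by rw [ac_mul, h0c, map_smul, hd, smul_smul]
      refine ⟨l, hl, hls, hc, hd, hw, this, ?_⟩
      rw [tv_conj hcc hmm, this, tv_smul hcc hmm, star_mul', star_inv₀, hls, hl0s]
    have hfx : ∀ l : K, star l = l → m * star m * (l0 * l⁻¹ * (l0 * l⁻¹)) ∈ Fx K := fun l hl =>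
      mul_mem hmm (mul_mem (mul_mem hl0s (inv_mem hl)) (mul_mem hl0s (inv_mem hl)))
    refine ⟨fun u hu => ?_, fun u hu u' hu' h => ?_, fun u hu hc => ?_⟩
    · obtain ⟨h1, h2⟩ := Finset.mem_filter.1 (Finset.mem_coe.1 hu)
      obtain ⟨l, hl, hls, -, -, -, -, h⟩ := hg u h1 h2
      have hne : m * star m * (l0 * l⁻¹ * (l0 * l⁻¹)) ≠ 0 := by
        have := inv_ne_zero hl
        exact mul_ne_zero hmm0 (mul_ne_zero (mul_ne_zero hl0 this) (mul_ne_zero hl0 this))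
      refine Finset.mem_coe.2 (Finset.mem_filter.2 ⟨?_, ?_⟩)
      · show (u * u0) * tv c (m * star m) * (u * u0)⁻¹ ∈ J
        have hH : (u * u0) * tv c (m * star m) * (u * u0)⁻¹ ∈ H := by
          have := mul_mem ((hJ u).1 h1).1 ((hJ u0).1 hu0).1
          exact mul_mem (mul_mem this hsH) (inv_mem this)
        rw [h] at hH ⊢
        exact hmem _ _ E.u_ne hcc (hfx l hls) hne hH
      · show ln ((u * u0) * tv c (m * star m) * (u * u0)⁻¹) = _
        rw [h, ln_tv hcc (hfx l hls) hne E.u_ne]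
    · obtain ⟨h1, h2⟩ := Finset.mem_filter.1 (Finset.mem_coe.1 hu)
      obtain ⟨h1', h2'⟩ := Finset.mem_filter.1 (Finset.mem_coe.1 hu')
      obtain ⟨l, hl, hls, a1, a2, a3, -, h3⟩ := hg u h1 h2
      obtain ⟨l', hl', hls', b1, b2, b3, -, h3'⟩ := hg u' h1' h2'
      simp only at h
      rw [h3, h3'] at h
      have h4 := tv_inj E.u_ne hcc (hfx l hls) (hfx l' hls') h
      have h5 := mul_left_cancel₀ hmm0 h4
      rw [← sq, ← sq] at h5
      have h6 := inv_injective (mul_left_cancel₀ hl0 (sq_inj h5))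
      subst h6
      exact E.ac_ext (by rw [a1, b1]) (by rw [a2, b2]) (by rw [a3, b3])
    · obtain ⟨l, hl, hls, a1, a2, a3, h, -⟩ := hg u hu hc
      refine ⟨l0 * l⁻¹, mul_ne_zero hl0 (inv_ne_zero hl), ?_, h, ?_, ?_⟩
      · rw [star_mul', star_inv₀, hls, hl0s]
      · rw [ac_mul, h0d, map_smul, a1, smul_smul, mul_inv, inv_inv]
      · rw [ac_mul, h0w, a3]
  have hcard := count_core J ln act ?_ ?_
  · have hcJ : Submodule.span K {c} ∈ J.image ln := Finset.mem_image.2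
      ⟨tv c 1, hmem c 1 E.u_ne E.uu (one_mem _) one_ne_zero hc1, ln_tv E.uu (one_mem _) one_ne_zero E.u_ne⟩
    have hdJ : Submodule.span K {d} ∈ J.image ln := Finset.mem_image.2
      ⟨tv d b, hmem d b E.v_ne E.vv hb hb0 hd, ln_tv E.vv hb hb0 E.v_ne⟩
    have hcd : Submodule.span K {d} ≠ Submodule.span K {c} := by
      intro h
      obtain ⟨k, -, rfl⟩ := (span_eq_iff E.v_ne).1 h
      have := E.uv
      rw [hf_smul_right, E.uu, mul_zero] at this
      exact zero_ne_one this
    have hcard' : (J.filter (fun u => act u (Submodule.span K {c}) = Submodule.span K {d})).card =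
        (J.filter (fun u => ln u = Submodule.span K {c})).card := by
      convert hcard _ hcJ _ hdJ hcd
    have hpos : 0 < (J.filter (fun u => act u (Submodule.span K {c}) = Submodule.span K {d})).card := by
      rw [hcard']
      exact Finset.card_pos.2 ⟨tv c 1, Finset.mem_filter.2 ⟨hmem c 1 E.u_ne E.uu (one_mem _) one_ne_zero hc1,
        ln_tv E.uu (one_mem _) one_ne_zero E.u_ne⟩⟩
    obtain ⟨u0, hu0⟩ := Finset.card_pos.1 hpos
    obtain ⟨hu0J, hu0c⟩ := Finset.mem_filter.1 hu0
    obtain ⟨k1, k2, k3⟩ := key c d w E (tv c 1) (hmem c 1 E.u_ne E.uu (one_mem _) one_ne_zero hc1)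
      (ln_tv E.uu (one_mem _) one_ne_zero E.u_ne) u0 hu0J hu0c
    constructor
    · simp only [act, map_span] at hu0c
      obtain ⟨l, hl, h⟩ := (span_eq_iff (ac_eq_zero.not.2 E.u_ne)).1 hu0c
      obtain ⟨h1, h2, h3⟩ := (hJ u0).1 hu0J
      have := swap_form E h2 h3 h
      exact ⟨u0, h1, l, hl, this.2.1, h, this.2.2⟩
    · intro a ha ha0 haH
      have hsurj := Finset.surjOn_of_injOn_of_card_le _ k1 k2 hcard'.ge
      obtain ⟨u, hu, hua⟩ := hsurj (Finset.mem_coe.2 (Finset.mem_filter.2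
        ⟨hmem c a E.u_ne E.uu ha ha0 haH, ln_tv E.uu ha ha0 E.u_ne⟩))
      obtain ⟨huJ, huc⟩ := Finset.mem_filter.1 (Finset.mem_coe.1 hu)
      obtain ⟨γ, hγ, hγs, g1, g2, g3⟩ := k3 u huJ huc
      refine ⟨γ, hγ, hγs, ?_, u * u0, mul_mem ((hJ u).1 huJ).1 ((hJ u0).1 hu0J).1, g1, g2, g3⟩
      simp only at hua
      rw [tv_conj E.uu (one_mem _), g1, tv_smul E.uu (one_mem _), hγs, one_mul] at hua
      exact tv_inj E.u_ne E.uu (mul_mem hγs hγs) ha hua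
  · intro l hl u hu hul
    obtain ⟨c, hc0, hcc, hcH, rfl⟩ := hline l hl
    obtain ⟨h1, h2, h3⟩ := (hJ u).1 hu
    constructor
    · refine Finset.mem_image.2 ⟨u * tv c 1 * u⁻¹, ?_, ?_⟩
      · have hH := mul_mem (mul_mem h1 hcH) (inv_mem h1)
        rw [tv_conj hcc (one_mem _)] at hH ⊢
        exact hmem _ _ (ac_eq_zero.not.2 hc0) (by rw [hf_ac, hcc]) (one_mem _) one_ne_zero hH
      · rw [tv_conj hcc (one_mem _), ln_tv (by rw [hf_ac, hcc]) (one_mem _) one_ne_zero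
          (ac_eq_zero.not.2 hc0)]
        exact (map_span _ _).symm
    · intro h
      simp only [act, map_span] at h
      obtain ⟨k, hk, h⟩ := (span_eq_iff (ac_eq_zero.not.2 hc0)).1 h
      obtain ⟨e, he0, hee, rfl⟩ := exists_center h2 h3
      obtain ⟨m, hm, h⟩ := fixed_center hc0 hcc he0 hee h
      rw [ln_tv hee (one_mem _) one_ne_zero he0] at hul
      exact hul ((span_eq_iff hc0).2 ⟨m, hm, h⟩).symm
  · intro l hl m hm hml
    obtain ⟨c, hc0, hcc, hcH, rfl⟩ := hline l hl
    obtain ⟨d, hd0, hdd, hdH, rfl⟩ := hline m hm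
    have hcd : hf c d ≠ 0 := by
      intro h
      obtain ⟨k, rfl⟩ := iso_perp hc0 hcc hdd (hf_comm_zero h)
      have hk : k ≠ 0 := by rintro rfl; exact hd0 (zero_smul _ _)
      exact hml ((span_eq_iff hd0).2 ⟨k, hk, rfl⟩)
    set d' := (star (hf c d))⁻¹ • d
    have hs0 : (star (hf c d))⁻¹ ≠ 0 := inv_ne_zero (star_ne_zero.2 hcd)
    have hd' : Submodule.span K {d} = Submodule.span K {d'} :=
      ((span_eq_iff (smul_ne_zero hs0 hd0)).2 ⟨_, hs0, rfl⟩).symm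
    obtain ⟨w, E⟩ := hyp_complete hcc (c := c) (v := d') (by simp [d', hdd])
      (by simp [d', hcd])
    rw [hd']
    suffices (J.filter (fun u => act u (Submodule.span K {c}) = Submodule.span K {d'})).card ≤
        (J.filter (fun u => ln u = Submodule.span K {c})).card by convert this
    rcases Finset.eq_empty_or_nonempty
      (J.filter (fun u => act u (Submodule.span K {c}) = Submodule.span K {d'})) with h | ⟨u0, hu0⟩
    · rw [h]; simp
    · obtain ⟨a1, a2⟩ := Finset.mem_filter.1 hu0
      obtain ⟨k1, k2, -⟩ := key c d' w E (tv c 1) (hmem _ _ hc0 hcc (one_mem _) one_ne_zero hcH)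
        (ln_tv hcc (one_mem _) one_ne_zero hc0) u0 a1 a2
      exact Finset.card_le_card_of_injOn _ k1 k2

end cnt

/-! ### At most one involution for each centre -/

section rhoone
variable {K : Type*} [Field K] [StarRing K] [UField K]

lemma tv_line {c d : V K} (hc0 : c ≠ 0) (hc : hf c c = 0) (hd0 : d ≠ 0) (hd : hf d d = 0)
    (h : tv c 1 = tv d 1) : ∃ k : K, k ≠ 0 ∧ c = k • d := by
  have := congrArg ln h
  rwa [ln_tv hc (one_mem _) one_ne_zero hc0, ln_tv hd (one_mem _) one_ne_zero hd0,
    span_eq_iff hc0] at this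

/-- The hypothesis `ρ = 1`: each isotropic line is the centre of at most one involution of `H`. -/
def Rho1 (H : Subgroup (SU K)) : Prop := ∀ (c : V K) (a : K), c ≠ 0 → hf c c = 0 → a ∈ Fx K → a ≠ 0 →
  tv c 1 ∈ H → tv c a ∈ H → a = 1

/-- If `ρ = 1`, every subgroup of `2`-power exponent with a central involution is cyclic. -/
lemma rho1_cyclic {H P : Subgroup (SU K)} (h1 : Rho1 H) (hPH : P ≤ H)
    (hP : ∀ g ∈ P, ∃ m, g ^ 2 ^ m = 1) {c : V K} (hc0 : c ≠ 0) (hc : hf c c = 0)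
    (hz : tv c 1 ∈ P) (hcom : ∀ g ∈ P, g * tv c 1 = tv c 1 * g) :
    (∀ g ∈ P, ac g c = c) ∧ ∃ g ∈ P, ∀ x ∈ P, x ∈ Subgroup.zpowers g := by
  have hcop : ∀ m, Nat.Coprime (2 ^ m) (qq K ^ 2 - 1) := by
    intro m
    apply Nat.Coprime.pow_left
    rw [Nat.coprime_two_left]
    have h2 : Even (qq K ^ 2) := (Nat.even_iff.2 (qq_even K)).pow_of_ne_zero (by norm_num)
    exact Nat.Even.sub_odd (Nat.one_le_iff_ne_zero.2 (pow_ne_zero _ (by have := qq_ge K; omega))) h2 odd_one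
  have hfix : ∀ g ∈ P, ac g c = c := by
    intro g hg
    have : tv (ac g c) 1 = tv c 1 := by
      rw [← tv_conj hc (one_mem _), hcom g hg, mul_inv_cancel_right]
    obtain ⟨k, hk, hk'⟩ := tv_line (ac_eq_zero.not.2 hc0) (by rw [hf_ac, hc]) hc0 hc this
    obtain ⟨m, hm⟩ := hP g hg
    have h3 := ac_pow_smul hk' (2 ^ m)
    rw [hm, ac_one] at h3
    have h4 : k ^ 2 ^ m = 1 := by
      have : (k ^ 2 ^ m - 1) • c = 0 := by rw [sub_smul, one_smul, ← h3, sub_self]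
      exact sub_eq_zero.1 ((smul_eq_zero.1 this).resolve_right hc0)
    rw [hk', root_one (hcop m) h4, one_smul]
  refine ⟨hfix, ?_⟩
  obtain ⟨v, w, E⟩ := exists_hyp_of_iso hc0 hc
  have hu : ∀ g ∈ P, ∃ α : K, ac g w = w + α • c ∧ g * g = tv c (α * star α) := fun g hg =>
    (hP g hg).elim fun m hm => uni E (hfix g hg) (hcop m) hm
  have hinv : ∀ x ∈ P, x * x = 1 → x = 1 ∨ x = tv c 1 := by
    intro x hx hx2
    by_cases hx1 : x = 1
    · exact Or.inl hx1
    right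
    obtain ⟨e, he0, hee, rfl⟩ := exists_center hx2 hx1
    obtain ⟨m, hm, rfl⟩ := fixed_center hc0 hc he0 hee (k := 1) (by rw [hfix _ hx, one_smul])
    have hm' : m⁻¹ • m • e = e := by rw [smul_smul, inv_mul_cancel₀ hm, one_smul]
    have h3 : tv e 1 = tv (m • e) (m⁻¹ * star m⁻¹) := by
      conv_lhs => rw [← hm', tv_smul hc (one_mem _), one_mul]
    have hne : m⁻¹ * star m⁻¹ ≠ 0 := mul_ne_zero (inv_ne_zero hm) (star_ne_zero.2 (inv_ne_zero hm))
    rw [h3] at hx ⊢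
    rw [h1 _ _ hc0 hc (nm_mem _) hne (hPH hz) (hPH hx)]
  have hzero : ∀ x ∈ P, ac x w = w → x = 1 ∨ x = tv c 1 := by
    intro x hx hxw
    obtain ⟨α, h, h'⟩ := hu x hx
    rw [hxw, left_eq_add, smul_eq_zero, or_iff_left hc0] at h
    rw [h, zero_mul, tv_zero hc] at h'
    exact hinv x hx h'
  have hone : ∀ x ∈ P, ∀ α : K, ac x w = w + α • c → α ≠ 0 → α * star α = 1 := by
    intro x hx α h hα
    obtain ⟨β, h2, h'⟩ := hu x hx
    rw [h, add_right_inj] at h2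
    have := smul_left_injective K hc0 h2
    subst this
    have hm := hPH (mul_mem hx hx)
    rw [h'] at hm
    exact h1 c _ hc0 hc (nm_mem _) (mul_ne_zero hα (star_ne_zero.2 hα)) (hPH hz) hm
  by_cases hall : ∀ x ∈ P, ac x w = w
  · refine ⟨_, hz, fun x hx => ?_⟩
    rcases hzero x hx (hall x hx) with rfl | rfl
    · exact one_mem _
    · exact Subgroup.mem_zpowers _
  push Not at hall
  obtain ⟨g, hg, hgw⟩ := hall
  obtain ⟨α, hα, hgg⟩ := hu g hg
  have hα0 : α ≠ 0 := by rintro rfl; rw [zero_smul, add_zero] at hα; exact hgw hα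
  have hαn := hone g hg α hα hα0
  rw [hαn] at hgg
  have hzg : tv c 1 ∈ Subgroup.zpowers g := hgg ▸ mul_mem (Subgroup.mem_zpowers g) (Subgroup.mem_zpowers g)
  have hmem : ∀ x, (x = 1 ∨ x = tv c 1) → x ∈ Subgroup.zpowers g := by
    rintro x (rfl | rfl)
    · exact one_mem _
    · exact hzg
  refine ⟨g, hg, fun x hx => ?_⟩
  obtain ⟨β, hβ, -⟩ := hu x hx
  by_cases hβ0 : β = 0
  · rw [hβ0, zero_smul, add_zero] at hβ
    exact hmem x (hzero x hx hβ)
  have hβn := hone x hx β hβ hβ0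
  have hxg : ac (x * g) w = w + (α + β) • c := by
    rw [ac_mul, hα, map_add, map_smul, hβ, hfix x hx, add_smul, add_assoc, add_comm (β • c)]
  have hsum : α + β = 0 := by
    by_contra hne
    have hs := hone _ (mul_mem hx hg) _ hxg hne
    rw [star_add] at hs
    have hz : α * star β + β * star α = 1 := by
      have : α * star β + β * star α = (α + β) * (star α + star β) - α * star α - β * star β := by ring
      rw [this, hs, hαn, hβn, sub_self, zero_sub]
      exact (neg_eq_of_add_eq_zero_left (c2 1))
    have hN : (α * star β) * (β * star α) = 1 := by
      calc _ = (α * star α) * (β * star β) := by ring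
        _ = 1 := by rw [hαn, hβn, mul_one]
    set ζ := α * star β with hζ
    have hsζ : star ζ = β * star α := by rw [hζ, star_mul', star_star, mul_comm]
    rw [← hsζ] at hz hN
    have hq : ζ * ζ + 1 = ζ := by
      calc ζ * ζ + 1 = ζ * ζ + ζ * star ζ := by rw [hN]
        _ = ζ * (ζ + star ζ) := by ring
        _ = ζ := by rw [hz, mul_one]
    have h3 : ζ ^ 3 = 1 := by
      have : ζ ^ 3 = (ζ * ζ + 1) * ζ - ζ := by ring
      rw [this, hq]
      have h5 : ζ * ζ = ζ - 1 := eq_sub_of_add_eq hq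
      have h6 : ζ * ζ - ζ = -1 := by rw [h5]; ring
      rw [h6]
      exact (neg_eq_of_add_eq_zero_left (c2 1))
    have h1' := cube_root h3 hN
    rw [h1', star_one] at hz
    exact one_ne_zero (hz.symm.trans (c2 1))
  rw [hsum, zero_smul, add_zero] at hxg
  have := hmem _ (hzero _ (mul_mem hx hg) hxg)
  exact (Subgroup.mul_mem_cancel_right _ (Subgroup.mem_zpowers g)).1 this

set_option maxHeartbeats 2000000 in
/-- The case where each line is the centre of at most one involution: Burnside's theorem gives a
normal `2`-complement. -/
lemma rho1_case {H : Subgroup (SU K)} (h1 : Rho1 H) (hinv : ∃ s ∈ H, s * s = 1 ∧ s ≠ 1) :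
    IsoP H ∨ AniP H ∨ MonP H ∨ I4 H := by
  obtain ⟨s, hs, hs2, hs1⟩ := hinv
  have : Fact (Nat.Prime 2) := ⟨Nat.prime_two⟩
  have hdvd : 2 ∣ Nat.card H := by
    have : orderOf (⟨s, hs⟩ : H) = 2 := orderOf_eq_prime
      (Subtype.ext (by simpa [sq] using hs2)) (fun h => hs1 (congrArg Subtype.val h))
    exact this ▸ orderOf_dvd_natCard _
  obtain ⟨P⟩ : Nonempty (Sylow 2 H) := inferInstance
  have hnt : Nontrivial P := by
    have := P.dvd_card_of_dvd_card hdvd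
    rw [← Finite.one_lt_card_iff_nontrivial]
    exact lt_of_lt_of_le one_lt_two (Nat.le_of_dvd Nat.card_pos this)
  have hZ := P.2.center_nontrivial
  obtain ⟨z, hz⟩ : ∃ z : Subgroup.center P, orderOf z = 2 := by
    refine exists_prime_orderOf_dvd_card' 2 ?_
    obtain ⟨k, hk⟩ := (P.2.to_subgroup (Subgroup.center P)).exists_card_eq
    rcases k with _ | k
    · have := Finite.one_lt_card (α := Subgroup.center P)
      omega
    · rw [hk]; exact dvd_pow_self _ (Nat.succ_ne_zero k)
  have hz2 : z ^ 2 = 1 := orderOf_dvd_iff_pow_eq_one.1 hz.dvd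
  have hz1 : z ≠ 1 := by rintro rfl; simp at hz
  let Q : Subgroup (SU K) := (P : Subgroup H).map H.subtype
  have hQH : Q ≤ H := Subgroup.map_subtype_le _
  obtain ⟨c, hc0, hc, hzc⟩ := exists_center (g := ((z : P) : H).1)
    (by have := congrArg (fun x : Subgroup.center P => ((x : P) : H).1) hz2; simpa [sq] using this)
    (fun h => hz1 (Subtype.ext (Subtype.ext (Subtype.ext h))))
  obtain ⟨hfix, g, hg, hgen⟩ := rho1_cyclic h1 hQH (P := Q) (by
      rintro _ ⟨g, hg, rfl⟩
      obtain ⟨k, hk⟩ := P.2 ⟨g, hg⟩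
      exact ⟨k, by simpa using congrArg (fun x : P => ((x : P) : H).1) hk⟩) hc0 hc
    (by rw [← hzc]; exact ⟨_, (z : P).2, rfl⟩) (by
      rintro _ ⟨g, hg, rfl⟩
      have := Subgroup.mem_center_iff.1 z.2 ⟨g, hg⟩
      rw [← hzc]
      exact congrArg (fun x : P => ((x : P) : H).1) this)
  have hcyc : IsCyclic P := by
    obtain ⟨g, hg, rfl⟩ := hg
    refine ⟨⟨g, hg⟩, fun x => ?_⟩
    obtain ⟨n, hn⟩ := Subgroup.mem_zpowers_iff.1 (hgen x.1.1 ⟨x.1, x.2, rfl⟩)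
    refine ⟨n, ?_⟩
    apply Subtype.ext; apply Subtype.ext
    simpa using hn
  have hmin : (Nat.card H).minFac = 2 := (Nat.minFac_eq_two_iff _).2 hdvd
  have hNC := hcyc.normalizer_le_centralizer hmin
  set N := (MonoidHom.transferSylow P hNC).ker with hN
  have hcomp : N.IsComplement' P := MonoidHom.ker_transferSylow_isComplement' P hNC
  have hodd : ¬ 2 ∣ Nat.card N := MonoidHom.not_dvd_card_ker_transferSylow P hNC
  by_cases hNb : N = ⊥
  · left
    rw [hNb, Subgroup.isComplement'_bot_left] at hcomp
    refine ⟨c, hc0, hc, fun h hh => ?_⟩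
    refine ⟨1, one_ne_zero, ?_⟩
    rw [one_smul]
    exact hfix h ⟨⟨h, hh⟩, by rw [hcomp]; trivial, rfl⟩
  · have hcard : Nat.card (N.map H.subtype) = Nat.card N :=
      (Nat.card_congr (N.equivMapOfInjective _ H.subtype_injective).toEquiv).symm
    refine odd_normal (O := N.map H.subtype) ?_ ?_ ?_
    · rw [hcard]; exact Nat.odd_iff.2 (Nat.two_dvd_ne_zero.1 hodd)
    · rw [Ne, Subgroup.map_eq_bot_iff_of_injective _ H.subtype_injective]; exact hNb
    · rintro h hh _ ⟨o, ho, rfl⟩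
      have hnorm : N.Normal := MonoidHom.normal_ker _
      exact ⟨_, hnorm.conj_mem o ho ⟨h, hh⟩, rfl⟩

end rhoone

/-! ### The subfield of transvection parameters -/

section rhotwo
variable {K : Type*} [Field K] [StarRing K] [UField K]

/-- `c` spans the centre of an involution of `H`, and is scaled so that `tv c 1` is in `H`. -/
def InX (H : Subgroup (SU K)) (c : V K) : Prop := c ≠ 0 ∧ hf c c = 0 ∧ tv c 1 ∈ H

lemma InX.map {H : Subgroup (SU K)} {c : V K} (hc : InX H c) {g : SU K} (hg : g ∈ H) :
    InX H (ac g c) := by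
  refine ⟨ac_eq_zero.not.2 hc.1, by rw [hf_ac, hc.2.1], ?_⟩
  rw [← tv_conj hc.2.1 (one_mem _)]
  exact mul_mem (mul_mem hg hc.2.2) (inv_mem hg)

lemma InX.exists_pair {H : Subgroup (SU K)} (hI : ¬ IsoP H) {c : V K} (hc : InX H c) :
    ∃ d, InX H d ∧ hf c d ≠ 0 := by
  by_contra! h
  refine hI ⟨c, hc.1, hc.2.1, fun g hg => ?_⟩
  obtain ⟨k, hk⟩ := iso_perp hc.1 hc.2.1 (hc.map hg).2.1 (hf_comm_zero (h _ (hc.map hg)))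
  exact mem_StL_of hc.1 hk

lemma InX.hyp {H : Subgroup (SU K)} {c d : V K} (hc : InX H c) (hd : InX H d) (h : hf c d ≠ 0) :
    ∃ w, Hyp c ((star (hf c d))⁻¹ • d) w :=
  hyp_complete hc.2.1 (by simp [hd.2.1]) (by simp [h])

lemma InX.smul {H : Subgroup (SU K)} {d : V K} (hd : InX H d) {k : K} (hk : k ≠ 0) :
    ∃ b ∈ Fx K, b ≠ 0 ∧ tv (k • d) b ∈ H := by
  have h : k * star k ≠ 0 := mul_ne_zero hk (star_ne_zero.2 hk)
  refine ⟨(k * star k)⁻¹, inv_mem (nm_mem k), inv_ne_zero h, ?_⟩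
  rw [tv_smul hd.2.1 (inv_mem (nm_mem k)), inv_mul_cancel₀ h]
  exact hd.2.2

/-- The parameters at a centre are closed under multiplication: conjugation by the dilation of
`dil_core` multiplies the parameters by `a`. -/
lemma InX.mul_mem {H : Subgroup (SU K)} (hI : ¬ IsoP H) {c : V K} (hc : InX H c) {a b : K}
    (ha : a ∈ Fx K) (hb : b ∈ Fx K) (haH : tv c a ∈ H) (hbH : tv c b ∈ H) : tv c (a * b) ∈ H := by
  by_cases ha0 : a = 0
  · rw [ha0, zero_mul, tv_zero hc.2.1]; exact one_mem _
  obtain ⟨d, hd, hcd⟩ := hc.exists_pair hI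
  obtain ⟨w, E⟩ := hc.hyp hd hcd
  obtain ⟨t, ht, ht0, htH⟩ := hd.smul (inv_ne_zero (star_ne_zero.2 hcd))
  obtain ⟨-, h⟩ := dil_core E hc.2.2 ht ht0 htH
  obtain ⟨γ, hγ, hγs, hγa, g, hg, h1, -, -⟩ := h a ha ha0 haH
  have h2 : g * tv c b * g⁻¹ ∈ H := H.mul_mem (H.mul_mem hg hbH) (inv_mem hg)
  rwa [tv_conj hc.2.1 hb, h1, tv_smul hc.2.1 hb, hγs, hγa, mul_comm] at h2

/-- The parameters at two centres differ by a factor. -/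
lemma InX.transfer {H : Subgroup (SU K)} {c e : V K} (hc : InX H c) (he : InX H e) :
    ∃ κ ∈ Fx K, κ ≠ 0 ∧ ∀ a ∈ Fx K, tv c a ∈ H → tv e (a * κ) ∈ H := by
  obtain ⟨k, hk, g, hg, hgc⟩ : ∃ k : K, k ≠ 0 ∧ ∃ g ∈ H, ac g c = k • e := by
    by_cases h0 : hf c e = 0
    · obtain ⟨k, rfl⟩ := iso_perp he.1 he.2.1 hc.2.1 h0
      exact ⟨k, by rintro rfl; exact hc.1 (zero_smul _ _), 1, one_mem _, by rw [ac_one]⟩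
    · obtain ⟨w, E⟩ := hc.hyp he h0
      obtain ⟨t, ht, ht0, htH⟩ := he.smul (inv_ne_zero (star_ne_zero.2 h0))
      obtain ⟨⟨u, hu, l, hl, -, h, -⟩, -⟩ := dil_core E hc.2.2 ht ht0 htH
      exact ⟨_, mul_ne_zero hl (inv_ne_zero (star_ne_zero.2 h0)), u, hu, by rw [h, smul_smul]⟩
  refine ⟨k * star k, nm_mem k, mul_ne_zero hk (star_ne_zero.2 hk), fun a ha haH => ?_⟩
  have h2 : g * tv c a * g⁻¹ ∈ H := H.mul_mem (H.mul_mem hg haH) (inv_mem hg)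
  rwa [tv_conj hc.2.1 ha, hgc, tv_smul he.2.1 ha] at h2

/-- The parameters of the transvections of `H`, with centres normalized by `InX`, form the
subfield `F`. -/
structure BigF (H : Subgroup (SU K)) (F : Subfield K) : Prop where
  le : F ≤ Fx K
  mem : ∀ c, InX H c → ∀ a ∈ Fx K, (tv c a ∈ H ↔ a ∈ F)

/-- The parameters at a centre are the same subfield for all centres normalized by `InX`. -/
lemma exists_bigF {H : Subgroup (SU K)} (hI : ¬ IsoP H) {c : V K} (hc : InX H c) :
    ∃ F, BigF H F := by
  have hmul : ∀ {a b : K}, (a ∈ Fx K ∧ tv c a ∈ H) → (b ∈ Fx K ∧ tv c b ∈ H) →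
      (a * b ∈ Fx K ∧ tv c (a * b) ∈ H) := fun {a b} ha hb =>
    ⟨mul_mem ha.1 hb.1, hc.mul_mem hI ha.1 hb.1 ha.2 hb.2⟩
  have hpow : ∀ {a : K}, (a ∈ Fx K ∧ tv c a ∈ H) → ∀ n : ℕ, a ^ n ∈ Fx K ∧ tv c (a ^ n) ∈ H := by
    intro a ha n
    induction n with
    | zero => rw [pow_zero]; exact ⟨one_mem _, hc.2.2⟩
    | succ n ih => rw [pow_succ]; exact hmul ih ha
  have hinv : ∀ a : K, (a ∈ Fx K ∧ tv c a ∈ H) → (a⁻¹ ∈ Fx K ∧ tv c a⁻¹ ∈ H) := by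
    intro a ha
    by_cases h0 : a = 0
    · rw [h0, inv_zero]; rwa [h0] at ha
    have := Fintype.ofFinite K
    have h1 := FiniteField.pow_card_sub_one_eq_one a h0
    have hK : 1 < Fintype.card K := Fintype.one_lt_card
    have h2 : a⁻¹ = a ^ (Fintype.card K - 2) := by
      refine inv_eq_of_mul_eq_one_right ?_
      rw [← pow_succ', ← h1]
      congr 1; omega
    rw [h2]
    exact hpow ha _
  let F : Subfield K :=
    { carrier := {a | a ∈ Fx K ∧ tv c a ∈ H}
      mul_mem' := hmul
      one_mem' := ⟨one_mem _, hc.2.2⟩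
      add_mem' := fun {a b} ha hb => ⟨add_mem ha.1 hb.1, by
        rw [← tv_mul hc.2.1 ha.1 hb.1]; exact H.mul_mem ha.2 hb.2⟩
      zero_mem' := ⟨zero_mem _, by rw [tv_zero hc.2.1]; exact one_mem _⟩
      neg_mem' := fun {a} ha => by
        rw [neg_eq_of_add_eq_zero_left (c2 a)]; exact ha
      inv_mem' := hinv }
  have hFm : ∀ a, a ∈ F ↔ a ∈ Fx K ∧ tv c a ∈ H := fun a => Iff.rfl
  refine ⟨F, fun a ha => ha.1, fun e he a ha => ⟨fun h => ?_, fun h => ?_⟩⟩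
  · obtain ⟨κ, hκ, hκ0, hT⟩ := he.transfer hc
    have h1 : κ ∈ F := ⟨hκ, by have := hT 1 (one_mem _) he.2.2; rwa [one_mul] at this⟩
    have h2 : a * κ ∈ F := ⟨mul_mem ha hκ, hT a ha h⟩
    have := mul_mem h2 (inv_mem h1)
    rwa [mul_inv_cancel_right₀ hκ0] at this
  · obtain ⟨κ, hκ, hκ0, hT⟩ := hc.transfer he
    have h1 : tv e κ ∈ H := by have := hT 1 (one_mem _) hc.2.2; rwa [one_mul] at this
    obtain ⟨κ', hκ', hκ0', hT'⟩ := he.transfer hc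
    have h3 : κ' ∈ F := ⟨hκ', by have := hT' 1 (one_mem _) he.2.2; rwa [one_mul] at this⟩
    have h2 : κ ∈ F := by
      have h4 : κ * κ' ∈ F := ⟨mul_mem hκ hκ', hT' κ hκ h1⟩
      have := mul_mem h4 (inv_mem h3)
      rwa [mul_inv_cancel_right₀ hκ0'] at this
    have h5 : a * κ⁻¹ ∈ F := mul_mem h (inv_mem h2)
    have := hT _ h5.1 h5.2
    rwa [inv_mul_cancel_right₀ hκ0] at this

/-- Norms of the values of the Hermitian form on normalized centres lie in `F`, if `F` has more
than two elements. -/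
lemma BigF.norm {H : Subgroup (SU K)} {F : Subfield K} (B : BigF H F) {a : K} (ha : a ∈ F)
    (ha0 : a ≠ 0) (ha1 : a ≠ 1) {c d : V K} (hc : InX H c) (hd : InX H d) :
    hf c d * star (hf c d) ∈ F := by
  by_cases hcd : hf c d = 0
  · rw [hcd, zero_mul]; exact zero_mem _
  obtain ⟨w, E⟩ := hc.hyp hd hcd
  have haH := (B.mem c hc a (B.le ha)).2 ha
  set β := hf c d with hβ
  set N := β * star β with hN
  have hsβ : star β ≠ 0 := star_ne_zero.2 hcd
  have hN0 : N ≠ 0 := mul_ne_zero hcd hsβ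
  have hNs : star N = N := nm_mem β
  obtain ⟨t, ht, ht0, htH⟩ := hd.smul (inv_ne_zero hsβ)
  obtain ⟨γ, hγ, hγs, hγa, g, hg, g1, g2, g3⟩ := (dil_core E hc.2.2 ht ht0 htH).2 a (B.le ha) ha0 haH
  have hf' : InX H (ac (tv d 1) c) := hc.map hd.2.2
  set d' := (star β)⁻¹ • d with hd'
  have hN1 : N⁻¹ • ac (tv d 1) c = N⁻¹ • c + d' := by
    rw [tv_apply hd.2.1 (one_mem _), one_mul, ← hβ, hd', hN, smul_add, smul_smul, mul_inv,
      mul_assoc, mul_comm (star β)⁻¹, inv_mul_cancel_left₀ hcd]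
  clear_value d' N
  obtain ⟨t', ht', ht0', htH'⟩ := hf'.smul (inv_ne_zero hN0)
  rw [hN1] at htH'
  have E' : Hyp c (N⁻¹ • c + d') w := by
    refine ⟨E.uu, ?_, ?_, E.uw, ?_, E.ww⟩
    · simp only [hf_add_left, hf_add_right, hf_smul_left, hf_smul_right, E.uu, E.uv, E.vu, E.vv,
        star_inv₀, hNs, mul_zero, mul_one, zero_add, add_zero]
      exact c2 _
    · simp [E.uu, E.uv]
    · simp [E.uw, E.vw]
  obtain ⟨γ', hγ', hγs', hγa', h, hh, h1, h2, h3⟩ :=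
    (dil_core E' hc.2.2 ht' ht0' htH').2 a (B.le ha) ha0 haH
  have hγγ : γ' = γ := sq_inj (by rw [sq, sq, hγa, hγa'])
  subst hγγ
  have htF : N⁻¹ * (a⁻¹ - 1) ∈ Fx K := mul_mem (inv_mem hNs)
    (sub_mem (inv_mem (B.le ha)) (one_mem _))
  have key : h = g * tv c (N⁻¹ * (a⁻¹ - 1)) := by
    refine E.ac_ext ?_ ?_ ?_
    · rw [ac_mul, tv_apply hc.2.1 htF, hc.2.1, mul_zero, zero_smul, add_zero, h1, g1]
    · have e1 : ac h d' = γ'⁻¹ • (N⁻¹ • c + d') - N⁻¹ • γ' • c := by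
        rw [← h2, ← h1, ← map_smul, ← map_sub, add_sub_cancel_left]
      have e2 : N⁻¹ * ((γ' * γ')⁻¹ - 1) * γ' = N⁻¹ * γ'⁻¹ - N⁻¹ * γ' := by
        field_simp
      rw [e1, ac_mul, tv_apply hc.2.1 htF, E.vu, mul_one, map_add, map_smul, g1, g2, ← hγa, smul_smul,
        smul_smul, e2]
      module
    · rw [ac_mul, tv_apply hc.2.1 htF, E.wu, mul_zero, zero_smul, add_zero, h3, g3]
  have hmem : tv c (N⁻¹ * (a⁻¹ - 1)) ∈ H := by
    have := H.mul_mem (inv_mem hg) hh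
    rwa [key, inv_mul_cancel_left] at this
  have hF := (B.mem c hc _ htF).1 hmem
  have ha2 : a⁻¹ - 1 ∈ F := sub_mem (inv_mem ha) (one_mem _)
  have ha3 : a⁻¹ - 1 ≠ 0 := fun h => ha1 (inv_eq_one.1 (sub_eq_zero.1 h))
  have := inv_mem (mul_mem hF (inv_mem ha2))
  rwa [mul_inv_cancel_right₀ ha3, inv_inv] at this

/-- Traces of cyclic products of the Hermitian form, obtained from `BigF.norm` by moving `c` with
the transvection `tv d 1`. -/
lemma BigF.trace {H : Subgroup (SU K)} {F : Subfield K} (B : BigF H F) {a : K} (ha : a ∈ F)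
    (ha0 : a ≠ 0) (ha1 : a ≠ 1) {c d e : V K} (hc : InX H c) (hd : InX H d) (he : InX H e) :
    hf c d * hf d e * hf e c + star (hf c d * hf d e * hf e c) ∈ F := by
  have h1 := B.norm ha ha0 ha1 (hc.map hd.2.2) he
  rw [tv_apply hd.2.1 (one_mem _), one_mul, hf_add_left, hf_smul_left] at h1
  have h2 := B.norm ha ha0 ha1 hc he
  have h3 := mul_mem (B.norm ha ha0 ha1 hc hd) (B.norm ha ha0 ha1 hd he)
  have := sub_mem (sub_mem h1 h2) h3
  convert this using 1
  simp only [star_add, star_mul', hf_star]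
  ring

/-- A subfield containing the trace and the norm of an element of nonzero trace is all of `Fx`:
the degree of `Fx` over a proper subfield is even, because it divides `2 ^ n`. -/
lemma subfield_eq {F : Subfield K} (hF : F ≤ Fx K) {τ : K} (hN : τ * star τ ∈ F)
    (hT : τ + star τ ∈ F) (hT0 : τ + star τ ≠ 0) : F = Fx K := by
  let _ : Algebra F (Fx K) := (Subfield.inclusion hF).toAlgebra
  have h1 : Nat.card (Fx K) = Nat.card F ^ Module.finrank F (Fx K) := Module.natCard_eq_pow_finrank
  obtain ⟨n, hn, hq, hcK, hs⟩ := qq_spec K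
  rw [card_Fx] at h1
  set k := Module.finrank F (Fx K) with hk
  have hk0 : k ≠ 0 := by
    intro h
    rw [h, pow_zero] at h1
    have := qq_ge K
    omega
  obtain ⟨m, -, hm⟩ := (Nat.dvd_prime_pow Nat.prime_two).1
    (show Nat.card F ∣ 2 ^ 2 ^ n by rw [← hq, h1]; exact dvd_pow_self _ hk0)
  have hmk : m * k = 2 ^ n := by
    rw [hm, ← pow_mul, hq] at h1
    exact (Nat.pow_right_injective (le_refl 2) h1).symm
  obtain ⟨j, -, hj⟩ := (Nat.dvd_prime_pow Nat.prime_two).1 (show k ∣ 2 ^ n from ⟨m, by rw [← hmk, mul_comm]⟩)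
  rcases j with _ | j
  · refine SetLike.coe_injective (Set.eq_of_subset_of_ncard_le hF ?_ (Set.toFinite _))
    change Nat.card (Fx K) ≤ Nat.card F
    rw [card_Fx, h1, hj, pow_zero, pow_one]
  exfalso
  set f := Nat.card F with hf
  have hpow : ∀ a ∈ F, a ^ f = a := by
    intro a ha
    have := Fintype.ofFinite F
    have h := FiniteField.pow_card (⟨a, ha⟩ : F)
    rw [← Nat.card_eq_fintype_card] at h
    exact congrArg Subtype.val h
  have hfr : ∀ x y : K, (x + y) ^ f = x ^ f + y ^ f := fun x y => by
    rw [hm]; exact add_pow_char_pow x y 2 m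
  -- `τ ^ f` is a root of the minimal polynomial of `τ`
  have hroot : (τ ^ f - τ) * (τ ^ f - star τ) = 0 := by
    have e1 : τ * τ = (τ + star τ) * τ - τ * star τ := by ring
    have e2 := congrArg (· ^ f) (sub_eq_iff_eq_add.1 e1.symm)
    have hT' : τ ^ f + star τ ^ f = τ + star τ := by rw [← hfr, hpow _ hT]
    simp only [hfr, mul_pow] at e2
    rw [hT'] at e2
    have e3 : τ ^ f * star τ ^ f = τ * star τ := by rw [← mul_pow]; exact hpow _ hN
    rw [e3] at e2
    have : (τ ^ f - τ) * (τ ^ f - star τ) = τ ^ f * τ ^ f + τ * star τ - (τ + star τ) * τ ^ f := by ring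
    rw [this, e2, sub_self]
  have hff : (τ ^ f) ^ f = τ := by
    rcases mul_eq_zero.1 hroot with h | h
    · rw [sub_eq_zero.1 h, sub_eq_zero.1 h]
    · have h' := sub_eq_zero.1 h
      have : star (τ ^ f) = τ := by rw [h', star_star]
      rw [star_pow, ← h'] at this
      exact this
  have hall : ∀ i : ℕ, τ ^ (f * f) ^ i = τ := by
    intro i
    induction i with
    | zero => rw [pow_zero, pow_one]
    | succ i ih => rw [pow_succ, pow_mul, ih, pow_mul, hff]
  have hq2 : qq K = (f * f) ^ 2 ^ j := by
    rw [h1, hj, ← sq, ← pow_mul, pow_succ']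
  have : star τ = τ := by rw [star_eq, hq2, hall]
  rw [this] at hT0
  exact hT0 (c2 τ)

end rhotwo

/-! ### The exhaustion theorem -/

section rhotwob
variable {K : Type*} [Field K] [StarRing K] [UField K]

lemma InX.exists_third {H : Subgroup (SU K)} (hA : ¬ AniP H) {c d w : V K} (hc : InX H c)
    {l : K} (hd : InX H d) (E : Hyp c (l • d) w) : ∃ e, InX H e ∧ hf e w ≠ 0 := by
  by_contra! h
  refine hA ⟨w, E.ww, fun g hg => ?_⟩
  have h1 : hf (ac g w) c = 0 := by
    rw [hf_ac_left]; exact hf_comm_zero (h _ (hc.map (inv_mem hg)))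
  have h2 : hf (ac g w) (l • d) = 0 := by
    rw [hf_smul_right, hf_ac_left, hf_comm_zero (h _ (hd.map (inv_mem hg))), mul_zero]
  have := E.expand (ac g w)
  rw [h1, h2, zero_smul, zero_smul, zero_add, zero_add] at this
  exact mem_StL_of E.w_ne this

/-- If `H` has a centre carrying more than one involution and fixes neither an isotropic nor an
anisotropic line, then its transvection parameters are all of `Fx K`. -/
lemma BigF.eq_Fx {H : Subgroup (SU K)} {F : Subfield K} (B : BigF H F) {a : K} (ha : a ∈ F)
    (ha0 : a ≠ 0) (ha1 : a ≠ 1) (hI : ¬ IsoP H) (hA : ¬ AniP H) {c : V K} (hc : InX H c) :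
    F = Fx K := by
  obtain ⟨d, hd, hcd⟩ := hc.exists_pair hI
  obtain ⟨w, E⟩ := hc.hyp hd hcd
  obtain ⟨e, he, hew⟩ := InX.exists_third hA hc hd E
  have hdc : hf d c = star (hf c d) := (hf_star c d).symm
  have hs0 : star (hf c d) ≠ 0 := star_ne_zero.2 hcd
  refine subfield_eq B.le (τ := hf c e * hf e d * hf d c) ?_ (B.trace ha ha0 ha1 hc he hd) ?_
  · have := mul_mem (mul_mem (B.norm ha ha0 ha1 hc he) (B.norm ha ha0 ha1 he hd))
      (B.norm ha ha0 ha1 hd hc)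
    convert this using 1
    simp only [star_mul']; ring
  · have h0 := E.hf_eq e e
    rw [he.2.1, hf_smul_left, hf_smul_right, star_inv₀, star_star] at h0
    have hδ : hf e w * hf w e ≠ 0 := mul_ne_zero hew fun h => hew (hf_comm_zero h)
    intro hT
    simp only [star_mul', hf_star] at hT
    rw [hdc] at hT
    have h1 : (hf c d * star (hf c d)) * (hf e w * hf w e) = 0 := by
      have h2 : (hf c d)⁻¹ * hf e d * hf c e + hf e c * ((star (hf c d))⁻¹ * hf d e) =
          hf e w * hf w e := by
        rw [← add_eq_zero', ← h0]
      rw [← h2, ← hT]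
      field_simp
    exact mul_ne_zero (mul_ne_zero hcd hs0) hδ h1

/-- If every isotropic vector-centre `c` of `H` carries all transvections `tv c a`, then every
isotropic line is a centre: otherwise `(q + 1) * q` centres would inject into `K` by projection
from a missing isotropic line. -/
lemma InX.all {H : Subgroup (SU K)} (hI : ¬ IsoP H) (hA : ¬ AniP H)
    (hF : ∀ c, InX H c → ∀ a ∈ Fx K, tv c a ∈ H) {c : V K} (hc : InX H c) : H = ⊤ := by
  have hsm : ∀ c, InX H c → ∀ k : K, k ≠ 0 → InX H (k • c) := by
    intro c hc k hk
    refine ⟨smul_ne_zero hk hc.1, by simp [hc.2.1], ?_⟩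
    rw [tv_smul hc.2.1 (one_mem _), one_mul]
    exact hF c hc _ (nm_mem k)
  have hcomb : ∀ v v', InX H v → InX H v' → ∀ k k' : K, k • v + k' • v' ≠ 0 →
      hf (k • v + k' • v') (k • v + k' • v') = 0 → InX H (k • v + k' • v') := by
    intro v v' hv hv' k k' h0 hiso
    by_cases hk : k = 0
    · subst hk
      rw [zero_smul, zero_add] at *
      exact hsm v' hv' k' (by rintro rfl; exact h0 (zero_smul _ _))
    by_cases hvv : hf v' v = 0
    · obtain ⟨m, rfl⟩ := iso_perp hv.1 hv.2.1 hv'.2.1 hvv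
      rw [smul_smul, ← add_smul] at h0 ⊢
      exact hsm v hv _ (by rintro h; exact h0 (by rw [h, zero_smul]))
    have hvv' : hf v v' ≠ 0 := fun h => hvv (hf_comm_zero h)
    simp only [hf_add_left, hf_add_right, hf_smul_left, hf_smul_right, hv.2.1, hv'.2.1, mul_zero,
      zero_add, add_zero] at hiso
    have ht := add_eq_zero'.1 hiso
    have ha : k' * (k * hf v v')⁻¹ ∈ Fx K := by
      rw [mem_Fx]
      simp only [star_mul', star_inv₀, hf_star]
      have := star_ne_zero.2 hk
      field_simp
      linear_combination -ht
    have hz : k • v + k' • v' = k • ac (tv v' (k' * (k * hf v v')⁻¹)) v := by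
      rw [tv_apply hv'.2.1 ha, smul_add, smul_smul]
      congr 2
      field_simp
    rw [hz]
    exact hsm _ (hv.map (hF v' hv' _ ha)) k hk
  obtain ⟨d0, hd0, hcd0⟩ := hc.exists_pair hI
  obtain ⟨w, E⟩ := hc.hyp hd0 hcd0
  obtain ⟨e, he, hew⟩ := InX.exists_third hA hc hd0 E
  have hd := hsm d0 hd0 _ (inv_ne_zero (star_ne_zero.2 hcd0))
  set d := (star (hf c d0))⁻¹ • d0
  clear_value d
  refine gen_tv fun x hx0 hx => ?_
  by_contra hxH
  have hxX : ∀ v, InX H v → hf v x ≠ 0 := by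
    intro v hv h
    obtain ⟨k, rfl⟩ := iso_perp hv.1 hv.2.1 hx (hf_comm_zero h)
    exact hxH (hsm v hv k (by rintro rfl; exact hx0 (zero_smul _ _))).2.2
  obtain ⟨y, w', E'⟩ := exists_hyp_of_iso hx0 hx
  let P : Option (Fx K) → V K := fun i => i.elim d fun i => c + (i : K) • d
  have hPX : ∀ i, InX H (P i) := by
    rintro (_ | i)
    · exact hd
    · have h1 : ((1 : K) • c + (i : K) • d) ≠ 0 := by
        intro h
        have := congrArg (fun z => hf z d) h
        simp [E.uv, E.vv] at this
      have := hcomb c d hc hd 1 i h1 (by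
        have hi : star (i : K) = i := i.2
        simp [E.uu, E.uv, E.vu, E.vv, hi, c2])
      rwa [one_smul] at this
  have hPw : ∀ i, hf (P i) w = 0 := by
    rintro (_ | i)
    · exact E.vw
    · simp [P, E.uw, E.vw]
  have hPe : ∀ i, hf (P i) e ≠ 0 := by
    intro i h
    obtain ⟨k, rfl⟩ := iso_perp (hPX i).1 (hPX i).2.1 he.2.1 (hf_comm_zero h)
    apply hew
    rw [hf_smul_left, hPw, mul_zero]
  let v : Option (Fx K) × Fx K → V K := fun p => P p.1 + ((p.2 : K) * hf (P p.1) e) • e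
  have hvX : ∀ p, InX H (v p) := by
    intro p
    have := (hPX p.1).map (hF e he p.2 p.2.2)
    rwa [tv_apply he.2.1 p.2.2] at this
  have hinj : Function.Injective fun p => hf (v p) w' * (hf (v p) x)⁻¹ := by
    rintro ⟨i, a⟩ ⟨j, b⟩ h
    simp only at h
    have hvx := hxX _ (hvX (i, a))
    have hvx' := hxX _ (hvX (j, b))
    set z := hf (v (j, b)) x • v (i, a) + hf (v (i, a)) x • v (j, b) with hz
    have hz1 : hf z x = 0 := by
      rw [hz, hf_add_left, hf_smul_left, hf_smul_left, mul_comm, c2]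
    have hz2 : hf z w' = 0 := by
      rw [hz, hf_add_left, hf_smul_left, hf_smul_left, add_eq_zero']
      field_simp at h
      linear_combination h
    have hz3 : z = hf z y • x := by
      have := E'.expand z
      rwa [hz1, hz2, zero_smul, zero_smul, add_zero, add_zero] at this
    have hz0 : z = 0 := by
      by_contra h0
      have hzX : InX H z := hcomb _ _ (hvX _) (hvX _) _ _ h0 (by
        rw [← hz, hz3, hf_smul_left, hf_smul_right, hx, mul_zero, mul_zero])
      refine hxX z hzX hz1
    have hμ : v (i, a) = (hf (v (i, a)) x * (hf (v (j, b)) x)⁻¹) • v (j, b) := by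
      have h1 : hf (v (j, b)) x • v (i, a) = hf (v (i, a)) x • v (j, b) := by
        rw [← sub_eq_zero, sub_eq_add_neg, vneg]; exact hz0
      rw [mul_comm, mul_smul, ← h1, smul_smul, inv_mul_cancel₀ hvx', one_smul]
    set μ := hf (v (i, a)) x * (hf (v (j, b)) x)⁻¹
    clear_value μ
    have hw : (a : K) * hf (P i) e = μ * (b * hf (P j) e) := by
      have := congrArg (fun t => hf t w) hμ
      simp only [v, hf_add_left, hf_smul_left, hPw, zero_add] at this
      exact mul_right_cancel₀ hew (by linear_combination this)
    have hP : P i = μ • P j := by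
      simp only [v] at hμ
      rw [smul_add, smul_smul, ← hw] at hμ
      exact add_right_cancel hμ
    have e1 := congrArg (fun t => hf t d) hP
    have e2 := congrArg (fun t => hf t c) hP
    have hij : i = j ∧ μ = 1 := by
      rcases i with _ | i <;> rcases j with _ | j
      · simp [P, E.uu, E.uv, E.vu, E.vv] at e1 e2
        exact ⟨rfl, e2.symm⟩
      · simp [P, E.uu, E.uv, E.vu, E.vv] at e1 e2
        rw [← e1, zero_mul] at e2
        exact absurd e2 one_ne_zero
      · simp [P, E.uu, E.uv, E.vu, E.vv] at e1 e2
      · simp [P, E.uu, E.uv, E.vu, E.vv] at e1 e2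
        rw [← e1, one_mul] at e2
        exact ⟨by rw [Subtype.ext e2], e1.symm⟩
    obtain ⟨rfl, rfl⟩ := hij
    rw [one_mul] at hw
    rw [Subtype.ext (mul_right_cancel₀ (hPe i) hw)]
  have hcard := Nat.card_le_card_of_injective _ hinj
  rw [Nat.card_prod, Finite.card_option, card_Fx, card_K] at hcard
  have := qq_ge K
  nlinarith

/-- A proper subgroup fixes an isotropic line, fixes an anisotropic line, permutes an orthonormal
frame of lines, or lies in the normalizer of a Singer cycle. -/
lemma exhaust (H : Subgroup (SU K)) : H = ⊤ ∨ IsoP H ∨ AniP H ∨ MonP H ∨ I4 H := by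
  by_cases hinv : ∃ s ∈ H, s * s = 1 ∧ s ≠ 1
  · by_cases h1 : Rho1 H
    · exact Or.inr (rho1_case h1 hinv)
    by_cases hI : IsoP H
    · exact Or.inr (Or.inl hI)
    by_cases hA : AniP H
    · exact Or.inr (Or.inr (Or.inl hA))
    left
    simp only [Rho1, not_forall] at h1
    obtain ⟨c, a, hc0, hcc, ha, ha0, hc1, haH, ha1⟩ := h1
    have hc : InX H c := ⟨hc0, hcc, hc1⟩
    obtain ⟨F, B⟩ := exists_bigF hI hc
    have haF := (B.mem c hc a ha).1 haH
    have hF := B.eq_Fx haF ha0 ha1 hI hA hc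
    exact InX.all hI hA (fun c hc a ha => (B.mem c hc a ha).2 (hF ▸ ha)) hc
  · push Not at hinv
    have hodd := odd_of_no_invol H hinv
    by_cases hb : H = ⊥
    · obtain ⟨u, v, w, E⟩ := exists_hyp (K := K)
      exact Or.inr (Or.inl ⟨u, E.u_ne, E.uu, hb ▸ bot_le⟩)
    · exact Or.inr (odd_normal hodd hb fun h hh o ho => mul_mem (mul_mem hh ho) (inv_mem hh))

end rhotwob

/-! ### Representing the containment conditions by subgroups -/

section fin
variable {K : Type*} [Field K] [StarRing K] [UField K]

/-- The subgroup `M` represents the condition `P`: the subgroups satisfying `P` are those with a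
conjugate inside `M`. -/
def Rep {G : Type*} [Group G] (P : Subgroup G → Prop) (M : Subgroup G) : Prop :=
  ∀ H, cle H M ↔ P H

/-- The order of `M` is not a divisor of six, for the reason that `M` has an element `d` with
`d ^ 6 ≠ 1`. -/
def Big {G : Type*} [Group G] (M : Subgroup G) : Prop := ∃ d ∈ M, d ^ 6 ≠ 1

lemma Big.card {G : Type*} [Group G] {M : Subgroup G} (h : Big M) : ¬ Nat.card M ∣ 6 := by
  obtain ⟨d, hd, h6⟩ := h
  rintro ⟨k, hk⟩
  apply h6
  have h1 : d ^ Nat.card M = 1 :=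
    congrArg Subtype.val (pow_card_eq_one' : (⟨d, hd⟩ : M) ^ Nat.card M = 1)
  rw [hk, pow_mul, h1, one_pow]

lemma StL_move {c c' : V K} {g : SU K} {k : K} (hk : k ≠ 0) (hg : ac g c = k • c') {h : SU K} :
    g * h * g⁻¹ ∈ StL c' ↔ h ∈ StL c := by
  rw [← conj_StL (g := g) (c := c), hg, StL_smul hk]

lemma StL_le {c : V K} {H : Subgroup (SU K)} {g : SU K} (hg : ∀ h ∈ H, g * h * g⁻¹ ∈ StL c) :
    H ≤ StL (ac g⁻¹ c) := fun h hh =>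
  (StL_move (k := 1) one_ne_zero (by simp)).1 (hg h hh)

/-- A hyperbolic frame and an orthonormal frame with a common unit vector, and an element fixing
all lines in question which is a scalar of large order on the orthogonal plane. -/
lemma exists_frame (K : Type*) [Field K] [StarRing K] [UField K] :
    ∃ (u v w : V K) (e : Fin 3 → V K) (d : SU K), Hyp u v w ∧ Onb e ∧ e 2 = w ∧ d ^ 6 ≠ 1 ∧
      d ∈ StL u ∧ d ∈ StL w ∧ d ∈ StF e := by
  obtain ⟨u, v, w, H⟩ := exists_hyp (K := K)
  obtain ⟨k, hk, E⟩ := H.onb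
  obtain ⟨t, ht, h6⟩ := exists_theta (K := K)
  have ht0 := ne_zero_of_nm ht
  have hst := star_inv_of_nm ht
  obtain ⟨d, hd⟩ := exists_diag E (a := ![t, t, t⁻¹ * t⁻¹])
    (fun i => by fin_cases i <;> simp [ht, hst] <;> field_simp) (by simp; field_simp)
  have h0 : ac d (u + k • v) = t • (u + k • v) := by simpa using hd 0
  have h1 : ac d (u + star k • v) = t • (u + star k • v) := by simpa using hd 1
  have hv : ac d v = t • v := by
    have e1 : v = (u + k • v) + (u + star k • v) := by
      rw [show (u + k • v) + (u + star k • v) = (u + u) + (k + star k) • v by rw [add_smul]; abel,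
        hk, vc2, zero_add, one_smul]
    rw [e1, map_add, h0, h1, ← smul_add]
  have hu : ac d u = t • u := by
    rw [map_add, map_smul, hv, smul_add, smul_comm] at h0
    exact add_right_cancel h0
  refine ⟨u, v, w, _, d, H, E, rfl, ?_, mem_StL_of H.u_ne hu,
    mem_StL_of H.w_ne (k := t⁻¹ * t⁻¹) (by simpa using hd 2), 1, _, ?_, hd⟩
  · intro h
    have h2 := ac_pow_smul hu 6
    rw [h, ac_one] at h2
    apply h6
    have h3 : (t ^ 6 - 1) • u = 0 := by rw [sub_smul, ← h2, one_smul, sub_self]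
    exact sub_eq_zero.1 ((smul_eq_zero.1 h3).resolve_right H.u_ne)
  · intro i; fin_cases i <;> simp [ht0]

lemma rep_iso : ∃ M : Subgroup (SU K), Rep IsoP M ∧ Big M := by
  obtain ⟨u, v, w, e, d, H, E, he, h6, h1, h2, h3⟩ := exists_frame K
  refine ⟨StL u, fun X => ⟨fun ⟨g, hg⟩ => ?_, ?_⟩, d, h1, h6⟩
  · exact ⟨ac g⁻¹ u, by simpa using H.u_ne, by rw [hf_ac, H.uu], StL_le hg⟩
  · rintro ⟨c, hc0, hc, hX⟩
    obtain ⟨g, hg⟩ := tv_one_conj hc0 hc H.u_ne H.uu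
    exact ⟨g, fun h hh => (StL_move (k := 1) one_ne_zero (by simpa using hg)).2 (hX hh)⟩

lemma rep_ani : ∃ M : Subgroup (SU K), Rep AniP M ∧ Big M := by
  obtain ⟨u, v, w, e, d, H, E, he, h6, h1, h2, h3⟩ := exists_frame K
  refine ⟨StL w, fun X => ⟨fun ⟨g, hg⟩ => ?_, ?_⟩, d, h2, h6⟩
  · exact ⟨ac g⁻¹ w, by rw [hf_ac, H.ww], StL_le hg⟩
  · rintro ⟨w', hw', hX⟩
    obtain ⟨u', v', H'⟩ := exists_hyp_of_unit hw'
    obtain ⟨g, z, hz, -, -, hg⟩ := hyp_trans H' H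
    exact ⟨g, fun h hh => (StL_move (ne_zero_of_nm hz) hg).2 (hX hh)⟩

lemma rep_flag : ∃ M : Subgroup (SU K), Rep FlagP M ∧ Big M := by
  obtain ⟨u, v, w, e, d, H, E, he, h6, h1, h2, h3⟩ := exists_frame K
  refine ⟨StL u ⊓ StL w, fun X => ⟨fun ⟨g, hg⟩ => ?_, ?_⟩, d, ⟨h1, h2⟩, h6⟩
  · exact ⟨ac g⁻¹ u, ac g⁻¹ w, by simpa using H.u_ne, by rw [hf_ac, H.uu], by rw [hf_ac, H.ww],
      by rw [hf_ac, H.uw], StL_le fun h hh => (hg h hh).1, StL_le fun h hh => (hg h hh).2⟩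
  · rintro ⟨c, w', hc0, hc, hw', hcw, hX, hX'⟩
    obtain ⟨v', H'⟩ := exists_hyp_perp hc0 hc hw' hcw
    obtain ⟨g, z, hz, hgu, -, hg⟩ := hyp_trans H' H
    exact ⟨g, fun h hh => ⟨(StL_move (k := 1) one_ne_zero (by simpa using hgu)).2 (hX hh),
      (StL_move (ne_zero_of_nm hz) hg).2 (hX' hh)⟩⟩

lemma StF_le {e : Fin 3 → V K} {H : Subgroup (SU K)} {g : SU K}
    (hg : ∀ h ∈ H, g * h * g⁻¹ ∈ StF e) : H ≤ StF (fun i => ac g⁻¹ (e i)) := by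
  intro h hh
  rw [← conj_StF (g := g)]
  simpa using hg h hh

/-- Any two orthonormal frames of lines are conjugate. -/
lemma StF_move {e e' : Fin 3 → V K} (E : Onb e) (E' : Onb e') : ∃ g : SU K,
    (∀ h, g * h * g⁻¹ ∈ StF e' ↔ h ∈ StF e) ∧ ∀ h, g * h * g⁻¹ ∈ StL (e' 2) ↔ h ∈ StL (e 2) := by
  obtain ⟨g, z, hz, h1, h2⟩ := onb_trans E E' 2
  have hz0 := ne_zero_of_nm hz
  refine ⟨g, fun h => ?_, fun h => StL_move hz0 h2⟩
  rw [← conj_StF (g := g) (e := e)]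
  have : (fun i => ac g (e i)) = fun i => (![1, 1, z] : Fin 3 → K) i • e' i := by
    funext i
    fin_cases i
    · simpa using h1 0 (by decide)
    · simpa using h1 1 (by decide)
    · simpa using h2
  rw [this, StF_smul (by intro i; fin_cases i <;> simp [hz0])]

lemma rep_mon : ∃ M : Subgroup (SU K), Rep MonP M ∧ Big M := by
  obtain ⟨u, v, w, e, d, H, E, he, h6, h1, h2, h3⟩ := exists_frame K
  refine ⟨StF e, fun X => ⟨fun ⟨g, hg⟩ => ?_, ?_⟩, d, h3, h6⟩
  · exact ⟨_, E.map g⁻¹, StF_le hg⟩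
  · rintro ⟨e', E', hX⟩
    obtain ⟨g, hg, -⟩ := StF_move E' E
    exact ⟨g, fun h hh => (hg h).2 (hX hh)⟩

lemma rep_monV : ∃ M : Subgroup (SU K), Rep MonVP M ∧ Big M := by
  obtain ⟨u, v, w, e, d, H, E, he, h6, h1, h2, h3⟩ := exists_frame K
  refine ⟨StF e ⊓ StL (e 2), fun X => ⟨fun ⟨g, hg⟩ => ?_, ?_⟩, d, ⟨h3, by rwa [he]⟩, h6⟩
  · exact ⟨_, E.map g⁻¹, StF_le fun h hh => (hg h hh).1, 2, StL_le fun h hh => (hg h hh).2⟩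
  · rintro ⟨e', E', hX, i, hX'⟩
    obtain ⟨g, hg, hg'⟩ := StF_move (E'.comp (Equiv.swap 2 i)) E
    refine ⟨g, fun h hh => ⟨(hg h).2 ?_, (hg' h).2 ?_⟩⟩
    · rw [StF_comp]; exact hX hh
    · simpa using hX' hh

lemma Sing.big {p : ℕ} {z : SU K} (h : Sing p z) : z ^ 6 ≠ 1 := by
  intro h6
  have h1 := orderOf_dvd_of_pow_eq_one h6
  rw [h.order, show 6 = 2 * 3 from rfl, h.prime.dvd_mul] at h1
  have := h.five
  rcases h1 with h1 | h1 <;> have := Nat.le_of_dvd (by norm_num) h1 <;> omega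

lemma rep_I4 : ∃ M : Subgroup (SU K), Rep I4 M ∧ Big M := by
  obtain ⟨p, z, hz⟩ := exists_sing (K := K)
  exact ⟨NC z, fun X => hz.I4_iff.symm, z, hz.noEig.mem_NC.2 (by group), hz.big⟩

lemma conj_closure {G : Type*} [Group G] {S : Set G} {M : Subgroup G} {g : G}
    (hS : ∀ x ∈ S, g * x * g⁻¹ ∈ M) {h : G} (hh : h ∈ Subgroup.closure S) : g * h * g⁻¹ ∈ M := by
  have : Subgroup.closure S ≤ M.comap (MulAut.conj g).toMonoidHom :=
    (Subgroup.closure_le _).2 fun x hx => by simpa using hS x hx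
  simpa using this hh

lemma le_conj_closure {G : Type*} [Group G] {S : Set G} {H : Subgroup G} {g : G}
    (hS : ∀ h ∈ H, g * h * g⁻¹ ∈ Subgroup.closure S) :
    H ≤ Subgroup.closure ((fun x => g⁻¹ * x * g) '' S) := by
  intro h hh
  have := conj_closure (g := g⁻¹) (M := Subgroup.closure ((fun x => g⁻¹ * x * g) '' S))
    (fun x hx => by rw [inv_inv]; exact Subgroup.subset_closure ⟨x, hx, rfl⟩) (hS h hh)
  simpa [mul_assoc] using this

lemma rep_c2 : ∃ M : Subgroup (SU K), Rep C2P M ∧ Nat.card M = 2 := by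
  obtain ⟨s, hs, hs1⟩ := exists_inv_el (K := K)
  refine ⟨Subgroup.zpowers s, fun X => ⟨fun ⟨g, hg⟩ => ?_, ?_⟩, ?_⟩
  · refine ⟨g⁻¹ * s * g, by simp [mul_assoc, ← mul_assoc s s, hs], ?_, ?_⟩
    · intro h; apply hs1; rw [mul_assoc, inv_mul_eq_one] at h; simpa using h.symm
    · rw [Subgroup.zpowers_eq_closure] at hg ⊢
      simpa using le_conj_closure hg
  · rintro ⟨t, ht, ht1, hX⟩
    obtain ⟨g, hg⟩ := inv_conj ht ht1 hs hs1
    refine ⟨g, fun h hh => ?_⟩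
    have h1 := hX hh
    rw [Subgroup.zpowers_eq_closure] at h1
    exact conj_closure (by simp [hg]) h1
  · rw [Nat.card_zpowers]
    exact orderOf_eq_prime (by rw [pow_two, hs]) hs1

lemma rep_c3 : ∃ M : Subgroup (SU K), Rep C3P M ∧ Nat.card M = 3 := by
  obtain ⟨e, E⟩ := exists_onb (K := K)
  obtain ⟨s, -, hs, hs1, -⟩ := exists_s3 E
  have : Fact (Nat.Prime 3) := ⟨Nat.prime_three⟩
  refine ⟨Subgroup.zpowers s, fun X => ⟨fun ⟨g, hg⟩ => ?_, ?_⟩, ?_⟩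
  · refine ⟨g⁻¹ * s * g, ?_, ?_, ?_⟩
    · have : g⁻¹ * s * g = g⁻¹ * s * g⁻¹⁻¹ := by rw [inv_inv]
      rw [this, conj_pow, hs]; simp
    · intro h; apply hs1; rw [mul_assoc, inv_mul_eq_one] at h; simpa using h.symm
    · rw [Subgroup.zpowers_eq_closure] at hg ⊢
      simpa using le_conj_closure hg
  · rintro ⟨t, ht, ht1, hX⟩
    obtain ⟨g, hg⟩ := order3_conj ht ht1 hs hs1
    refine ⟨g, fun h hh => ?_⟩
    have h1 := hX hh
    rw [Subgroup.zpowers_eq_closure] at h1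
    exact conj_closure (by simp [hg]) h1
  · rw [Nat.card_zpowers]
    exact orderOf_eq_prime hs hs1

/-- A pair satisfying the dihedral relations generates a subgroup of order six. -/
lemma card_dih {G : Type*} [Group G] [Finite G] {g s : G} (h3 : g ^ 3 = 1) (h1 : g ≠ 1)
    (hs : s * s = 1) (hs1 : s ≠ 1) (hsg : g * s = s * g⁻¹) :
    Nat.card (Subgroup.closure {g, s}) = 6 := by
  have : Fact (Nat.Prime 3) := ⟨Nat.prime_three⟩
  set D := Subgroup.closure {g, s}
  have hg : g ∈ D := Subgroup.subset_closure (by simp)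
  have hsD : s ∈ D := Subgroup.subset_closure (by simp)
  have d3 : 3 ∣ Nat.card D := by
    rw [← orderOf_eq_prime h3 h1, ← Subgroup.orderOf_mk g hg]; exact orderOf_dvd_natCard _
  have d2 : 2 ∣ Nat.card D := by
    rw [← orderOf_eq_prime (p := 2) (by rw [pow_two, hs]) hs1, ← Subgroup.orderOf_mk s hsD]
    exact orderOf_dvd_natCard _
  have hpos : 0 < Nat.card D := Nat.card_pos
  have hle : Nat.card D ≤ 6 := by
    let f : Fin 2 × Fin 3 → G := fun p => s ^ p.1.1 * g ^ p.2.1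
    have hsub : (D : Set G) ⊆ Finset.univ.image f := by
      intro x hx
      obtain ⟨i, hi⟩ := dihedral_form hs hsg hx
      have hr : ∃ r : Fin 3, g ^ i = g ^ r.1 := by
        refine ⟨⟨(i % 3).toNat, by omega⟩, ?_⟩
        rw [← zpow_natCast]
        have h4 : i = 3 * (i / 3) + ((i % 3).toNat : ℤ) := by omega
        conv_lhs => rw [h4, zpow_add, zpow_mul, show g ^ (3 : ℤ) = 1 from by exact_mod_cast h3]
        simp
      obtain ⟨r, hr⟩ := hr
      rw [hr] at hi
      rw [Finset.coe_image]
      rcases hi with rfl | rfl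
      · exact ⟨(0, r), by simp, by simp [f]⟩
      · exact ⟨(1, r), by simp, by simp [f]⟩
    have h5 := Set.ncard_le_ncard hsub (Finset.finite_toSet _)
    rw [Set.ncard_coe_finset] at h5
    have h6 := Finset.card_image_le (s := Finset.univ) (f := f)
    simp at h6
    exact (h5.trans h6)
  omega

lemma rep_s3 : ∃ M : Subgroup (SU K), Rep S3P M ∧ Nat.card M = 6 := by
  obtain ⟨e, E⟩ := exists_onb (K := K)
  obtain ⟨a, s, ha, ha1, hs, hs1, has, -⟩ := exists_s3 E
  refine ⟨Subgroup.closure {a, s}, fun X => ⟨fun ⟨g, hg⟩ => ?_, ?_⟩,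
    card_dih ha ha1 hs hs1 has⟩
  · refine ⟨g⁻¹ * a * g, g⁻¹ * s * g, ?_, ?_, by simp [mul_assoc, ← mul_assoc s s, hs], ?_, ?_⟩
    · have : g⁻¹ * a * g = g⁻¹ * a * g⁻¹⁻¹ := by rw [inv_inv]
      rw [this, conj_pow, ha]; simp
    · intro h; apply ha1; rw [mul_assoc, inv_mul_eq_one] at h; simpa using h.symm
    · rw [show g⁻¹ * a * g * (g⁻¹ * s * g) = g⁻¹ * (a * s) * g by group, has]; group
    · simpa [Set.image_pair] using le_conj_closure hg
  · rintro ⟨b, t, hb, hb1, ht, hbt, hX⟩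
    obtain ⟨g, hg, hg'⟩ := s3_conj hb hb1 ht hbt ha ha1 hs has
    refine ⟨g, fun h hh => conj_closure ?_ (hX hh)⟩
    have e1 : a ∈ Subgroup.closure {a, s} := Subgroup.subset_closure (by simp)
    have e2 : s ∈ Subgroup.closure {a, s} := Subgroup.subset_closure (by simp)
    rintro x (rfl | rfl)
    · rwa [hg]
    · rwa [hg']

/-! ### The inclusion-exclusion identity -/

lemma top_none : ¬ IsoP (⊤ : Subgroup (SU K)) ∧ ¬ AniP (⊤ : Subgroup (SU K)) ∧
    ¬ MonP (⊤ : Subgroup (SU K)) ∧ ¬ I4 (⊤ : Subgroup (SU K)) := by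
  obtain ⟨p, z, hz⟩ := exists_sing (K := K)
  obtain ⟨s, hs, hs1⟩ := exists_inv_el (K := K)
  have key : ∀ c : V K, c ≠ 0 → ¬ (⊤ : Subgroup (SU K)) ≤ StL c := by
    intro c hc h
    obtain ⟨k, -, hk⟩ := h (Subgroup.mem_top z)
    exact hz.noEig c hc k hk
  refine ⟨fun ⟨c, hc, _, h⟩ => key c hc h, fun ⟨w, hw, h⟩ => key w ?_ h, fun ⟨e, E, h⟩ => ?_,
    fun ⟨a, ha, h⟩ => ?_⟩
  · rintro rfl; simp at hw
  · exact hz.noEig.ne_one (mono_no_noEig E hz.noEig rfl (h (Subgroup.mem_top z)))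
  · exact hs1 (ha.NC_no_invol (h (Subgroup.mem_top s)) hs)

/-- The alternating count of the containment conditions: inclusion-exclusion over the four
conditions of `exhaust`, simplified by `flag_iff`, `mon_red_iff`, `c2_iff` and `I4_iff_C3`. -/
lemma alt_count (H : Subgroup (SU K)) :
    (1 : ℤ) - (if IsoP H then 1 else 0) - (if AniP H then 1 else 0) - (if MonP H then 1 else 0)
      - (if I4 H then 1 else 0) + (if FlagP H then 1 else 0) + (if MonVP H then 1 else 0)
      + (if S3P H then 1 else 0) - (if C2P H then 1 else 0) + (if C3P H then 1 else 0)
      = if H = ⊤ then 1 else 0 := by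
  have hx := exhaust H
  have h1 := flag_iff (H := H)
  have h2 := mon_red_iff (H := H)
  have h3 := c2_iff (H := H)
  have h4 := I4_iff_C3 (H := H)
  have h5 : H = ⊤ → ¬ IsoP H ∧ ¬ AniP H ∧ ¬ MonP H ∧ ¬ I4 H := by
    rintro rfl; exact top_none
  have h6 := s3P_imp (H := H)
  have h7 := monV_imp (H := H)
  rw [← h4, h3, h1]
  generalize IsoP H = I at *
  generalize AniP H = A at *
  generalize MonP H = M at *
  generalize I4 H = F at *
  generalize MonVP H = W at *
  generalize S3P H = S at *
  generalize (H = ⊤) = T at *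
  clear h1 h3 h4
  by_cases T <;> by_cases I <;> by_cases A <;> by_cases M <;> by_cases F <;> by_cases W <;>
    by_cases S <;> simp_all

end fin

/-! ### The values of the Möbius function -/

section val
variable {K : Type*} [Field K] [StarRing K] [UField K]

lemma card_comap {G G' : Type*} [Group G] [Group G'] (φ : G ≃* G') (M : Subgroup G') :
    Nat.card (M.comap φ.toMonoidHom) = Nat.card M :=
  Nat.card_congr (φ.toEquiv.subtypeEquiv fun _ => Iff.rfl)

lemma card_map {G G' : Type*} [Group G] [Group G'] (φ : G ≃* G') (M : Subgroup G) :
    Nat.card (M.map φ.toMonoidHom) = Nat.card M :=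
  Subgroup.card_map_of_injective φ.injective

/-- Subgroups of order six isomorphic to `Sym(3)` are generated by a pair satisfying the dihedral
relations. -/
lemma s3P_of_iso {X : Subgroup (SU K)} (f : X ≃* Equiv.Perm (Fin 3)) : S3P X := by
  have hc : Nat.card X = 6 := by
    rw [Nat.card_congr f.toEquiv, Nat.card_perm, Nat.card_fin]; rfl
  obtain ⟨a, ha⟩ := f.surjective (finRotate 3)
  obtain ⟨b, hb⟩ := f.surjective (Equiv.swap 0 1)
  have h1 : a ^ 3 = 1 := f.injective (by rw [map_pow, ha, map_one]; decide)
  have h2 : a ≠ 1 := by rintro rfl; rw [map_one] at ha; revert ha; decide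
  have h3 : b * b = 1 := f.injective (by rw [map_mul, hb, map_one]; decide)
  have h4 : b ≠ 1 := by rintro rfl; rw [map_one] at hb; revert hb; decide
  have h5 : a * b = b * a⁻¹ :=
    f.injective (by rw [map_mul, map_mul, map_inv, ha, hb]; decide)
  have k1 : a.1 ^ 3 = 1 := congrArg Subtype.val h1
  have k2 : a.1 ≠ 1 := fun h => h2 (Subtype.ext h)
  have k3 : b.1 * b.1 = 1 := congrArg Subtype.val h3
  have k4 : b.1 ≠ 1 := fun h => h4 (Subtype.ext h)
  have k5 : a.1 * b.1 = b.1 * a.1⁻¹ := congrArg Subtype.val h5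
  refine ⟨a.1, b.1, k1, k2, k3, k5, ?_⟩
  refine (Subgroup.eq_of_le_of_card_ge ((Subgroup.closure_le _).2 ?_) ?_).ge
  · rintro x (rfl | rfl)
    · exact a.2
    · exact b.2
  · rw [hc, card_dih k1 k2 k3 k4 k5]

lemma sum10 {A : Type*} (P : A → Prop) [DecidablePred P] (a0 a1 a2 a3 a4 a5 a6 a7 a8 a9 : A) :
    (∑ i, if P (![a0, a1, a2, a3, a4, a5, a6, a7, a8, a9] i) then
      (![1, -1, -1, -1, -1, 1, 1, 1, -1, 1] : Fin 10 → ℤ) i else 0) =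
    (if P a0 then 1 else 0) - (if P a1 then 1 else 0) - (if P a2 then 1 else 0)
      - (if P a3 then 1 else 0) - (if P a4 then 1 else 0) + (if P a5 then 1 else 0)
      + (if P a6 then 1 else 0) + (if P a7 then 1 else 0) - (if P a8 then 1 else 0)
      + (if P a9 then 1 else 0) := by
  have h (p : Prop) [Decidable p] : (if p then (-1 : ℤ) else 0) = -(if p then 1 else 0) := by
    split_ifs <;> simp
  simp only [Fin.sum_univ_succ, Fin.sum_univ_zero]
  change (if P a0 then 1 else 0) + ((if P a1 then -1 else 0) + ((if P a2 then -1 else 0) +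
    ((if P a3 then -1 else 0) + ((if P a4 then -1 else 0) + ((if P a5 then 1 else 0) +
    ((if P a6 then 1 else 0) + ((if P a7 then 1 else 0) + ((if P a8 then -1 else 0) +
    ((if P a9 then 1 else 0) + 0))))))))) = _
  rw [h (P a1), h (P a2), h (P a3), h (P a4), h (P a8)]
  ring

/-- The values of the Möbius function, for a group isomorphic to `SU(3, q)`. -/
lemma values {G : Type*} [Group G] (φ : G ≃* SU K) {lam : SubClasses G → ℤ}
    (hlam : IsClassMobius lam) :
    lam (clsOf (⊥ : Subgroup G)) = 0 ∧
      (∀ σ : G, orderOf σ = 2 → lam (clsOf (Subgroup.zpowers σ)) = -1) ∧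
      (∀ H : Subgroup G, Nat.card H = 3 → lam (clsOf H) = 1) ∧
      (∀ H : Subgroup G, Nonempty (H ≃* Equiv.Perm (Fin 3)) → lam (clsOf H) = 1) := by
  have : Finite G := Finite.of_equiv _ φ.symm.toEquiv
  obtain ⟨M1, r1, b1⟩ := rep_iso (K := K)
  obtain ⟨M2, r2, b2⟩ := rep_ani (K := K)
  obtain ⟨M3, r3, b3⟩ := rep_mon (K := K)
  obtain ⟨M4, r4, b4⟩ := rep_I4 (K := K)
  obtain ⟨M5, r5, b5⟩ := rep_flag (K := K)
  obtain ⟨M6, r6, b6⟩ := rep_monV (K := K)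
  obtain ⟨M7, r7, c7⟩ := rep_s3 (K := K)
  obtain ⟨M8, r8, c8⟩ := rep_c2 (K := K)
  obtain ⟨M9, r9, c9⟩ := rep_c3 (K := K)
  have b0 : Big (⊤ : Subgroup (SU K)) := by
    obtain ⟨d, -, h⟩ := b1; exact ⟨d, Subgroup.mem_top d, h⟩
  let N : Fin 10 → Subgroup (SU K) := ![⊤, M1, M2, M3, M4, M5, M6, M7, M8, M9]
  have key := mobius_values hlam (fun i => (N i).comap φ.toMonoidHom)
    ![1, -1, -1, -1, -1, 1, 1, 1, -1, 1] (by
      intro H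
      have h0 : cle (H.map φ.toMonoidHom) (⊤ : Subgroup (SU K)) := ⟨1, by simp⟩
      have ht : H.map φ.toMonoidHom = ⊤ ↔ H = ⊤ := by
        rw [← Subgroup.map_top_of_surjective φ.toMonoidHom φ.surjective]
        exact (Subgroup.map_injective φ.injective).eq_iff
      have h := alt_count (H.map φ.toMonoidHom)
      simp only [cle_comap, ht] at h ⊢
      simp only [N]
      rw [← h, sum10 (fun M => cle (H.map φ.toMonoidHom) M), if_pos h0]
      simp only [r1 _, r2 _, r3 _, r4 _, r5 _, r6 _, r7 _, r8 _, r9 _])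
  have big : ∀ (M : Subgroup (SU K)) (H : Subgroup G), Big M → Nat.card H ∣ 6 →
      clsOf (M.comap φ.toMonoidHom) ≠ clsOf H := by
    intro M H hb hH h
    apply hb.card
    rwa [← card_comap φ, card_of_cls h]
  have ncard : ∀ (M : Subgroup (SU K)) (H : Subgroup G), Nat.card M ≠ Nat.card H →
      clsOf (M.comap φ.toMonoidHom) ≠ clsOf H := by
    intro M H hb h
    exact hb (by rw [← card_comap φ, card_of_cls h])
  -- only the last three of the ten subgroups can be conjugate to a subgroup of order dividing six
  have key2 : ∀ H : Subgroup G, Nat.card H ∣ 6 → lam (clsOf H) =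
      (if clsOf (M7.comap φ.toMonoidHom) = clsOf H then 1 else 0) -
      (if clsOf (M8.comap φ.toMonoidHom) = clsOf H then 1 else 0) +
      (if clsOf (M9.comap φ.toMonoidHom) = clsOf H then 1 else 0) := by
    intro H hH
    rw [key H]
    simp only [N]
    rw [sum10 (fun M : Subgroup (SU K) => clsOf (M.comap φ.toMonoidHom) = clsOf H)]
    rw [if_neg (big _ H b0 hH), if_neg (big _ H b1 hH), if_neg (big _ H b2 hH),
      if_neg (big _ H b3 hH), if_neg (big _ H b4 hH), if_neg (big _ H b5 hH),
      if_neg (big _ H b6 hH)]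
    ring
  have conj : ∀ (M : Subgroup (SU K)) (H : Subgroup G), cle (H.map φ.toMonoidHom) M →
      Nat.card M = Nat.card H → clsOf (M.comap φ.toMonoidHom) = clsOf H := by
    intro M H h hc
    exact (clsOf_eq_of ((cle_comap φ).2 h) (by rw [card_comap, hc])).symm
  refine ⟨?_, fun σ hσ => ?_, fun H hH => ?_, fun H ⟨f⟩ => ?_⟩
  · have hc : Nat.card (⊥ : Subgroup G) = 1 := Subgroup.card_bot
    rw [key2 _ (by rw [hc]; norm_num), if_neg (ncard _ _ (by omega)),
      if_neg (ncard _ _ (by omega)), if_neg (ncard _ _ (by omega))]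
    rfl
  · have hc : Nat.card (Subgroup.zpowers σ) = 2 := by rw [Nat.card_zpowers, hσ]
    have h1 : cle ((Subgroup.zpowers σ).map φ.toMonoidHom) M8 := by
      refine (r8 _).2 ⟨φ σ, ?_, ?_, ?_⟩
      · rw [← map_mul, ← pow_two, ← hσ, pow_orderOf_eq_one, map_one]
      · intro h
        rw [map_eq_one_iff φ φ.injective] at h
        rw [h, orderOf_one] at hσ; omega
      · rw [MonoidHom.map_zpowers]; exact le_rfl
    rw [key2 _ (by rw [hc]; norm_num), if_neg (ncard _ _ (by omega)),
      if_pos (conj _ _ h1 (by omega)), if_neg (ncard _ _ (by omega))]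
    rfl
  · have : Fact (Nat.Prime 3) := ⟨Nat.prime_three⟩
    have h1 : cle (H.map φ.toMonoidHom) M9 := by
      refine (r9 _).2 ?_
      have hc : Nat.card (H.map φ.toMonoidHom) = 3 := by rw [card_map, hH]
      generalize H.map φ.toMonoidHom = X at hc
      obtain ⟨x, hx⟩ := exists_prime_orderOf_dvd_card' (G := X) 3 (by rw [hc])
      have hx3 : orderOf x.1 = 3 := (Subgroup.orderOf_coe x).trans hx
      refine ⟨x.1, orderOf_dvd_iff_pow_eq_one.1 hx3.dvd, fun h => ?_, ?_⟩
      · rw [h, orderOf_one] at hx3; omega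
      · refine (Subgroup.eq_of_le_of_card_ge ((Subgroup.zpowers_le).2 x.2) ?_).ge
        rw [Nat.card_zpowers, hx3, hc]
    rw [key2 _ (by rw [hH]; norm_num), if_neg (ncard _ _ (by omega)),
      if_neg (ncard _ _ (by omega)), if_pos (conj _ _ h1 (by omega))]
    rfl
  · have hc : Nat.card H = 6 := by
      rw [Nat.card_congr f.toEquiv, Nat.card_perm, Nat.card_fin]; rfl
    have h1 : cle (H.map φ.toMonoidHom) M7 :=
      (r7 _).2 (s3P_of_iso ((H.equivMapOfInjective φ.toMonoidHom φ.injective).symm.trans f))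
    rw [key2 _ (by rw [hc]), if_pos (conj _ _ h1 (by omega)), if_neg (ncard _ _ (by omega)),
      if_neg (ncard _ _ (by omega))]
    rfl

end val

lemma uField_Fq2 {n : ℕ} (hn : 1 ≤ n) : UField (Fq2 n) where
  fin := inferInstance
  char2 := inferInstance
  ex := ⟨n, hn, GaloisField.card 2 (2 ^ (n + 1)) (by positivity), fun _ => rfl⟩

/-- The center is trivial, so that `PSU(3, q)` is `SU(3, q)`. -/
lemma exists_PSU_equiv {n : ℕ} (hn : 1 ≤ n) : Nonempty (PSU3 n ≃* SU (Fq2 n)) := by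
  have := uField_Fq2 hn
  have hc : Subgroup.center (SU3 n) = ⊥ := by
    rw [eq_bot_iff]
    intro z hz
    exact center_trivial (K := Fq2 n) z fun g => (Subgroup.mem_center_iff.1 hz g).symm
  exact ⟨(QuotientGroup.quotientMulEquivOfEq hc).trans (QuotientGroup.quotientBot (G := SU3 n))⟩

theorem stmt15 (n : ℕ) (hn : 1 ≤ n) (lam : SubClasses (PSU3 n) → ℤ)
    (hlam : IsClassMobius lam) :
    lam (clsOf (⊥ : Subgroup (PSU3 n))) = 0 ∧
    (∀ σ : PSU3 n, orderOf σ = 2 → lam (clsOf (Subgroup.zpowers σ)) = -1) ∧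
    (∀ H : Subgroup (PSU3 n), Nat.card H = 3 → lam (clsOf H) = 1) ∧
    (∀ K : Subgroup (PSU3 n), Nonempty (K ≃* Equiv.Perm (Fin 3)) → lam (clsOf K) = 1) := by
  obtain ⟨φ⟩ := exists_PSU_equiv hn
  have := uField_Fq2 hn
  exact values φ hlam

end PSUPaper
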